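/- Let 0<α, 1<p<N/α, q>p−1, and let ω be a nonnegative bounded Radon measure supported in a ball B_R(x0)⊂ℝ^N. Then the following statements are equivalent (with constants allowed to depend on R): (a) there exists C1>0 with ω(K) ≤ C1·Cap_{G_{αp}, q/(q−p+1)}(K) for every compact K⊂ℝ^N; (b) there exists C2>0 with ∫_K (W^{4R}_{α,p}[ω](y))^q dy ≤ C2·Cap_{G_{αp}, q/(q−p+1)}(K) for every compact K⊂ℝ^N; (c) there exists C3>0 with ∫_{ℝ^N} (W^{4R}_{α,p}[χ_{B_t(x)}ω](y))^q dy ≤ C3·ω(B_t(x)) for every x∈ℝ^N and t>0; (d) there exists C4>0 with W^{4R}_{α,p}[(W^{4R}_{α,p}[ω])^q] ≤ C4·W^{4R}_{α,p}[ω] almost everywhere in B_{2R}(x0). -/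

import Mathlib

open MeasureTheory Metric Set Filter Bornology
open scoped ENNReal NNReal Topology RealInnerProductSpace

noncomputable section

/-- Euclidean space `ℝ^N`. -/
abbrev Euc (N : ℕ) : Type := EuclideanSpace ℝ (Fin N)

/-- The `R`-truncated Wolff potential `W^R_{α,p}[μ](x)`; `R = ⊤` gives the full
Wolff potential `W_{α,p}[μ]`. -/
def wolff {N : ℕ} (α p : ℝ) (R : ℝ≥0∞) (μ : Measure (Euc N)) (x : Euc N) : ℝ≥0∞ :=
  ∫⁻ ρ in {ρ : ℝ | 0 < ρ ∧ ENNReal.ofReal ρ < R},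
    (μ (ball x ρ) / ENNReal.ofReal (ρ ^ ((N : ℝ) - α * p))) ^ (1 / (p - 1)) /
      ENNReal.ofReal ρ

/-- The `R`-truncated Riesz potential `I^R_β[μ](x)`; `R = ⊤` gives `I_β[μ]`. -/
def rieszPot {N : ℕ} (β : ℝ) (R : ℝ≥0∞) (μ : Measure (Euc N)) (x : Euc N) : ℝ≥0∞ :=
  ∫⁻ ρ in {ρ : ℝ | 0 < ρ ∧ ENNReal.ofReal ρ < R},
    μ (ball x ρ) / ENNReal.ofReal (ρ ^ ((N : ℝ) - β)) / ENNReal.ofReal ρ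

/-- The Riesz capacity `Cap_{I_α,p}`. -/
def rieszCap (N : ℕ) (α p : ℝ) (O : Set (Euc N)) : ℝ≥0∞ :=
  ⨅ (g : Euc N → ℝ≥0∞) (_ : Measurable g)
    (_ : ∀ x ∈ O, 1 ≤ rieszPot α ⊤ (volume.withDensity g) x),
    ∫⁻ x, g x ^ p

/-- The Bessel kernel of order `α` (up to the normalizing constant `c(N,α)`). -/
def besselKernel (N : ℕ) (α : ℝ) (x : Euc N) : ℝ :=
  ∫ t in Ioi (0 : ℝ),
    Real.exp (-(Real.pi * ‖x‖ ^ 2 / t) - t / (4 * Real.pi)) * t ^ ((α - (N : ℝ)) / 2) / t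

/-- The Bessel capacity `Cap_{G_α,p}`. -/
def besselCap (N : ℕ) (α p : ℝ) (O : Set (Euc N)) : ℝ≥0∞ :=
  ⨅ (g : Euc N → ℝ≥0∞) (_ : Measurable g)
    (_ : ∀ x ∈ O, 1 ≤ ∫⁻ y, ENNReal.ofReal (besselKernel N α (x - y)) * g y),
    ∫⁻ x, g x ^ p

/-- The `R`-truncated fractional maximal function `M^R_γ[μ]`. -/
def fracMax {N : ℕ} (γ : ℝ) (R : ℝ≥0∞) (μ : Measure (Euc N)) (x : Euc N) : ℝ≥0∞ :=
  ⨆ (t : ℝ) (_ : 0 < t) (_ : ENNReal.ofReal t < R),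
    μ (ball x t) / ENNReal.ofReal (t ^ ((N : ℝ) - γ))

/-- The potential `L^R_{α,s}[μ]`. -/
def Lpot {N : ℕ} (α s : ℝ) (R : ℝ≥0∞) (μ : Measure (Euc N)) (x : Euc N) : ℝ≥0∞ :=
  ∫⁻ t in {t : ℝ | 0 < t ∧ ENNReal.ofReal t < R},
    (μ (ball x t) / ENNReal.ofReal (t ^ ((N : ℝ) - α))) ^ s / ENNReal.ofReal t

/-- A mollifier: smooth, nonnegative, supported in the unit ball, of total mass one. -/
def IsMollifier {N : ℕ} (φ : Euc N → ℝ) : Prop :=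
  ContDiff ℝ (⊤ : ℕ∞) φ ∧ (∀ x, 0 ≤ φ x) ∧ tsupport φ ⊆ ball 0 1 ∧ (∫ x, φ x) = 1

/-- The measure with density `φ_n * μ`, where `φ_n(x) = n^N φ(n x)`. -/
def mollified {N : ℕ} (φ : Euc N → ℝ) (n : ℕ) (μ : Measure (Euc N)) : Measure (Euc N) :=
  volume.withDensity fun x =>
    ENNReal.ofReal (∫ y, (n : ℝ) ^ (N : ℕ) * φ ((n : ℝ) • (x - y)) ∂μ)

namespace WolffPotential

/-! ### Elementary inequalities in `ℝ≥0∞` -/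

/-- Tangent-line inequality for the convex power `t ↦ t ^ M`. -/
lemma add_rpow_le (x y : ℝ≥0∞) {M : ℝ} (hM : 1 ≤ M) :
    (x + y) ^ M ≤ x ^ M + ENNReal.ofReal M * (y * (x + y) ^ (M - 1)) := by
  have hM0 : 0 < M := by linarith
  rcases eq_or_ne x ∞ with rfl | hx
  · simp [ENNReal.top_rpow_of_pos hM0]
  rcases eq_or_ne y ∞ with rfl | hy
  · have h1 : (⊤ : ℝ≥0∞) ^ (M - 1) ≠ 0 := by
      rcases hM.eq_or_lt with h | h
      · simp [← h]
      · rw [ENNReal.top_rpow_of_pos (by linarith)]; simp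
    have h2 : ENNReal.ofReal M ≠ 0 := by simpa using hM0
    rw [add_top, ENNReal.top_mul h1, ENNReal.mul_top h2]
    simp
  lift x to ℝ≥0 using hx
  lift y to ℝ≥0 using hy
  rcases eq_or_ne (x + y) 0 with h0 | h0
  · have : ((x : ℝ≥0∞) + y) = 0 := by exact_mod_cast h0
    rw [this, ENNReal.zero_rpow_of_pos hM0]; simp
  have key : ((x + y : ℝ≥0) : ℝ) ^ M ≤ (x : ℝ) ^ M + M * (y * ((x + y : ℝ≥0) : ℝ) ^ (M - 1)) := by
    set z : ℝ := ((x + y : ℝ≥0) : ℝ) with hz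
    have hzpos : 0 < z := lt_of_le_of_ne (NNReal.coe_nonneg _) (by
      intro h; exact h0 (NNReal.coe_eq_zero.1 h.symm))
    have hxy : (x : ℝ) + y = z := by simp [hz]
    have hx0 : (0 : ℝ) ≤ x := x.2
    have hy0 : (0 : ℝ) ≤ y := y.2
    have hb := one_add_mul_self_le_rpow_one_add (s := -(y : ℝ) / z)
      (by rw [le_div_iff₀ hzpos]; linarith) hM
    have h1 : 1 + -(y : ℝ) / z = x / z := by field_simp; linarith
    rw [h1, Real.div_rpow hx0 hzpos.le, le_div_iff₀ (by positivity)] at hb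
    have h2 : z ^ M = z * z ^ (M - 1) := by
      rw [Real.rpow_sub_one hzpos.ne']; field_simp
    have h3 : (1 + M * (-(y : ℝ) / z)) * z ^ M = z ^ M - M * (y * z ^ (M - 1)) := by
      rw [h2]; field_simp; ring
    linarith
  have e1 : ((x : ℝ≥0∞) + y) ^ M = ENNReal.ofReal (((x + y : ℝ≥0) : ℝ) ^ M) := by
    rw [← ENNReal.ofReal_rpow_of_nonneg (NNReal.coe_nonneg _) hM0.le, ENNReal.ofReal_coe_nnreal]
    push_cast; rfl
  have e2 : ((x : ℝ≥0∞) + y) ^ (M - 1) = ENNReal.ofReal (((x + y : ℝ≥0) : ℝ) ^ (M - 1)) := by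
    rw [← ENNReal.ofReal_rpow_of_nonneg (NNReal.coe_nonneg _) (by linarith),
      ENNReal.ofReal_coe_nnreal]
    push_cast; rfl
  have e3 : (x : ℝ≥0∞) ^ M = ENNReal.ofReal ((x : ℝ) ^ M) := by
    rw [← ENNReal.ofReal_rpow_of_nonneg (NNReal.coe_nonneg _) hM0.le, ENNReal.ofReal_coe_nnreal]
  rw [e1, e2, e3, ← ENNReal.ofReal_coe_nnreal (p := y), ← ENNReal.ofReal_mul (NNReal.coe_nonneg _),
    ← ENNReal.ofReal_mul hM0.le, ← ENNReal.ofReal_add (by positivity) (by positivity)]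
  exact ENNReal.ofReal_le_ofReal key

lemma sum_succ_rpow_le (a : ℕ → ℝ≥0∞) {M : ℝ} (hM : 1 ≤ M) (n : ℕ) :
    (∑ i ∈ Finset.range (n + 1), a i) ^ M ≤ a 0 ^ M + ENNReal.ofReal M *
      ∑ k ∈ Finset.range n, a (k + 1) * (∑ i ∈ Finset.range (k + 2), a i) ^ (M - 1) := by
  induction n with
  | zero => simp
  | succ n ih =>
    rw [Finset.sum_range_succ a, Finset.sum_range_succ (fun k => a (k + 1) * _), mul_add,
      ← add_assoc]
    refine (add_rpow_le _ _ hM).trans ?_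
    rw [← Finset.sum_range_succ a]
    gcongr

lemma sum_rpow_le (a : ℕ → ℝ≥0∞) {M : ℝ} (hM : 1 ≤ M) (n : ℕ) :
    (∑ i ∈ Finset.range n, a i) ^ M ≤ ENNReal.ofReal M *
      ∑ k ∈ Finset.range n, a k * (∑ i ∈ Finset.range (k + 1), a i) ^ (M - 1) := by
  induction n with
  | zero => simp [ENNReal.zero_rpow_of_pos (by linarith : 0 < M)]
  | succ n ih =>
    rw [Finset.sum_range_succ a, Finset.sum_range_succ (fun k => a k * _), mul_add]
    refine (add_rpow_le _ _ hM).trans ?_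
    rw [← Finset.sum_range_succ a]
    gcongr

lemma rpow_eq_mul_rpow_sub_one (x : ℝ≥0∞) {t : ℝ} (ht : 1 ≤ t) : x ^ t = x * x ^ (t - 1) := by
  conv_rhs => rw [← ENNReal.rpow_one x, ← ENNReal.rpow_mul, one_mul]
  rw [← ENNReal.rpow_add_of_nonneg _ _ zero_le_one (by linarith)]
  ring_nf

lemma tsum_rpow_le_rpow_tsum {ι : Type*} (a : ι → ℝ≥0∞) {t : ℝ} (ht : 1 ≤ t) :
    ∑' i, a i ^ t ≤ (∑' i, a i) ^ t := by
  calc ∑' i, a i ^ t ≤ ∑' i, a i * (∑' i, a i) ^ (t - 1) := by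
        refine ENNReal.tsum_le_tsum fun i => ?_
        rw [rpow_eq_mul_rpow_sub_one _ ht]
        gcongr
        exact ENNReal.le_tsum i
    _ = (∑' i, a i) ^ t := by rw [ENNReal.tsum_mul_right, ← rpow_eq_mul_rpow_sub_one _ ht]

lemma sum_geometric_convolution_le (ε : ℝ≥0∞) (c : ℕ → ℝ≥0∞) (n : ℕ) :
    ∑ k ∈ Finset.range n, ∑ i ∈ Finset.range (k + 1), ε ^ (k - i) * c i ≤
      (1 - ε)⁻¹ * ∑ i ∈ Finset.range n, c i := by
  rw [Finset.sum_comm' (t' := Finset.range n) (s' := fun i => Finset.Ico i n)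
    (by intro x y; simp only [Finset.mem_range, Finset.mem_Ico]; omega), Finset.mul_sum]
  refine Finset.sum_le_sum fun i _ => ?_
  rw [← Finset.sum_mul]
  gcongr
  rw [Finset.sum_Ico_eq_sum_range, ← ENNReal.tsum_geometric]
  simp only [add_tsub_cancel_left]
  exact ENNReal.sum_le_tsum _

lemma tsum_geometric_convolution_le (ε : ℝ≥0∞) (c : ℕ → ℝ≥0∞) :
    ∑' k, ∑ i ∈ Finset.range (k + 1), ε ^ (k - i) * c i ≤ (1 - ε)⁻¹ * ∑' i, c i := by
  rw [ENNReal.tsum_eq_iSup_nat]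
  refine iSup_le fun n => (sum_geometric_convolution_le ε c n).trans ?_
  gcongr
  exact ENNReal.sum_le_tsum _

lemma le_rpow_of_le_mul_rpow {Z A : ℝ≥0∞} {a : ℝ} (ha : 0 < a) (hZ : Z ≠ ∞)
    (h : Z ≤ A * Z ^ (1 - a)) : Z ≤ A ^ (1 / a) := by
  rcases eq_or_ne Z 0 with rfl | h0
  · simp
  have h1 : Z ^ a ≤ A := by
    have h2 : Z ^ (1 - a) ≠ 0 := by simp [ENNReal.rpow_eq_zero_iff, h0, hZ]
    have h3 : Z ^ (1 - a) ≠ ∞ := by simp [ENNReal.rpow_eq_top_iff, h0, hZ]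
    refine (ENNReal.mul_le_mul_iff_left h2 h3).1 ?_
    rw [← ENNReal.rpow_add _ _ h0 hZ]
    simpa using h
  calc Z = (Z ^ a) ^ (1 / a) := by
        rw [← ENNReal.rpow_mul, mul_one_div_cancel ha.ne', ENNReal.rpow_one]
    _ ≤ A ^ (1 / a) := ENNReal.rpow_le_rpow h1 (by positivity)

lemma add_rpow_le_two_rpow_mul (x y : ℝ≥0∞) {t : ℝ} (ht : 0 ≤ t) :
    (x + y) ^ t ≤ 2 ^ t * (x ^ t + y ^ t) := by
  wlog h : x ≤ y generalizing x y
  · rw [add_comm x, add_comm (x ^ t)]; exact this y x (le_of_not_ge h)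
  calc (x + y) ^ t ≤ (2 * y) ^ t := by rw [two_mul]; gcongr
    _ = 2 ^ t * y ^ t := ENNReal.mul_rpow_of_nonneg _ _ ht
    _ ≤ _ := by gcongr; exact le_add_self

/-! ### Strong bounds from weak bounds -/

lemma exists_le_two_pow_mul {u l : ℝ≥0∞} (hu : u ≠ ∞) (hl : l ≠ 0) : ∃ j : ℕ, u ≤ 2 ^ j * l := by
  rcases eq_or_ne l ∞ with rfl | hl'
  · exact ⟨0, by simp⟩
  obtain ⟨n, hn⟩ := ENNReal.exists_nat_gt (ENNReal.div_ne_top hu hl)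
  refine ⟨n, ?_⟩
  rw [ENNReal.div_lt_iff (Or.inl hl) (Or.inl hl')] at hn
  refine hn.le.trans ?_
  gcongr
  exact_mod_cast Nat.lt_two_pow_self.le

lemma rpow_le_add_tsum_indicator {X : Type*} (u : X → ℝ≥0∞) {δ : ℝ} (hδ : 0 < δ) {l : ℝ≥0∞}
    (hl : l ≠ 0) (x : X) :
    u x ^ δ ≤ l ^ δ +
      ∑' j : ℕ, {x | 2 ^ j * l < u x}.indicator (fun _ => (2 ^ (j + 1) * l) ^ δ) x := by
  rcases eq_or_ne l ∞ with rfl | hl'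
  · simp [ENNReal.top_rpow_of_pos hδ]
  rcases eq_or_ne (u x) ∞ with hu | hu
  · have hmem (j : ℕ) : x ∈ {x | 2 ^ j * l < u x} := by
      simp only [mem_ofPred_eq, hu]
      exact ENNReal.mul_lt_top (by simp) hl'.lt_top
    have : ∑' j : ℕ, {x | 2 ^ j * l < u x}.indicator (fun _ => (2 ^ (j + 1) * l) ^ δ) x = ∞ := by
      rw [eq_top_iff, ← ENNReal.tsum_const_eq_top_of_ne_zero (α := ℕ) (c := l ^ δ)
        (by simp [ENNReal.rpow_eq_zero_iff, hl, hl'])]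
      refine ENNReal.tsum_le_tsum fun j => ?_
      rw [indicator_of_mem (hmem j)]
      gcongr
      exact le_mul_of_one_le_left' (one_le_pow₀ (by norm_num))
    rw [this]; simp
  · classical
    have hex := exists_le_two_pow_mul hu hl
    rcases hj : Nat.find hex with _ | k
    · have h := Nat.find_spec hex
      rw [hj] at h
      refine le_add_right ?_
      gcongr
      simpa using h
    · have h := Nat.find_spec hex
      rw [hj] at h
      have h' : x ∈ {x | 2 ^ k * l < u x} := by
        have := Nat.find_min hex (m := k) (by omega)
        simpa using this
      refine le_add_left ?_
      refine le_trans ?_ (ENNReal.le_tsum k)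
      rw [indicator_of_mem h']
      gcongr

/-- A weak-type bound of order `s` on a finite measure space gives strong bounds of every order
`δ < s`. -/
lemma lintegral_rpow_le_of_weak {X : Type*} [MeasurableSpace X] {s δ : ℝ} (hδ : 0 < δ)
    (hδs : δ < s) : ∃ C : ℝ≥0∞, C ≠ ∞ ∧ ∀ (σ : Measure X) [IsFiniteMeasure σ] (u : X → ℝ≥0∞),
      Measurable u → ∀ A : ℝ≥0∞, A ≠ ∞ →
      (∀ t : ℝ≥0∞, t ≠ 0 → t ≠ ∞ → σ {x | t < u x} ≤ A / t ^ s) →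
      ∫⁻ x, u x ^ δ ∂σ ≤ C * (σ univ ^ (1 - δ / s) * A ^ (δ / s)) := by
  have hs : 0 < s := hδ.trans hδs
  refine ⟨1 + 2 ^ δ * (1 - 2 ^ (δ - s))⁻¹, ?_, ?_⟩
  · refine ENNReal.add_ne_top.2 ⟨by simp, ENNReal.mul_ne_top ?_ ?_⟩
    · exact ENNReal.rpow_ne_top_of_nonneg hδ.le (by simp)
    · rw [ENNReal.inv_ne_top, Ne, tsub_eq_zero_iff_le, not_le]
      exact ENNReal.rpow_lt_one_of_one_lt_of_neg (by norm_num) (by linarith)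
  intro σ _ u hu A hA h
  rcases eq_or_ne (σ univ) 0 with hσ | hσ
  · rw [Measure.measure_univ_eq_zero] at hσ
    simp [hσ]
  have hσt : σ univ ≠ ∞ := measure_ne_top _ _
  rcases eq_or_ne A 0 with rfl | hA0
  · have h0 : ∫⁻ x, u x ^ δ ∂σ = 0 := by
      rw [lintegral_eq_zero_iff (hu.pow_const _)]
      have hn (n : ℕ) : σ {x | ((n : ℝ≥0∞) + 1)⁻¹ < u x} = 0 := by
        simpa using h ((n : ℝ≥0∞) + 1)⁻¹ (by simp) (by simp)
      have hall : ∀ᵐ x ∂σ, ∀ n : ℕ, ¬ ((n : ℝ≥0∞) + 1)⁻¹ < u x := by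
        rw [ae_all_iff]
        intro n
        rw [ae_iff]
        simp only [not_not]
        exact hn n
      filter_upwards [hall] with x hx
      have : u x = 0 := by
        by_contra hne
        obtain ⟨n, hn⟩ := ENNReal.exists_inv_nat_lt hne
        refine hx n (lt_of_le_of_lt ?_ hn)
        exact ENNReal.inv_le_inv.2 le_self_add
      simp [this, hδ]
    rw [h0]; exact zero_le
  set l : ℝ≥0∞ := (A / σ univ) ^ (1 / s) with hl
  have hAσ0 : A / σ univ ≠ 0 := ENNReal.div_ne_zero.2 ⟨hA0, hσt⟩
  have hAσt : A / σ univ ≠ ∞ := ENNReal.div_ne_top hA hσ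
  have hl0 : l ≠ 0 := by simp [hl, ENNReal.rpow_eq_zero_iff, hAσ0, hAσt]
  have hlt : l ≠ ∞ := ENNReal.rpow_ne_top_of_nonneg (by positivity) hAσt
  have hls : l ^ s = A / σ univ := by
    rw [hl, ← ENNReal.rpow_mul, one_div_mul_cancel hs.ne', ENNReal.rpow_one]
  have hAl : A / l ^ s = σ univ := by
    rw [hls, ENNReal.div_eq_inv_mul, ENNReal.inv_div (Or.inl hσt) (Or.inl hσ),
      ENNReal.div_mul_cancel hA0 hA]
  have hlδ : l ^ δ * σ univ = σ univ ^ (1 - δ / s) * A ^ (δ / s) := by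
    rw [hl, ← ENNReal.rpow_mul, one_div_mul_eq_div, ENNReal.div_rpow_of_nonneg _ _ (by positivity),
      ENNReal.rpow_sub _ _ hσ hσt, ENNReal.rpow_one]
    simp only [div_eq_mul_inv]
    ring
  have hterm (j : ℕ) : (2 ^ (j + 1) * l) ^ δ * σ {x | 2 ^ j * l < u x} ≤
      2 ^ δ * (l ^ δ * σ univ) * (2 ^ (δ - s)) ^ j := by
    have h2j0 : (2 : ℝ≥0∞) ^ j ≠ 0 := by simp
    have h2jt : (2 : ℝ≥0∞) ^ j ≠ ∞ := by simp
    calc (2 ^ (j + 1) * l) ^ δ * σ {x | 2 ^ j * l < u x}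
        ≤ (2 ^ (j + 1) * l) ^ δ * (A / (2 ^ j * l) ^ s) := by
          gcongr
          exact h _ (mul_ne_zero h2j0 hl0) (ENNReal.mul_ne_top h2jt hlt)
      _ = 2 ^ δ * (l ^ δ * (A / l ^ s)) * ((2 ^ j) ^ δ / (2 ^ j) ^ s) := by
          rw [pow_succ, ENNReal.mul_rpow_of_nonneg _ _ hδ.le, ENNReal.mul_rpow_of_nonneg _ _ hδ.le,
            ENNReal.mul_rpow_of_nonneg _ _ hs.le]
          simp only [div_eq_mul_inv]
          rw [ENNReal.mul_inv]
          · ring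
          · left; simp [ENNReal.rpow_eq_zero_iff]
          · right; simp [ENNReal.rpow_eq_zero_iff, hl0, hlt]
      _ = _ := by
          rw [hAl, ← ENNReal.rpow_sub _ _ h2j0 h2jt, ← ENNReal.rpow_natCast (2 ^ (δ - s)) j,
            ← ENNReal.rpow_mul 2 (δ - s), ← ENNReal.rpow_natCast 2 j, ← ENNReal.rpow_mul 2 (j : ℝ),
            mul_comm (j : ℝ)]
  have hmeas (j : ℕ) : MeasurableSet {x | 2 ^ j * l < u x} := measurableSet_lt measurable_const hu
  calc ∫⁻ x, u x ^ δ ∂σ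
      ≤ ∫⁻ x, (l ^ δ +
        ∑' j : ℕ, {x | 2 ^ j * l < u x}.indicator (fun _ => (2 ^ (j + 1) * l) ^ δ) x) ∂σ :=
        lintegral_mono fun x => rpow_le_add_tsum_indicator u hδ hl0 x
    _ = l ^ δ * σ univ + ∑' j : ℕ, (2 ^ (j + 1) * l) ^ δ * σ {x | 2 ^ j * l < u x} := by
        rw [lintegral_add_left measurable_const, lintegral_const, lintegral_tsum
          (fun j => (measurable_const.indicator (hmeas j)).aemeasurable)]
        simp_rw [lintegral_indicator_const (hmeas _)]
    _ ≤ l ^ δ * σ univ + ∑' j : ℕ, 2 ^ δ * (l ^ δ * σ univ) * (2 ^ (δ - s)) ^ j := by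
        exact add_le_add_right (ENNReal.tsum_le_tsum hterm) _
    _ = (1 + 2 ^ δ * (1 - 2 ^ (δ - s))⁻¹) * (l ^ δ * σ univ) := by
        rw [ENNReal.tsum_mul_left, ENNReal.tsum_geometric]
        ring
    _ = _ := by rw [hlδ]

/-- A weak-type `(1,1)` bound for a function with values in `[0,1]` gives strong bounds of every
order `m > 1`. -/
lemma lintegral_rpow_le_of_weak_one {m : ℝ} (hm : 1 < m) : ∃ C : ℝ≥0∞, C ≠ ∞ ∧
    ∀ {X : Type} [MeasurableSpace X] (σ : Measure X) (v : X → ℝ≥0∞), Measurable v →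
      (∀ x, v x ≤ 1) → ∀ A : ℝ≥0∞, (∀ t : ℝ≥0∞, t ≠ 0 → t ≠ ∞ → σ {x | t < v x} ≤ A / t) →
      ∫⁻ x, v x ^ m ∂σ ≤ C * A := by
  refine ⟨2 * (1 - 2 ^ (1 - m))⁻¹, ?_, ?_⟩
  · refine ENNReal.mul_ne_top (by simp) ?_
    rw [ENNReal.inv_ne_top, Ne, tsub_eq_zero_iff_le, not_le]
    exact ENNReal.rpow_lt_one_of_one_lt_of_neg (by norm_num) (by linarith)
  intro X _ σ v hv hv1 A h
  have hmeas (j : ℕ) : MeasurableSet {x | ((2 : ℝ≥0∞) ^ (j + 1))⁻¹ < v x} :=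
    measurableSet_lt measurable_const hv
  have hpt (x : X) : v x ^ m ≤ ∑' j : ℕ, {x | ((2 : ℝ≥0∞) ^ (j + 1))⁻¹ < v x}.indicator
      (fun _ => (((2 : ℝ≥0∞) ^ j)⁻¹) ^ m) x := by
    rcases eq_or_ne (v x) 0 with h0 | h0
    · simp [h0, ENNReal.zero_rpow_of_pos (by linarith : 0 < m)]
    classical
    have hex : ∃ j : ℕ, ((2 : ℝ≥0∞) ^ j)⁻¹ < v x := by
      obtain ⟨n, hn⟩ := ENNReal.exists_inv_nat_lt h0
      refine ⟨n, lt_of_le_of_lt ?_ hn⟩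
      rw [ENNReal.inv_le_inv]
      exact_mod_cast Nat.lt_two_pow_self.le
    rcases hj : Nat.find hex with _ | k
    · have h := Nat.find_spec hex
      rw [hj] at h
      exact absurd (hv1 x) (by simpa using h)
    · have h := Nat.find_spec hex
      rw [hj] at h
      have h' := Nat.find_min hex (m := k) (by omega)
      refine le_trans ?_ (ENNReal.le_tsum k)
      rw [indicator_of_mem (by exact h)]
      gcongr
      exact not_lt.1 h'
  calc ∫⁻ x, v x ^ m ∂σ ≤ ∫⁻ x, (∑' j : ℕ, {x | ((2 : ℝ≥0∞) ^ (j + 1))⁻¹ < v x}.indicator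
      (fun _ => (((2 : ℝ≥0∞) ^ j)⁻¹) ^ m) x) ∂σ := lintegral_mono hpt
    _ = ∑' j : ℕ, (((2 : ℝ≥0∞) ^ j)⁻¹) ^ m * σ {x | ((2 : ℝ≥0∞) ^ (j + 1))⁻¹ < v x} := by
        rw [lintegral_tsum (fun j => (measurable_const.indicator (hmeas j)).aemeasurable)]
        simp_rw [lintegral_indicator_const (hmeas _)]
    _ ≤ ∑' j : ℕ, 2 * A * (2 ^ (1 - m)) ^ j := by
        refine ENNReal.tsum_le_tsum fun j => ?_
        refine (mul_le_mul_right (h _ (by simp) (by simp)) _).trans_eq ?_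
        have h2j0 : (2 : ℝ≥0∞) ^ j ≠ 0 := by simp
        have h2jt : (2 : ℝ≥0∞) ^ j ≠ ∞ := by simp
        rw [ENNReal.div_eq_inv_mul, inv_inv, ← ENNReal.rpow_natCast (2 ^ (1 - m)),
          ← ENNReal.rpow_mul, mul_comm (1 - m), ENNReal.rpow_mul, ENNReal.rpow_natCast,
          ENNReal.rpow_sub _ _ h2j0 h2jt, ENNReal.rpow_one, ENNReal.inv_rpow, pow_succ,
          div_eq_mul_inv]
        ring
    _ = _ := by rw [ENNReal.tsum_mul_left, ENNReal.tsum_geometric]; ring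

/-! ### Ball densities and discretised Wolff potentials -/

section Wolff

variable {N : ℕ}

/-- The fractional density `μ (B_ρ(x)) ρ ^ (β - N)` at the dyadic radius `ρ = T / 2 ^ k`. -/
def ballDensity (β T : ℝ) (μ : Measure (Euc N)) (k : ℕ) (x : Euc N) : ℝ≥0∞ :=
  μ (ball x (T / 2 ^ k)) * ENNReal.ofReal ((T / 2 ^ k) ^ (β - N))

lemma measurable_measure_ball (μ : Measure (Euc N)) [SFinite μ] :
    Measurable fun z : Euc N × ℝ => μ (ball z.1 z.2) := by
  have hs : MeasurableSet {w : (Euc N × ℝ) × Euc N | dist w.2 w.1.1 < w.1.2} :=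
    measurableSet_lt (by fun_prop) (by fun_prop)
  exact measurable_measure_prodMk_left hs

lemma measurable_ballDensity (β T : ℝ) (μ : Measure (Euc N)) [SFinite μ] (k : ℕ) :
    Measurable (ballDensity β T μ k) :=
  ((measurable_measure_ball μ).comp (measurable_id.prodMk measurable_const)).mul_const _

lemma measurable_wolff (α p : ℝ) (R : ℝ≥0∞) (μ : Measure (Euc N)) [SFinite μ] :
    Measurable (wolff α p R μ) := by
  unfold wolff
  refine Measurable.lintegral_prod_right' (f := fun z : Euc N × ℝ =>
    (μ (ball z.1 z.2) / ENNReal.ofReal (z.2 ^ ((N : ℝ) - α * p))) ^ (1 / (p - 1)) /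
      ENNReal.ofReal z.2) ?_
  exact (((measurable_measure_ball μ).div (by fun_prop)).pow_const _).div (by fun_prop)

lemma ofReal_rpow_sub_eq_inv {ρ : ℝ} (hρ : 0 < ρ) (β : ℝ) :
    ENNReal.ofReal (ρ ^ (β - N)) = (ENNReal.ofReal (ρ ^ ((N : ℝ) - β)))⁻¹ := by
  rw [← ENNReal.ofReal_inv_of_pos (by positivity), ← Real.rpow_neg hρ.le, neg_sub]

lemma volume_Ico_dyadic {T : ℝ} (k : ℕ) :
    volume (Ico (T / 2 ^ (k + 1)) (T / 2 ^ k)) = ENNReal.ofReal (T / 2 ^ (k + 1)) := by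
  rw [Real.volume_Ico]
  congr 1
  rw [pow_succ]
  field_simp
  norm_num

lemma truncation_subset_iUnion_Ico {T : ℝ} :
    {ρ : ℝ | 0 < ρ ∧ ENNReal.ofReal ρ < ENNReal.ofReal T} ⊆
      ⋃ k : ℕ, Ico (T / 2 ^ (k + 1)) (T / 2 ^ k) := by
  rintro ρ ⟨hρ, hρT⟩
  have hlt : ρ < T := by
    by_contra h
    exact absurd (ENNReal.ofReal_le_ofReal (not_lt.1 h)) (not_le.2 hρT)
  classical
  have hex : ∃ k : ℕ, T / 2 ^ k ≤ ρ := by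
    obtain ⟨k, hk⟩ := pow_unbounded_of_one_lt (T / ρ) (one_lt_two : (1 : ℝ) < 2)
    refine ⟨k, ?_⟩
    rw [div_lt_iff₀ hρ] at hk
    rw [div_le_iff₀ (by positivity)]
    linarith
  rcases hj : Nat.find hex with _ | k
  · have h := Nat.find_spec hex
    rw [hj] at h
    simp at h
    linarith
  · have h := Nat.find_spec hex
    rw [hj] at h
    have h' := Nat.find_min hex (m := k) (by omega)
    exact mem_iUnion.2 ⟨k, h, not_le.1 h'⟩

lemma wolff_le_tsum {α p T : ℝ} (hp : 1 < p) (hN : α * p ≤ N) (hT : 0 < T) (μ : Measure (Euc N))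
    (x : Euc N) :
    wolff α p (ENNReal.ofReal T) μ x ≤ ENNReal.ofReal (2 ^ ((N : ℝ) - α * p)) ^ (1 / (p - 1)) *
      ∑' k, ballDensity (α * p) T μ k x ^ (1 / (p - 1)) := by
  have hr : 0 ≤ 1 / (p - 1) := by have := sub_pos.2 hp; positivity
  set r := 1 / (p - 1)
  unfold wolff
  refine (lintegral_mono_set truncation_subset_iUnion_Ico).trans ?_
  refine (lintegral_iUnion_le _ _).trans ?_
  rw [← ENNReal.tsum_mul_left]
  refine ENNReal.tsum_le_tsum fun k => ?_
  set a := T / 2 ^ (k + 1) with ha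
  have ha0 : 0 < a := by positivity
  have h2a : T / 2 ^ k = 2 * a := by rw [ha, pow_succ]; field_simp
  calc ∫⁻ ρ in Ico a (T / 2 ^ k),
        (μ (ball x ρ) / ENNReal.ofReal (ρ ^ ((N : ℝ) - α * p))) ^ r / ENNReal.ofReal ρ
      ≤ ∫⁻ _ in Ico a (T / 2 ^ k), (μ (ball x (T / 2 ^ k)) /
          ENNReal.ofReal (a ^ ((N : ℝ) - α * p))) ^ r / ENNReal.ofReal a := by
        refine setLIntegral_mono' measurableSet_Ico fun ρ hρ => ?_
        have h1 : a ^ ((N : ℝ) - α * p) ≤ ρ ^ ((N : ℝ) - α * p) :=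
          Real.rpow_le_rpow ha0.le hρ.1 (by linarith)
        have h2 := hρ.1
        have h3 := hρ.2.le
        gcongr
    _ = (μ (ball x (T / 2 ^ k)) / ENNReal.ofReal (a ^ ((N : ℝ) - α * p))) ^ r := by
        rw [setLIntegral_const, ha, volume_Ico_dyadic, ENNReal.div_mul_cancel] <;> simp [← ha, ha0]
    _ = _ := by
        rw [ballDensity, ← ENNReal.mul_rpow_of_nonneg _ _ hr,
          ofReal_rpow_sub_eq_inv (by positivity),
          h2a, Real.mul_rpow (by norm_num) ha0.le, ENNReal.ofReal_mul (by positivity),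
          ENNReal.mul_inv (Or.inr (by simp)) (Or.inr (by simp [Real.rpow_pos_of_pos ha0])),
          div_eq_mul_inv]
        congr 1
        rw [mul_left_comm (μ _), ← mul_assoc, ENNReal.mul_inv_cancel, one_mul]
        · simp [Real.rpow_pos_of_pos]
        · simp

lemma measure_ball_rpow_mul_le_setLIntegral {α p a b : ℝ} (hp : 1 < p) (hN : α * p ≤ N)
    (ha : 0 < a) (hab : a < b) (μ : Measure (Euc N)) (x : Euc N) :
    (μ (ball x a) * ENNReal.ofReal (b ^ (α * p - N))) ^ (1 / (p - 1)) *
        ENNReal.ofReal ((b - a) / b) ≤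
      ∫⁻ ρ in Ioo a b, (μ (ball x ρ) / ENNReal.ofReal (ρ ^ ((N : ℝ) - α * p))) ^ (1 / (p - 1)) /
        ENNReal.ofReal ρ := by
  have hr : 0 ≤ 1 / (p - 1) := by have := sub_pos.2 hp; positivity
  set r := 1 / (p - 1)
  have hb : 0 < b := ha.trans hab
  calc (μ (ball x a) * ENNReal.ofReal (b ^ (α * p - N))) ^ r * ENNReal.ofReal ((b - a) / b)
      = ∫⁻ _ in Ioo a b, (μ (ball x a) / ENNReal.ofReal (b ^ ((N : ℝ) - α * p))) ^ r /
          ENNReal.ofReal b := by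
        rw [setLIntegral_const, Real.volume_Ioo, ofReal_rpow_sub_eq_inv hb,
          ENNReal.ofReal_div_of_pos hb]
        simp only [div_eq_mul_inv]
        ring
    _ ≤ _ := by
        refine setLIntegral_mono' measurableSet_Ioo fun ρ hρ => ?_
        have hρ0 : 0 < ρ := ha.trans hρ.1
        have h1 : ρ ^ ((N : ℝ) - α * p) ≤ b ^ ((N : ℝ) - α * p) :=
          Real.rpow_le_rpow hρ0.le hρ.2.le (by linarith)
        have h2 := hρ.1.le
        have h3 := hρ.2.le
        gcongr

lemma measure_ball_rpow_mul_le_wolff {α p a b T : ℝ} (hp : 1 < p) (hN : α * p ≤ N)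
    (ha : 0 < a) (hab : a < b) (hbT : b ≤ T) (μ : Measure (Euc N)) (x : Euc N) :
    (μ (ball x a) * ENNReal.ofReal (b ^ (α * p - N))) ^ (1 / (p - 1)) *
        ENNReal.ofReal ((b - a) / b) ≤ wolff α p (ENNReal.ofReal T) μ x := by
  refine (measure_ball_rpow_mul_le_setLIntegral hp hN ha hab μ x).trans ?_
  unfold wolff
  refine lintegral_mono_set fun ρ hρ => ?_
  exact ⟨ha.trans hρ.1, (ENNReal.ofReal_lt_ofReal_iff (by linarith)).2 (hρ.2.trans_le hbT)⟩

lemma tsum_le_wolff {α p T T' : ℝ} (hp : 1 < p) (hN : α * p ≤ N) (hT : 0 < T) (hTT' : 2 * T ≤ T')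
    (μ : Measure (Euc N)) (x : Euc N) :
    ∑' k, ballDensity (α * p) T μ k x ^ (1 / (p - 1)) ≤
      2 * ENNReal.ofReal (2 ^ ((N : ℝ) - α * p)) ^ (1 / (p - 1)) *
        wolff α p (ENNReal.ofReal T') μ x := by
  have hr : 0 ≤ 1 / (p - 1) := by have := sub_pos.2 hp; positivity
  set r := 1 / (p - 1) with hrdef
  have hterm (k : ℕ) : ballDensity (α * p) T μ k x ^ r ≤
      2 * ENNReal.ofReal (2 ^ ((N : ℝ) - α * p)) ^ r *
        ∫⁻ ρ in Ioo (T / 2 ^ k) (2 * (T / 2 ^ k)),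
          (μ (ball x ρ) / ENNReal.ofReal (ρ ^ ((N : ℝ) - α * p))) ^ r / ENNReal.ofReal ρ := by
    have ha : 0 < T / 2 ^ k := by positivity
    have h := measure_ball_rpow_mul_le_setLIntegral hp hN ha
      (by linarith : T / 2 ^ k < 2 * (T / 2 ^ k)) μ x
    refine le_trans (le_of_eq ?_) (mul_le_mul_right h _)
    have h2 : (2 * (T / 2 ^ k) - T / 2 ^ k) / (2 * (T / 2 ^ k)) = 2⁻¹ := by
      field_simp; norm_num
    rw [← hrdef, h2, ENNReal.ofReal_inv_of_pos (by norm_num), Real.mul_rpow (by norm_num) ha.le,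
      ENNReal.ofReal_mul (by positivity), mul_left_comm (μ _),
      ENNReal.mul_rpow_of_nonneg _ _ hr, ballDensity]
    have h3 : ENNReal.ofReal (2 ^ ((N : ℝ) - α * p)) ^ r *
        ENNReal.ofReal (2 ^ (α * p - (N : ℝ))) ^ r = 1 := by
      rw [← ENNReal.mul_rpow_of_nonneg _ _ hr, ← ENNReal.ofReal_mul (by positivity),
        ← Real.rpow_add (by norm_num)]
      simp
    have h4 : (2 : ℝ≥0∞) * (ENNReal.ofReal 2)⁻¹ = 1 := by
      rw [ENNReal.ofReal_ofNat]; exact ENNReal.mul_inv_cancel (by simp) (by simp)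
    symm
    calc _ = (2 * (ENNReal.ofReal 2)⁻¹) * (ENNReal.ofReal (2 ^ ((N : ℝ) - α * p)) ^ r *
          ENNReal.ofReal (2 ^ (α * p - (N : ℝ))) ^ r) *
          (μ (ball x (T / 2 ^ k)) * ENNReal.ofReal ((T / 2 ^ k) ^ (α * p - ↑N))) ^ r := by ring
      _ = _ := by rw [h3, h4]; simp
  refine (ENNReal.tsum_le_tsum hterm).trans ?_
  rw [ENNReal.tsum_mul_left]
  gcongr
  rw [← lintegral_iUnion (fun _ => measurableSet_Ioo)]
  · unfold wolff
    refine lintegral_mono_set fun ρ hρ => ?_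
    obtain ⟨k, hk⟩ := mem_iUnion.1 hρ
    have ha : 0 < T / 2 ^ k := by positivity
    have hle : T / 2 ^ k ≤ T := div_le_self hT.le (one_le_pow₀ (by norm_num))
    exact ⟨ha.trans hk.1, (ENNReal.ofReal_lt_ofReal_iff (by linarith)).2 (by linarith [hk.2])⟩
  · have key (i j : ℕ) (hij : i < j) :
        Disjoint (Ioo (T / 2 ^ i) (2 * (T / 2 ^ i))) (Ioo (T / 2 ^ j) (2 * (T / 2 ^ j))) := by
      refine Set.disjoint_left.2 fun ρ h1 h2 => ?_
      have h3 : 2 * (T / 2 ^ j) ≤ T / 2 ^ i := by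
        have : (2 : ℝ) ^ (i + 1) ≤ 2 ^ j := pow_le_pow_right₀ (by norm_num) hij
        rw [mul_div_assoc', div_le_div_iff₀ (by positivity) (by positivity)]
        rw [pow_succ] at this
        nlinarith
      linarith [h1.1, h2.2]
    intro i j hij
    rcases lt_or_gt_of_ne hij with h | h
    · exact key i j h
    · exact (key j i h).symm

end Wolff

/-! ### Comparison of dyadic sums with the maximal function -/

section MuckenhouptWheeden

variable {N : ℕ}

lemma volume_ball_eq (x : Euc N) {ρ : ℝ} (hρ : 0 < ρ) :
    volume (ball x ρ) = ENNReal.ofReal (ρ ^ N) * volume (ball (0 : Euc N) 1) := by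
  have := Measure.addHaar_ball_of_pos (volume : Measure (Euc N)) x hρ
  rwa [finrank_euclideanSpace_fin] at this

lemma dist_lt_of_measure_ball_ne_zero {μ : Measure (Euc N)} {x0 x : Euc N} {L ρ : ℝ}
    (hsupp : μ (ball x0 L)ᶜ = 0) (h : μ (ball x ρ) ≠ 0) : dist x x0 < L + ρ := by
  by_contra hcon
  refine h (measure_mono_null (fun y hy => ?_) hsupp)
  simp only [mem_compl_iff, mem_ball, not_lt] at hy ⊢
  have := dist_triangle x y x0
  rw [dist_comm x y] at this
  linarith

lemma setLIntegral_measure_ball_le (μ : Measure (Euc N)) [SFinite μ] (z : Euc N) {ρ ρ' : ℝ}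
    (hρ' : 0 < ρ') :
    ∫⁻ x in ball z ρ, μ (ball x ρ') ≤
      ENNReal.ofReal (ρ' ^ N) * volume (ball (0 : Euc N) 1) * μ (ball z (ρ + ρ')) := by
  have hs : MeasurableSet {w : Euc N × Euc N | dist w.1 z < ρ ∧ dist w.2 w.1 < ρ'} :=
    measurableSet_setOfPred.2 (Measurable.and (measurableSet_setOfPred.1
      (measurableSet_lt (by fun_prop) (by fun_prop))) (measurableSet_setOfPred.1
      (measurableSet_lt (by fun_prop) (by fun_prop))))
  have h1 : ∫⁻ x in ball z ρ, μ (ball x ρ') ≤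
      ∫⁻ x, ∫⁻ y, {w : Euc N × Euc N | dist w.1 z < ρ ∧ dist w.2 w.1 < ρ'}.indicator 1
        (x, y) ∂μ := by
    rw [← lintegral_indicator measurableSet_ball]
    refine lintegral_mono fun x => ?_
    by_cases hx : x ∈ ball z ρ
    · rw [indicator_of_mem hx, ← lintegral_indicator_one measurableSet_ball]
      refine lintegral_mono fun y => ?_
      by_cases hy : y ∈ ball x ρ'
      · rw [indicator_of_mem hy, indicator_of_mem (show (x, y) ∈ {w : Euc N × Euc N |
          dist w.1 z < ρ ∧ dist w.2 w.1 < ρ'} from ⟨hx, hy⟩)]; simp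
      · rw [indicator_of_notMem hy]; exact zero_le
    · rw [indicator_of_notMem hx]; exact zero_le
  refine h1.trans ?_
  rw [lintegral_lintegral_swap (f := fun x y => {w : Euc N × Euc N | dist w.1 z < ρ ∧
    dist w.2 w.1 < ρ'}.indicator (1 : Euc N × Euc N → ℝ≥0∞) (x, y))
    (measurable_one.indicator hs).aemeasurable, ← lintegral_indicator_const measurableSet_ball]
  refine lintegral_mono fun y => ?_
  by_cases hy : y ∈ ball z (ρ + ρ')
  · rw [indicator_of_mem hy, ← volume_ball_eq y hρ', ← lintegral_indicator_one measurableSet_ball]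
    refine lintegral_mono fun x => ?_
    by_cases hx : (x, y) ∈ {w : Euc N × Euc N | dist w.1 z < ρ ∧ dist w.2 w.1 < ρ'}
    · rw [indicator_of_mem hx, indicator_of_mem (by rw [mem_ball']; exact hx.2)]; simp
    · rw [indicator_of_notMem hx]; exact zero_le
  · rw [indicator_of_notMem hy, nonpos_iff_eq_zero]
    refine (lintegral_eq_zero_of_ae_eq_zero (Eventually.of_forall fun x => ?_))
    refine indicator_of_notMem (fun hx => hy ?_) _
    have := dist_triangle y x z
    rw [mem_ball]
    linarith [hx.1, hx.2]

lemma setLIntegral_rpow_le {X : Type*} [MeasurableSpace X] {μ : Measure X} {f : X → ℝ≥0∞}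
    (hf : AEMeasurable f μ) {r : ℝ} (hr : 0 ≤ r) (hr1 : r ≤ 1) :
    ∫⁻ x, f x ^ r ∂μ ≤ μ univ ^ (1 - r) * (∫⁻ x, f x ∂μ) ^ r := by
  have h := ENNReal.lintegral_mul_norm_pow_le (μ := μ) (f := fun _ => (1 : ℝ≥0∞)) (g := f)
    aemeasurable_const hf (p := 1 - r) (q := r) (by linarith) hr (by ring)
  simpa using h

/-- The `r`-th powers of the ball densities, preceded by a constant bottom layer on a large ball
which controls all densities of radius comparable with `T`. -/
def layer (β T L r : ℝ) (x0 : Euc N) (μ : Measure (Euc N)) : ℕ → Euc N → ℝ≥0∞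
  | 0 => (closedBall x0 (L + 2 * T)).indicator
      fun _ => (μ univ * ENNReal.ofReal (T ^ (β - N))) ^ r
  | k + 1 => fun x => ballDensity β T μ k x ^ r

variable {β T L r : ℝ} {x0 : Euc N} {μ : Measure (Euc N)}

lemma measurable_layer [SFinite μ] (k : ℕ) : Measurable (layer β T L r x0 μ k) := by
  cases k with
  | zero => exact measurable_const.indicator measurableSet_closedBall
  | succ k => exact (measurable_ballDensity β T μ k).pow_const r

lemma measure_ball_mul_rpow_le_layer (hβN : β ≤ N) (hT : 0 < T) (hr : 0 < r)
    (hsupp : μ (ball x0 L)ᶜ = 0) (i : ℕ) (x : Euc N) :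
    (μ (ball x (2 * (T / 2 ^ i))) * ENNReal.ofReal ((T / 2 ^ i) ^ (β - N))) ^ r ≤
      ENNReal.ofReal (2 ^ ((N : ℝ) - β)) ^ r * layer β T L r x0 μ i x := by
  have hA : 1 ≤ ENNReal.ofReal (2 ^ ((N : ℝ) - β)) ^ r := by
    refine ENNReal.one_le_rpow ?_ hr
    rw [ENNReal.one_le_ofReal]
    exact Real.one_le_rpow (by norm_num) (by linarith)
  cases i with
  | zero =>
    by_cases h : μ (ball x (2 * (T / 2 ^ 0))) = 0
    · rw [h, zero_mul, ENNReal.zero_rpow_of_pos hr]; exact zero_le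
    have hx := dist_lt_of_measure_ball_ne_zero hsupp h
    refine le_mul_of_one_le_of_le hA ?_
    rw [layer, indicator_of_mem (by rw [mem_closedBall]; simp at hx; linarith)]
    simp only [pow_zero, div_one]
    gcongr
    exact subset_univ _
  | succ i =>
    simp only [layer, ballDensity]
    rw [← ENNReal.mul_rpow_of_nonneg _ _ hr.le]
    have h2 : 2 * (T / 2 ^ (i + 1)) = T / 2 ^ i := by rw [pow_succ]; field_simp
    have h3 : (T / 2 ^ (i + 1)) ^ (β - N) = 2 ^ ((N : ℝ) - β) * (T / 2 ^ i) ^ (β - N) := by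
      rw [← h2, Real.mul_rpow (by norm_num) (by positivity), ← mul_assoc,
        ← Real.rpow_add (by norm_num)]
      simp
    rw [h2, h3, ENNReal.ofReal_mul (by positivity)]
    refine le_of_eq ?_
    congr 1
    ring

lemma layer_succ_le (hβN : β ≤ N) (hT : 0 < T) (hr : 0 < r) (hsupp : μ (ball x0 L)ᶜ = 0)
    {i j : ℕ} (hji : j ≤ i) {x x' : Euc N} (hx : dist x x' < T / 2 ^ i) :
    layer β T L r x0 μ (j + 1) x ≤
      ENNReal.ofReal (2 ^ ((N : ℝ) - β)) ^ r * layer β T L r x0 μ j x' := by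
  refine le_trans ?_ (measure_ball_mul_rpow_le_layer hβN hT hr hsupp j x')
  simp only [layer, ballDensity]
  gcongr
  have h1 : T / 2 ^ i ≤ T / 2 ^ j := by gcongr; norm_num
  exact ball_subset_ball' (by linarith)

lemma layer_zero_le (hr : 0 < r) (hsupp : μ (ball x0 L)ᶜ = 0) (hT : 0 < T)
    {k : ℕ} {x x' : Euc N} (hx : dist x x' < T) (h : layer β T L r x0 μ (k + 1) x ≠ 0) :
    layer β T L r x0 μ 0 x ≤ layer β T L r x0 μ 0 x' := by
  have h1 : μ (ball x (T / 2 ^ k)) ≠ 0 := by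
    intro h0
    apply h
    simp only [layer, ballDensity]
    rw [h0, zero_mul, ENNReal.zero_rpow_of_pos hr]
  have h2 := dist_lt_of_measure_ball_ne_zero hsupp h1
  have h3 : T / 2 ^ k ≤ T := div_le_self hT.le (one_le_pow₀ (by norm_num))
  have h4 := dist_triangle x' x x0
  rw [dist_comm x' x] at h4
  rw [layer, indicator_of_mem (a := x') (by rw [mem_closedBall]; linarith)]
  exact indicator_le_self' (fun _ _ => zero_le) _

lemma setLIntegral_layer_le [IsFiniteMeasure μ] (hβN : β ≤ N) (hT : 0 < T) (hr : 0 < r)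
    (hr1 : r ≤ 1) (hsupp : μ (ball x0 L)ᶜ = 0) {i k : ℕ} (hik : i ≤ k) (z : Euc N) :
    ∫⁻ x in ball z (T / 2 ^ i), layer β T L r x0 μ (k + 1) x ≤
      volume (ball z (T / 2 ^ i)) * (ENNReal.ofReal (2 ^ ((N : ℝ) - β)) ^ r *
        ENNReal.ofReal (2 ^ (-(β * r))) ^ (k - i) * layer β T L r x0 μ i z) := by
  have hρi : 0 < T / 2 ^ i := by positivity
  have hρk : 0 < T / 2 ^ k := by positivity
  have hρ : T / 2 ^ k ≤ T / 2 ^ i := by gcongr; norm_num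
  set V := volume (ball z (T / 2 ^ i)) with hV
  have hV0 : V ≠ 0 := (measure_ball_pos _ _ hρi).ne'
  have hVt : V ≠ ∞ := measure_ball_lt_top.ne
  have h1 : ∫⁻ x in ball z (T / 2 ^ i), ballDensity β T μ k x ≤
      V * (ENNReal.ofReal ((2 ^ (-β)) ^ (k - i)) *
        (μ (ball z (2 * (T / 2 ^ i))) * ENNReal.ofReal ((T / 2 ^ i) ^ (β - N)))) := by
    unfold ballDensity
    rw [lintegral_mul_const' _ _ ENNReal.ofReal_ne_top]
    refine (mul_le_mul_left (setLIntegral_measure_ball_le μ z hρk) _).trans ?_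
    have hsub : μ (ball z (T / 2 ^ i + T / 2 ^ k)) ≤ μ (ball z (2 * (T / 2 ^ i))) :=
      measure_mono (ball_subset_ball (by linarith))
    refine (mul_le_mul_left (mul_le_mul_right hsub _) _).trans (le_of_eq ?_)
    have hkey : (T / 2 ^ k) ^ N * (T / 2 ^ k) ^ (β - N) =
        (T / 2 ^ i) ^ N * ((2 ^ (-β)) ^ (k - i) * (T / 2 ^ i) ^ (β - N)) := by
      have e1 (ρ : ℝ) (hρ : 0 < ρ) : ρ ^ N * ρ ^ (β - N) = ρ ^ β := by
        rw [← Real.rpow_natCast, ← Real.rpow_add hρ]; ring_nf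
      rw [mul_left_comm, e1 _ hρk, e1 _ hρi]
      have e2 : T / 2 ^ k = (2⁻¹) ^ (k - i) * (T / 2 ^ i) := by
        obtain ⟨d, rfl⟩ := Nat.exists_eq_add_of_le hik
        rw [Nat.add_sub_cancel_left, pow_add, inv_pow]
        field_simp
      rw [e2, Real.mul_rpow (by positivity) hρi.le, ← Real.rpow_natCast, ← Real.rpow_mul
        (by norm_num), mul_comm ((k - i : ℕ) : ℝ), Real.rpow_mul (by norm_num), Real.rpow_natCast,
        Real.inv_rpow (by norm_num), Real.rpow_neg (by norm_num)]
    rw [hV, volume_ball_eq z hρi]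
    calc _ = ENNReal.ofReal ((T / 2 ^ k) ^ N) * ENNReal.ofReal ((T / 2 ^ k) ^ (β - N)) *
          volume (ball (0 : Euc N) 1) * μ (ball z (2 * (T / 2 ^ i))) := by ring
      _ = ENNReal.ofReal ((T / 2 ^ i) ^ N) * (ENNReal.ofReal ((2 ^ (-β)) ^ (k - i)) *
          ENNReal.ofReal ((T / 2 ^ i) ^ (β - N))) *
          volume (ball (0 : Euc N) 1) * μ (ball z (2 * (T / 2 ^ i))) := by
          rw [← ENNReal.ofReal_mul (by positivity), ← ENNReal.ofReal_mul (by positivity),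
            ← ENNReal.ofReal_mul (by positivity), hkey]
      _ = _ := by ring
  have h2 := setLIntegral_rpow_le (μ := volume.restrict (ball z (T / 2 ^ i)))
    (measurable_ballDensity β T μ k).aemeasurable hr.le hr1
  rw [Measure.restrict_apply_univ] at h2
  refine h2.trans ?_
  calc V ^ (1 - r) * (∫⁻ x in ball z (T / 2 ^ i), ballDensity β T μ k x) ^ r
      ≤ V ^ (1 - r) * (V * (ENNReal.ofReal ((2 ^ (-β)) ^ (k - i)) *
        (μ (ball z (2 * (T / 2 ^ i))) * ENNReal.ofReal ((T / 2 ^ i) ^ (β - N))))) ^ r := by gcongr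
    _ = V * (ENNReal.ofReal (2 ^ (-(β * r))) ^ (k - i) *
        (μ (ball z (2 * (T / 2 ^ i))) * ENNReal.ofReal ((T / 2 ^ i) ^ (β - N))) ^ r) := by
        rw [ENNReal.mul_rpow_of_nonneg _ _ hr.le, ENNReal.mul_rpow_of_nonneg _ _ hr.le, ← mul_assoc,
          ← ENNReal.rpow_add _ _ hV0 hVt, sub_add_cancel, ENNReal.rpow_one]
        congr 2
        rw [ENNReal.ofReal_rpow_of_nonneg (by positivity) hr.le, ← ENNReal.ofReal_pow
          (by positivity)]
        congr 1
        rw [← Real.rpow_natCast, ← Real.rpow_natCast, ← Real.rpow_mul (by positivity),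
          ← Real.rpow_mul (by positivity), ← Real.rpow_mul (by positivity)]
        ring_nf
    _ ≤ V * (ENNReal.ofReal (2 ^ (-(β * r))) ^ (k - i) *
        (ENNReal.ofReal (2 ^ ((N : ℝ) - β)) ^ r * layer β T L r x0 μ i z)) := by
        gcongr
        exact measure_ball_mul_rpow_le_layer hβN hT hr hsupp i z
    _ = _ := by ring

lemma lintegral_layer_mul_le [IsFiniteMeasure μ] (hβN : β ≤ N) (hT : 0 < T) (hr : 0 < r)
    (hr1 : r ≤ 1) (hsupp : μ (ball x0 L)ᶜ = 0) {i k : ℕ} (hik : i ≤ k) {g g' : Euc N → ℝ≥0∞}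
    (hg' : Measurable g')
    (h : ∀ x x', layer β T L r x0 μ (k + 1) x ≠ 0 → dist x x' < T / 2 ^ i → g x ≤ g' x') :
    ∫⁻ x, layer β T L r x0 μ (k + 1) x * g x ≤
      ENNReal.ofReal (2 ^ ((N : ℝ) - β)) ^ r * ENNReal.ofReal (2 ^ (-(β * r))) ^ (k - i) *
        ∫⁻ x, layer β T L r x0 μ i x * g' x := by
  have hρi : 0 < T / 2 ^ i := by positivity
  set V := volume (ball (0 : Euc N) (T / 2 ^ i)) with hV
  have hVx (x : Euc N) : volume (ball x (T / 2 ^ i)) = V := by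
    rw [hV, volume_ball_eq x hρi, volume_ball_eq 0 hρi]
  have hV0 : V ≠ 0 := (measure_ball_pos _ _ hρi).ne'
  have hVt : V ≠ ∞ := measure_ball_lt_top.ne
  rw [← ENNReal.mul_le_mul_iff_right hV0 hVt, ← lintegral_const_mul' _ _ hVt]
  have hs : MeasurableSet {w : Euc N × Euc N | dist w.1 w.2 < T / 2 ^ i} :=
    measurableSet_lt (by fun_prop) (by fun_prop)
  have hm := measurable_layer (β := β) (T := T) (L := L) (r := r) (x0 := x0) (μ := μ) (k + 1)
  calc ∫⁻ x, V * (layer β T L r x0 μ (k + 1) x * g x)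
      ≤ ∫⁻ x, ∫⁻ x', {w : Euc N × Euc N | dist w.1 w.2 < T / 2 ^ i}.indicator
          (fun w => layer β T L r x0 μ (k + 1) w.1 * g' w.2) (x, x') := by
        refine lintegral_mono fun x => ?_
        rw [mul_comm, ← hVx x, ← lintegral_indicator_const measurableSet_ball]
        refine lintegral_mono fun x' => ?_
        by_cases hx : x' ∈ ball x (T / 2 ^ i)
        · rw [mem_ball'] at hx
          rw [indicator_of_mem (by rwa [mem_ball']),
            indicator_of_mem (show (x, x') ∈ {w : Euc N × Euc N |
            dist w.1 w.2 < T / 2 ^ i} from hx)]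
          by_cases h0 : layer β T L r x0 μ (k + 1) x = 0
          · simp [h0]
          · exact mul_le_mul_right (h x x' h0 hx) _
        · rw [indicator_of_notMem hx]; exact zero_le
    _ = ∫⁻ x', ∫⁻ x, {w : Euc N × Euc N | dist w.1 w.2 < T / 2 ^ i}.indicator
          (fun w => layer β T L r x0 μ (k + 1) w.1 * g' w.2) (x, x') := by
        refine lintegral_lintegral_swap (f := fun x x' =>
          {w : Euc N × Euc N | dist w.1 w.2 < T / 2 ^ i}.indicator
          (fun w => layer β T L r x0 μ (k + 1) w.1 * g' w.2) (x, x')) ?_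
        exact (((hm.comp measurable_fst).mul (hg'.comp measurable_snd)).indicator hs).aemeasurable
    _ ≤ ∫⁻ x', V * (ENNReal.ofReal (2 ^ ((N : ℝ) - β)) ^ r *
          ENNReal.ofReal (2 ^ (-(β * r))) ^ (k - i) * layer β T L r x0 μ i x') * g' x' := by
        refine lintegral_mono fun x' => ?_
        have h1 := setLIntegral_layer_le hβN hT hr hr1 hsupp hik x'
        rw [hVx] at h1
        refine le_trans (le_of_eq ?_) (mul_le_mul_left h1 _)
        rw [← lintegral_indicator measurableSet_ball, ← lintegral_mul_const _
          (hm.indicator measurableSet_ball)]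
        congr with x
        by_cases hx : x ∈ ball x' (T / 2 ^ i)
        · rw [indicator_of_mem hx, indicator_of_mem (show (x, x') ∈ {w : Euc N × Euc N |
            dist w.1 w.2 < T / 2 ^ i} from hx)]
        · rw [indicator_of_notMem hx, indicator_of_notMem (show (x, x') ∉ {w : Euc N × Euc N |
            dist w.1 w.2 < T / 2 ^ i} from hx), zero_mul]
    _ = _ := by
        have hm' : Measurable fun x => layer β T L r x0 μ i x * g' x := (measurable_layer i).mul hg'
        rw [← lintegral_const_mul _ hm', ← lintegral_const_mul _ (hm'.const_mul _)]
        congr with x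
        ring

end MuckenhouptWheeden

section MuckenhouptWheeden

variable {N : ℕ} {β T L r : ℝ} {x0 : Euc N} {μ : Measure (Euc N)}

/-- Partial sums of the layers. -/
def layerSum (β T L r : ℝ) (x0 : Euc N) (μ : Measure (Euc N)) (n : ℕ) (x : Euc N) : ℝ≥0∞ :=
  ∑ i ∈ Finset.range (n + 1), layer β T L r x0 μ i x

lemma measurable_layerSum [SFinite μ] (n : ℕ) : Measurable (layerSum β T L r x0 μ n) :=
  Finset.measurable_sum _ fun i _ => measurable_layer i

lemma layerSum_succ_le (hβN : β ≤ N) (hT : 0 < T) (hr : 0 < r) (hsupp : μ (ball x0 L)ᶜ = 0)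
    {i : ℕ} {x x' : Euc N} (hx : dist x x' < T / 2 ^ i) (h : layer β T L r x0 μ (i + 1) x ≠ 0) :
    layerSum β T L r x0 μ (i + 1) x ≤
      (1 + ENNReal.ofReal (2 ^ ((N : ℝ) - β)) ^ r) * layerSum β T L r x0 μ i x' := by
  have h3 : T / 2 ^ i ≤ T := div_le_self hT.le (one_le_pow₀ (by norm_num))
  rw [layerSum, Finset.sum_range_succ', add_comm, add_mul, one_mul]
  refine add_le_add ?_ ?_
  · refine (layer_zero_le hr hsupp hT (hx.trans_le h3) h).trans ?_
    exact Finset.single_le_sum (f := fun i => layer β T L r x0 μ i x') (fun _ _ => zero_le)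
      (Finset.mem_range.2 (Nat.succ_pos i))
  · rw [layerSum, Finset.mul_sum]
    refine Finset.sum_le_sum fun j hj => ?_
    exact layer_succ_le hβN hT hr hsupp (Nat.lt_succ_iff.1 (Finset.mem_range.1 hj)) hx

lemma lintegral_layerSum_rpow_le_sum [IsFiniteMeasure μ] (hβN : β ≤ N) (hT : 0 < T) (hr : 0 < r)
    (hr1 : r ≤ 1) {M : ℝ} (hM : 2 ≤ M) (hsupp : μ (ball x0 L)ᶜ = 0) (n : ℕ) {A ε : ℝ≥0∞}
    (hA : A = ENNReal.ofReal (2 ^ ((N : ℝ) - β)) ^ r)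
    (hε : ε = ENNReal.ofReal (2 ^ (-(β * r)))) :
    ∫⁻ x, layerSum β T L r x0 μ n x ^ M ≤
      (1 + ENNReal.ofReal M * (A + ENNReal.ofReal (M - 1) * (A * (A * (1 + A) ^ (M - 2)))) *
        (1 - ε)⁻¹) *
        ∑ i ∈ Finset.range (n + 1), ∫⁻ x, layer β T L r x0 μ i x *
          (layer β T L r x0 μ i x * layerSum β T L r x0 μ i x ^ (M - 2)) := by
  set c : ℕ → ℝ≥0∞ := fun i => ∫⁻ x, layer β T L r x0 μ i x *
    (layer β T L r x0 μ i x * layerSum β T L r x0 μ i x ^ (M - 2)) with hc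
  have hsub : M - 1 - 1 = M - 2 := by ring
  have hml (i : ℕ) : Measurable (layer β T L r x0 μ i) := measurable_layer i
  have hmS (i : ℕ) : Measurable (layerSum β T L r x0 μ i) := measurable_layerSum i
  have hS0 (x : Euc N) : layerSum β T L r x0 μ 0 x = layer β T L r x0 μ 0 x := by simp [layerSum]
  have hc0 : c 0 = ∫⁻ x, layer β T L r x0 μ 0 x ^ M := by
    refine lintegral_congr fun x => ?_
    rw [hS0, rpow_eq_mul_rpow_sub_one _ (by linarith : 1 ≤ M),
      rpow_eq_mul_rpow_sub_one _ (by linarith : 1 ≤ M - 1), hsub]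
  have hbase (k : ℕ) : ∫⁻ x, layer β T L r x0 μ (k + 1) x * layer β T L r x0 μ 0 x ^ (M - 1) ≤
      A * ε ^ k * c 0 := by
    have h := lintegral_layer_mul_le hβN hT hr hr1 hsupp (Nat.zero_le k)
      (g := fun x => layer β T L r x0 μ 0 x ^ (M - 1))
      (g' := fun x => layer β T L r x0 μ 0 x ^ (M - 1))
      ((hml 0).pow_const _) (by
        intro x x' hx hd
        have := layer_zero_le hr hsupp hT (by simpa using hd) hx
        exact ENNReal.rpow_le_rpow this (by linarith))
    rw [← hA, ← hε, Nat.sub_zero] at h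
    refine h.trans (le_of_eq ?_)
    rw [hc0]
    congr with x
    rw [rpow_eq_mul_rpow_sub_one (layer β T L r x0 μ 0 x) (by linarith : 1 ≤ M)]
  have hstep (k i : ℕ) (hik : i ≤ k) : ∫⁻ x, layer β T L r x0 μ (k + 1) x *
      (layer β T L r x0 μ (i + 1) x * layerSum β T L r x0 μ (i + 1) x ^ (M - 2)) ≤
      A * ε ^ (k - i) * (A * (1 + A) ^ (M - 2) * c i) := by
    have h := lintegral_layer_mul_le hβN hT hr hr1 hsupp hik
      (g := fun x => layer β T L r x0 μ (i + 1) x * layerSum β T L r x0 μ (i + 1) x ^ (M - 2))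
      (g' := fun x => A * (1 + A) ^ (M - 2) *
        (layer β T L r x0 μ i x * layerSum β T L r x0 μ i x ^ (M - 2)))
      (((hml i).mul ((hmS i).pow_const _)).const_mul _) (by
        intro x x' _ hd
        by_cases h0 : layer β T L r x0 μ (i + 1) x = 0
        · rw [h0, zero_mul]; exact zero_le
        have h1 := layer_succ_le hβN hT hr hsupp le_rfl hd
        have h2 := layerSum_succ_le hβN hT hr hsupp hd h0
        rw [← hA] at h1 h2
        refine (mul_le_mul' h1 (ENNReal.rpow_le_rpow h2 (by linarith))).trans (le_of_eq ?_)
        rw [ENNReal.mul_rpow_of_nonneg _ _ (by linarith)]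
        ring)
    rw [← hA, ← hε] at h
    refine h.trans (le_of_eq ?_)
    have hmm : Measurable fun x => layer β T L r x0 μ i x *
        (layer β T L r x0 μ i x * layerSum β T L r x0 μ i x ^ (M - 2)) :=
      (hml i).mul ((hml i).mul ((hmS i).pow_const _))
    simp only [hc]
    rw [← lintegral_const_mul _ hmm]
    congr 1
    refine lintegral_congr fun x => ?_
    ring
  have hk (k : ℕ) : ∫⁻ x, layer β T L r x0 μ (k + 1) x * layerSum β T L r x0 μ (k + 1) x ^ (M - 1) ≤
      (A + ENNReal.ofReal (M - 1) * (A * (A * (1 + A) ^ (M - 2)))) *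
        ∑ i ∈ Finset.range (k + 1), ε ^ (k - i) * c i := by
    calc _ ≤ ∫⁻ x, (layer β T L r x0 μ (k + 1) x * layer β T L r x0 μ 0 x ^ (M - 1) +
          ENNReal.ofReal (M - 1) * ∑ i ∈ Finset.range (k + 1), layer β T L r x0 μ (k + 1) x *
            (layer β T L r x0 μ (i + 1) x * layerSum β T L r x0 μ (i + 1) x ^ (M - 2))) := by
          refine lintegral_mono fun x => ?_
          have h := sum_succ_rpow_le (fun i => layer β T L r x0 μ i x)
            (by linarith : 1 ≤ M - 1) (k + 1)
          rw [hsub] at h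
          refine (mul_le_mul_right h _).trans (le_of_eq ?_)
          rw [mul_add, mul_left_comm, Finset.mul_sum]
          rfl
      _ = (∫⁻ x, layer β T L r x0 μ (k + 1) x * layer β T L r x0 μ 0 x ^ (M - 1)) +
          ENNReal.ofReal (M - 1) * ∑ i ∈ Finset.range (k + 1), ∫⁻ x, layer β T L r x0 μ (k + 1) x *
            (layer β T L r x0 μ (i + 1) x * layerSum β T L r x0 μ (i + 1) x ^ (M - 2)) := by
          have hmm (i : ℕ) : Measurable fun x => layer β T L r x0 μ (k + 1) x *
            (layer β T L r x0 μ (i + 1) x * layerSum β T L r x0 μ (i + 1) x ^ (M - 2)) :=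
            (hml _).mul ((hml _).mul ((hmS _).pow_const _))
          have hmb : Measurable fun x => layer β T L r x0 μ (k + 1) x *
            layer β T L r x0 μ 0 x ^ (M - 1) := (hml _).mul ((hml 0).pow_const _)
          rw [lintegral_add_left hmb, lintegral_const_mul _
            (Finset.measurable_sum _ fun i _ => hmm i), lintegral_finsetSum _ fun i _ => hmm i]
      _ ≤ A * ε ^ k * c 0 + ENNReal.ofReal (M - 1) * ∑ i ∈ Finset.range (k + 1),
            A * ε ^ (k - i) * (A * (1 + A) ^ (M - 2) * c i) := by
          gcongr with i hi
          · exact hbase k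
          · exact hstep k i (Nat.lt_succ_iff.1 (Finset.mem_range.1 hi))
      _ ≤ A * (∑ i ∈ Finset.range (k + 1), ε ^ (k - i) * c i) + ENNReal.ofReal (M - 1) *
            ((A * (A * (1 + A) ^ (M - 2))) * ∑ i ∈ Finset.range (k + 1), ε ^ (k - i) * c i) := by
          rw [mul_assoc]
          refine add_le_add (mul_le_mul_right ?_ _) (mul_le_mul_right (le_of_eq ?_) _)
          · exact Finset.single_le_sum (f := fun i => ε ^ (k - i) * c i) (fun _ _ => zero_le)
              (Finset.mem_range.2 (Nat.succ_pos k))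
          · rw [Finset.mul_sum]
            refine Finset.sum_congr rfl fun i _ => ?_
            ring
      _ = _ := by ring
  calc ∫⁻ x, layerSum β T L r x0 μ n x ^ M
      ≤ ∫⁻ x, (layer β T L r x0 μ 0 x ^ M + ENNReal.ofReal M * ∑ k ∈ Finset.range n,
          layer β T L r x0 μ (k + 1) x * layerSum β T L r x0 μ (k + 1) x ^ (M - 1)) :=
        lintegral_mono fun x => sum_succ_rpow_le (fun i => layer β T L r x0 μ i x) (by linarith) n
    _ = c 0 + ENNReal.ofReal M * ∑ k ∈ Finset.range n,
          ∫⁻ x, layer β T L r x0 μ (k + 1) x * layerSum β T L r x0 μ (k + 1) x ^ (M - 1) := by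
        have hmm (i : ℕ) : Measurable fun x => layer β T L r x0 μ (i + 1) x *
            layerSum β T L r x0 μ (i + 1) x ^ (M - 1) := (hml _).mul ((hmS _).pow_const _)
        rw [lintegral_add_left ((hml 0).pow_const _), lintegral_const_mul _
            (Finset.measurable_sum _ fun i _ => hmm i), lintegral_finsetSum _ fun i _ => hmm i, hc0]
    _ ≤ c 0 + ENNReal.ofReal M * ((A + ENNReal.ofReal (M - 1) * (A * (A * (1 + A) ^ (M - 2)))) *
          ((1 - ε)⁻¹ * ∑ i ∈ Finset.range n, c i)) := by
        gcongr
        refine (Finset.sum_le_sum fun k _ => hk k).trans ?_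
        rw [← Finset.mul_sum]
        exact mul_le_mul_right (sum_geometric_convolution_le ε c n) _
    _ ≤ _ := by
        rw [add_mul (1 : ℝ≥0∞), one_mul, mul_assoc (ENNReal.ofReal M * _),
          mul_assoc (ENNReal.ofReal M)]
        gcongr
        · exact Finset.single_le_sum (f := c) (fun _ _ => zero_le)
            (Finset.mem_range.2 (Nat.succ_pos n))
        · exact Nat.le_succ n

lemma lintegral_layerSum_rpow_ne_top [IsFiniteMeasure μ] (hT : 0 < T) (hr : 0 < r)
    {M : ℝ} (hM : 0 < M) (hsupp : μ (ball x0 L)ᶜ = 0) (n : ℕ) :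
    ∫⁻ x, layerSum β T L r x0 μ n x ^ M ≠ ∞ := by
  have hlayer (i : ℕ) : ∃ c : ℝ≥0∞, c ≠ ∞ ∧ ∀ x, layer β T L r x0 μ i x ≤
      (closedBall x0 (L + 2 * T)).indicator (fun _ => c) x := by
    cases i with
    | zero =>
      refine ⟨_, ?_, fun x => le_rfl⟩
      exact ENNReal.rpow_ne_top_of_nonneg hr.le
        (ENNReal.mul_ne_top (measure_ne_top _ _) ENNReal.ofReal_ne_top)
    | succ k =>
      refine ⟨(μ univ * ENNReal.ofReal ((T / 2 ^ k) ^ (β - N))) ^ r,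
        ENNReal.rpow_ne_top_of_nonneg hr.le
        (ENNReal.mul_ne_top (measure_ne_top _ _) ENNReal.ofReal_ne_top), fun x => ?_⟩
      simp only [layer, ballDensity]
      by_cases h : μ (ball x (T / 2 ^ k)) = 0
      · rw [h, zero_mul, ENNReal.zero_rpow_of_pos hr]; exact zero_le
      have h2 := dist_lt_of_measure_ball_ne_zero hsupp h
      have h3 : T / 2 ^ k ≤ T := div_le_self hT.le (one_le_pow₀ (by norm_num))
      rw [indicator_of_mem (by rw [mem_closedBall]; linarith)]
      gcongr
      exact subset_univ _
  choose c hc hle using hlayer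
  have hS (x : Euc N) : layerSum β T L r x0 μ n x ^ M ≤ (closedBall x0 (L + 2 * T)).indicator
      (fun _ => (∑ i ∈ Finset.range (n + 1), c i) ^ M) x := by
    have h := Finset.sum_le_sum fun i (_ : i ∈ Finset.range (n + 1)) => hle i x
    by_cases hx : x ∈ closedBall x0 (L + 2 * T)
    · simp only [indicator_of_mem hx] at h ⊢
      exact ENNReal.rpow_le_rpow h hM.le
    · simp only [indicator_of_notMem hx, Finset.sum_const_zero] at h ⊢
      rw [nonpos_iff_eq_zero] at h
      rw [layerSum, h, ENNReal.zero_rpow_of_pos hM]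
  refine ne_top_of_le_ne_top ?_ (lintegral_mono hS)
  rw [lintegral_indicator_const measurableSet_closedBall]
  refine ENNReal.mul_ne_top (ENNReal.rpow_ne_top_of_nonneg hM.le ?_)
    measure_closedBall_lt_top.ne
  exact ENNReal.sum_ne_top.2 fun i _ => hc i

lemma lintegral_layerSum_rpow_le (hβ : 0 < β) (hβN : β ≤ N) (hT : 0 < T) (hr : 0 < r)
    (hr1 : r ≤ 1) {M : ℝ} (hM : 2 ≤ M) (x0 : Euc N) (L : ℝ) :
    ∃ C : ℝ≥0∞, C ≠ ∞ ∧ ∀ (μ : Measure (Euc N)) [IsFiniteMeasure μ], μ (ball x0 L)ᶜ = 0 →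
      ∀ n, ∫⁻ x, layerSum β T L r x0 μ n x ^ M ≤ C * ∫⁻ x, (⨆ i, layer β T L r x0 μ i x) ^ M := by
  set A := ENNReal.ofReal (2 ^ ((N : ℝ) - β)) ^ r with hA
  set ε := ENNReal.ofReal (2 ^ (-(β * r))) with hε
  have hAt : A ≠ ∞ := ENNReal.rpow_ne_top_of_nonneg hr.le ENNReal.ofReal_ne_top
  have hε1 : ε < 1 := by
    rw [hε, ← ENNReal.ofReal_one, ENNReal.ofReal_lt_ofReal_iff one_pos]
    exact Real.rpow_lt_one_of_one_lt_of_neg (by norm_num) (by nlinarith)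
  have hM0 : 0 < M := by linarith
  set C := 1 + ENNReal.ofReal M * (A + ENNReal.ofReal (M - 1) * (A * (A * (1 + A) ^ (M - 2)))) *
        (1 - ε)⁻¹ with hC
  have hCt : C ≠ ∞ := by
    have h1 : (1 + A) ^ (M - 2) ≠ ∞ := ENNReal.rpow_ne_top_of_nonneg (by linarith)
      (ENNReal.add_ne_top.2 ⟨ENNReal.one_ne_top, hAt⟩)
    have h2 : (1 - ε)⁻¹ ≠ ∞ := by simpa [tsub_eq_zero_iff_le] using hε1
    finiteness
  refine ⟨C ^ M, ENNReal.rpow_ne_top_of_nonneg hM0.le hCt, fun μ _ hsupp n => ?_⟩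
  have hml (i : ℕ) : Measurable (layer β T L r x0 μ i) := measurable_layer i
  have hmS (i : ℕ) : Measurable (layerSum β T L r x0 μ i) := measurable_layerSum i
  have h1 := lintegral_layerSum_rpow_le_sum hβN hT hr hr1 hM hsupp n hA hε
  rw [← hC] at h1
  set Z := ∫⁻ x, layerSum β T L r x0 μ n x ^ M with hZ
  set B := ∫⁻ x, (⨆ i, layer β T L r x0 μ i x) ^ M with hB
  have h2 : ∑ i ∈ Finset.range (n + 1), ∫⁻ x, layer β T L r x0 μ i x *
      (layer β T L r x0 μ i x * layerSum β T L r x0 μ i x ^ (M - 2)) ≤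
      ∫⁻ x, (⨆ i, layer β T L r x0 μ i x) * layerSum β T L r x0 μ n x ^ (M - 1) := by
    have hmm (i : ℕ) : Measurable fun x => layer β T L r x0 μ i x *
        (layer β T L r x0 μ i x * layerSum β T L r x0 μ i x ^ (M - 2)) :=
      (hml i).mul ((hml i).mul ((hmS i).pow_const _))
    rw [← lintegral_finsetSum _ fun i _ => hmm i]
    refine lintegral_mono fun x => ?_
    rw [rpow_eq_mul_rpow_sub_one _ (by linarith : 1 ≤ M - 1), show M - 1 - 1 = M - 2 by ring]
    conv_rhs => rw [layerSum, Finset.sum_mul, Finset.mul_sum]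
    refine Finset.sum_le_sum fun i hi => ?_
    refine mul_le_mul' (le_iSup (fun i => layer β T L r x0 μ i x) i) (mul_le_mul_right
      (ENNReal.rpow_le_rpow ?_ (by linarith)) _)
    · refine Finset.sum_le_sum_of_subset (Finset.range_mono ?_)
      have := Finset.mem_range.1 hi
      omega
  have h3 : ∫⁻ x, (⨆ i, layer β T L r x0 μ i x) * layerSum β T L r x0 μ n x ^ (M - 1) ≤
      B ^ (1 / M) * Z ^ (1 - 1 / M) := by
    have hc : M.HolderConjugate (M / (M - 1)) := Real.HolderConjugate.conjExponent (by linarith)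
    have h := ENNReal.lintegral_mul_le_Lp_mul_Lq volume hc
      (f := fun x => ⨆ i, layer β T L r x0 μ i x)
      (g := fun x => layerSum β T L r x0 μ n x ^ (M - 1))
      (Measurable.iSup hml).aemeasurable ((hmS n).pow_const _).aemeasurable
    refine h.trans (le_of_eq ?_)
    have hM1 : M - 1 ≠ 0 := by linarith
    have e (x : Euc N) : (layerSum β T L r x0 μ n x ^ (M - 1)) ^ (M / (M - 1)) =
        layerSum β T L r x0 μ n x ^ M := by
      rw [← ENNReal.rpow_mul, mul_div_cancel₀ _ hM1]
    simp only [e]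
    congr 2
    field_simp
  have h4 : Z ≤ (C * B ^ (1 / M)) * Z ^ (1 - 1 / M) := by
    refine h1.trans ((mul_le_mul_right (h2.trans h3) _).trans (le_of_eq ?_))
    ring
  have h5 := le_rpow_of_le_mul_rpow (one_div_pos.2 hM0)
    (lintegral_layerSum_rpow_ne_top hT hr hM0 hsupp n) h4
  rwa [one_div_one_div, ENNReal.mul_rpow_of_nonneg _ _ hM0.le, ← ENNReal.rpow_mul,
    one_div_mul_cancel hM0.ne', ENNReal.rpow_one] at h5

lemma lintegral_tsum_rpow_le_of_forall {X : Type*} [MeasurableSpace X] {ν : Measure X}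
    {a : ℕ → X → ℝ≥0∞} (ha : ∀ i, Measurable (a i)) {M : ℝ} (hM : 0 ≤ M) {B : ℝ≥0∞}
    (h : ∀ n, ∫⁻ x, (∑ i ∈ Finset.range n, a i x) ^ M ∂ν ≤ B) :
    ∫⁻ x, (∑' i, a i x) ^ M ∂ν ≤ B := by
  have hlim : Tendsto (fun n => ∫⁻ x, (∑ i ∈ Finset.range n, a i x) ^ M ∂ν) atTop
      (𝓝 (∫⁻ x, (∑' i, a i x) ^ M ∂ν)) := by
    refine lintegral_tendsto_of_tendsto_of_monotone
      (fun n => ((Finset.measurable_sum _ fun i _ => ha i).pow_const M).aemeasurable) ?_ ?_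
    · refine Eventually.of_forall fun x n n' hn => ?_
      exact ENNReal.rpow_le_rpow (Finset.sum_le_sum_of_subset (Finset.range_mono hn)) hM
    · exact Eventually.of_forall fun x =>
        (ENNReal.continuous_rpow_const.tendsto _).comp (ENNReal.tendsto_nat_tsum _)
  exact le_of_tendsto' hlim h

/-- **Muckenhoupt–Wheeden inequality** for dyadic sums of ball densities: the `ℓ^r`-sum over all
scales is controlled in integral mean by the supremum over all scales. -/
lemma lintegral_tsum_ballDensity_rpow_le (hβ : 0 < β) (hβN : β ≤ N) (hT : 0 < T) (hr : 0 < r)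
    {m : ℝ} (hm : 0 < m) (x0 : Euc N) (L : ℝ) :
    ∃ C : ℝ≥0∞, C ≠ ∞ ∧ ∀ (μ : Measure (Euc N)) [IsFiniteMeasure μ], μ (ball x0 L)ᶜ = 0 →
      ∫⁻ x, (∑' k, ballDensity β T μ k x ^ r) ^ (m / r) ≤
        C * ((∫⁻ x, (⨆ k, ballDensity β T μ k x) ^ m) + μ univ ^ m) := by
  obtain ⟨r', hr', hr1, hrr, hrm⟩ : ∃ r' : ℝ, 0 < r' ∧ r' ≤ 1 ∧ r' ≤ r ∧ r' ≤ m / 2 :=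
    ⟨min 1 (min r (m / 2)), by positivity, min_le_left _ _, (min_le_right _ _).trans
      (min_le_left _ _), (min_le_right _ _).trans (min_le_right _ _)⟩
  have hM : 2 ≤ m / r' := by rw [le_div_iff₀ hr']; linarith
  have hM0 : 0 < m / r' := by linarith
  obtain ⟨C, hC, H⟩ := lintegral_layerSum_rpow_le hβ hβN hT hr' hr1 hM x0 L
  set V := volume (closedBall x0 (L + 2 * T))
  set τ := ENNReal.ofReal (T ^ (β - N)) ^ m
  have hV : V ≠ ∞ := measure_closedBall_lt_top.ne
  have hτ : τ ≠ ∞ := ENNReal.rpow_ne_top_of_nonneg hm.le ENNReal.ofReal_ne_top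
  refine ⟨C * (1 + τ * V), by finiteness, fun μ _ hsupp => ?_⟩
  have hmd (k : ℕ) := measurable_ballDensity β T μ k
  have e1 (a : ℝ≥0∞) : (a ^ r') ^ (m / r') = a ^ m := by
    rw [← ENNReal.rpow_mul, mul_div_cancel₀ _ hr'.ne']
  have h1 (x : Euc N) : (∑' k, ballDensity β T μ k x ^ r) ^ (m / r) ≤
      (∑' k, ballDensity β T μ k x ^ r') ^ (m / r') := by
    have h := tsum_rpow_le_rpow_tsum (fun k => ballDensity β T μ k x ^ r')
      ((one_le_div hr').2 hrr)
    simp only [← ENNReal.rpow_mul, mul_div_cancel₀ r hr'.ne'] at h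
    refine (ENNReal.rpow_le_rpow h (by positivity)).trans (le_of_eq ?_)
    rw [← ENNReal.rpow_mul]
    congr 1
    field_simp
  have h2 (x : Euc N) : (⨆ i, layer β T L r' x0 μ i x) ^ (m / r') ≤
      (closedBall x0 (L + 2 * T)).indicator (fun _ => μ univ ^ m * τ) x +
        (⨆ k, ballDensity β T μ k x) ^ m := by
    rw [← ENNReal.le_rpow_inv_iff hM0]
    refine iSup_le fun i => ?_
    rw [ENNReal.le_rpow_inv_iff hM0]
    cases i with
    | zero =>
      refine le_add_right ?_
      simp only [layer, indicator]
      split_ifs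
      · rw [e1, ENNReal.mul_rpow_of_nonneg _ _ hm.le]
      · rw [ENNReal.zero_rpow_of_pos hM0]
    | succ k =>
      refine le_add_left ?_
      simp only [layer]
      rw [e1]
      exact ENNReal.rpow_le_rpow (le_iSup (fun k => ballDensity β T μ k x) k) hm.le
  have h3 : ∫⁻ x, (⨆ i, layer β T L r' x0 μ i x) ^ (m / r') ≤
      (1 + τ * V) * ((∫⁻ x, (⨆ k, ballDensity β T μ k x) ^ m) + μ univ ^ m) := by
    refine (lintegral_mono h2).trans ?_
    rw [lintegral_add_left (measurable_const.indicator measurableSet_closedBall),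
      lintegral_indicator_const measurableSet_closedBall, add_mul, one_mul, add_comm, mul_add]
    refine add_le_add le_self_add ?_
    rw [show μ univ ^ m * τ * V = τ * V * μ univ ^ m by ring]
    exact le_add_self
  calc _ ≤ ∫⁻ x, (∑' k, ballDensity β T μ k x ^ r') ^ (m / r') := lintegral_mono h1
    _ ≤ C * ∫⁻ x, (⨆ i, layer β T L r' x0 μ i x) ^ (m / r') := by
        refine lintegral_tsum_rpow_le_of_forall (fun k => (hmd k).pow_const _) hM0.le fun n => ?_
        refine le_trans (lintegral_mono fun x => ?_) (H μ hsupp n)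
        refine ENNReal.rpow_le_rpow ?_ hM0.le
        rw [layerSum, Finset.sum_range_succ']
        exact le_self_add
    _ ≤ _ := by rw [mul_assoc]; exact mul_le_mul_right h3 _

end MuckenhouptWheeden

/-! ### Bounds for the Bessel kernel -/

section Bessel

variable {N : ℕ} {β : ℝ}

lemma measurable_besselKernel (N : ℕ) (β : ℝ) : Measurable (besselKernel N β) := by
  unfold besselKernel
  have h : StronglyMeasurable (Function.uncurry fun (x : Euc N) (t : ℝ) =>
      Real.exp (-(Real.pi * ‖x‖ ^ 2 / t) - t / (4 * Real.pi)) * t ^ ((β - (N : ℝ)) / 2) / t) := by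
    apply Measurable.stronglyMeasurable
    unfold Function.uncurry
    fun_prop
  exact h.integral_prod_right.measurable

lemma besselKernel_neg (x : Euc N) : besselKernel N β (-x) = besselKernel N β x := by
  simp [besselKernel]

lemma besselKernel_integrand_nonneg (x : Euc N) {t : ℝ} (ht : 0 < t) :
    0 ≤ Real.exp (-(Real.pi * ‖x‖ ^ 2 / t) - t / (4 * Real.pi)) * t ^ ((β - (N : ℝ)) / 2) / t := by
  positivity

lemma exp_neg_div_le {a t : ℝ} (ha : 0 < a) (ht : 0 < t) (n : ℕ) :
    Real.exp (-(a / t)) ≤ n.factorial * a⁻¹ ^ n * t ^ n := by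
  have h := Real.pow_div_factorial_le_exp (a / t) (by positivity) n
  rw [Real.exp_neg]
  have h2 : 0 < (a / t) ^ n / n.factorial := by positivity
  refine (inv_anti₀ h2 h).trans (le_of_eq ?_)
  rw [inv_div, div_pow, inv_pow]
  field_simp

lemma besselKernel_integrand_le {x : Euc N} (hx : x ≠ 0) {t : ℝ} (ht : 0 < t) :
    Real.exp (-(Real.pi * ‖x‖ ^ 2 / t) - t / (4 * Real.pi)) * t ^ ((β - (N : ℝ)) / 2) / t ≤
      N.factorial * (Real.pi * ‖x‖ ^ 2)⁻¹ ^ N *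
        (t ^ ((β + N) / 2 - 1) * Real.exp (-((4 * Real.pi)⁻¹ * t))) := by
  have hx' : 0 < ‖x‖ := norm_pos_iff.2 hx
  have h := exp_neg_div_le (a := Real.pi * ‖x‖ ^ 2) (by positivity) ht N
  have e : t ^ ((β + N) / 2 - 1) = t ^ N * (t ^ ((β - (N : ℝ)) / 2) / t) := by
    rw [← Real.rpow_natCast, ← Real.rpow_sub_one ht.ne', ← Real.rpow_add ht]
    ring_nf
  rw [sub_eq_add_neg, Real.exp_add, e, show t / (4 * Real.pi) = (4 * Real.pi)⁻¹ * t by ring]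
  calc _ = Real.exp (-(Real.pi * ‖x‖ ^ 2 / t)) * (Real.exp (-((4 * Real.pi)⁻¹ * t)) *
        (t ^ ((β - (N : ℝ)) / 2) / t)) := by ring
    _ ≤ (N.factorial * (Real.pi * ‖x‖ ^ 2)⁻¹ ^ N * t ^ N) * (Real.exp (-((4 * Real.pi)⁻¹ * t)) *
        (t ^ ((β - (N : ℝ)) / 2) / t)) := by gcongr
    _ = _ := by ring

lemma integrableOn_gamma_weight (hβ : 0 < β) :
    IntegrableOn (fun t : ℝ => t ^ ((β + N) / 2 - 1) * Real.exp (-((4 * Real.pi)⁻¹ * t)))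
      (Ioi 0) := by
  have hs : -1 < (β + N) / 2 - 1 := by
    have : (0 : ℝ) ≤ N := by positivity
    linarith
  have h := integrableOn_rpow_mul_exp_neg_mul_rpow hs one_pos
    (b := (4 * Real.pi)⁻¹) (by positivity)
  refine h.congr_fun (fun t _ => ?_) measurableSet_Ioi
  simp

lemma integrableOn_besselKernel_integrand (hβ : 0 < β) {x : Euc N} (hx : x ≠ 0) :
    IntegrableOn (fun t : ℝ => Real.exp (-(Real.pi * ‖x‖ ^ 2 / t) - t / (4 * Real.pi)) *
      t ^ ((β - (N : ℝ)) / 2) / t) (Ioi 0) := by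
  refine Integrable.mono' ((integrableOn_gamma_weight (N := N) hβ).const_mul
    (N.factorial * (Real.pi * ‖x‖ ^ 2)⁻¹ ^ N)) (Measurable.aestronglyMeasurable (by fun_prop)) ?_
  filter_upwards [ae_restrict_mem measurableSet_Ioi] with t ht
  rw [Real.norm_of_nonneg (besselKernel_integrand_nonneg x ht)]
  exact besselKernel_integrand_le hx ht

lemma exists_besselKernel_le_of_decay (hβ : 0 < β) : ∃ C : ℝ, 0 ≤ C ∧ ∀ x : Euc N, x ≠ 0 →
    besselKernel N β x ≤ C * ‖x‖ ^ (-(2 * N : ℝ)) := by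
  refine ⟨N.factorial * Real.pi⁻¹ ^ N * ∫ t in Ioi (0 : ℝ), t ^ ((β + N) / 2 - 1) *
    Real.exp (-((4 * Real.pi)⁻¹ * t)), ?_, fun x hx => ?_⟩
  · refine mul_nonneg (by positivity) (setIntegral_nonneg measurableSet_Ioi fun t ht => ?_)
    have : (0 : ℝ) < t := ht
    positivity
  have hx' : 0 < ‖x‖ := norm_pos_iff.2 hx
  have h := setIntegral_mono_on (integrableOn_besselKernel_integrand hβ hx)
    ((integrableOn_gamma_weight (N := N) hβ).const_mul (N.factorial * (Real.pi * ‖x‖ ^ 2)⁻¹ ^ N))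
    measurableSet_Ioi fun t ht => besselKernel_integrand_le hx ht
  rw [integral_const_mul] at h
  refine h.trans (le_of_eq ?_)
  rw [Real.rpow_neg hx'.le, mul_inv, mul_pow,
    show (2 * N : ℝ) = ((2 * N : ℕ) : ℝ) by push_cast; ring,
    Real.rpow_natCast, pow_mul, inv_pow (‖x‖ ^ 2)]
  ring

lemma integrableOn_exp_neg_div_mul_rpow (hβN : β < N) (hβ : 0 < β) :
    IntegrableOn (fun u : ℝ => Real.exp (-(Real.pi / u)) * u ^ ((β - N) / 2 - 1)) (Ioi 0) := by
  rw [← Ioc_union_Ioi_eq_Ioi (zero_le_one : (0 : ℝ) ≤ 1)]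
  refine IntegrableOn.union ?_ ?_
  · have h : IntegrableOn (fun u : ℝ => u ^ ((β + N) / 2 - 1)) (Ioc 0 1) := by
      rw [← intervalIntegrable_iff_integrableOn_Ioc_of_le zero_le_one]
      exact intervalIntegral.intervalIntegrable_rpow' (by linarith)
    refine Integrable.mono' (h.const_mul (N.factorial * Real.pi⁻¹ ^ N)) (by fun_prop) ?_
    filter_upwards [ae_restrict_mem measurableSet_Ioc] with u hu
    have hu0 : 0 < u := hu.1
    rw [Real.norm_of_nonneg (by positivity)]
    have e : u ^ ((β + N) / 2 - 1) = u ^ N * u ^ ((β - (N : ℝ)) / 2 - 1) := by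
      rw [← Real.rpow_natCast, ← Real.rpow_add hu0]
      ring_nf
    rw [e, ← mul_assoc]
    have := exp_neg_div_le Real.pi_pos hu0 N
    gcongr
  · have h : IntegrableOn (fun u : ℝ => u ^ ((β - N) / 2 - 1)) (Ioi 1) :=
      integrableOn_Ioi_rpow_of_lt (by linarith) one_pos
    refine Integrable.mono' h (by fun_prop) ?_
    filter_upwards [ae_restrict_mem measurableSet_Ioi] with u hu
    have hu0 : (0 : ℝ) < u := lt_trans one_pos hu
    rw [Real.norm_of_nonneg (by positivity)]
    refine mul_le_of_le_one_left (by positivity) (Real.exp_le_one_iff.2 ?_)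
    have : 0 < Real.pi / u := by positivity
    linarith

lemma exists_besselKernel_le_of_singular (hβ : 0 < β) (hβN : β < N) : ∃ C : ℝ, 0 ≤ C ∧
    ∀ x : Euc N, x ≠ 0 → besselKernel N β x ≤ C * ‖x‖ ^ (β - N) := by
  refine ⟨∫ u in Ioi (0 : ℝ), Real.exp (-(Real.pi / u)) * u ^ ((β - N) / 2 - 1), ?_, fun x hx => ?_⟩
  · refine setIntegral_nonneg measurableSet_Ioi fun u hu => ?_
    have : (0 : ℝ) < u := hu
    positivity
  have hx' : 0 < ‖x‖ := norm_pos_iff.2 hx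
  set b := ‖x‖ ^ 2 with hb
  have hb0 : 0 < b := by positivity
  have hI := integrableOn_exp_neg_div_mul_rpow hβN hβ
  have hbase : b * b ^ ((β - N) / 2 - 1) = ‖x‖ ^ (β - N) := by
    rw [Real.rpow_sub_one hb0.ne', mul_div_cancel₀ _ hb0.ne', hb, ← Real.rpow_natCast,
      ← Real.rpow_mul hx'.le]
    congr 1
    push_cast
    ring
  have hscale : IntegrableOn (fun t : ℝ => Real.exp (-(Real.pi / (b⁻¹ * t))) *
      (b⁻¹ * t) ^ ((β - N) / 2 - 1)) (Ioi 0) := by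
    have := (integrableOn_Ioi_comp_mul_left_iff (fun u : ℝ => Real.exp (-(Real.pi / u)) *
      u ^ ((β - N) / 2 - 1)) 0 (inv_pos.2 hb0)).2
    simp only [mul_zero] at this
    exact this hI
  have h := setIntegral_mono_on (integrableOn_besselKernel_integrand hβ hx)
    (hscale.const_mul (b ^ ((β - N) / 2 - 1))) measurableSet_Ioi fun t ht => (by
      have ht0 : (0 : ℝ) < t := ht
      have e1 : b ^ ((β - N) / 2 - 1) * (b⁻¹ * t) ^ ((β - N) / 2 - 1) = t ^ ((β - N) / 2) / t := by
        rw [← Real.mul_rpow hb0.le (by positivity), mul_inv_cancel_left₀ hb0.ne',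
          Real.rpow_sub_one ht0.ne']
      have e2 : Real.pi / (b⁻¹ * t) = Real.pi * b / t := by field_simp
      rw [mul_left_comm, e1, e2, mul_div_assoc]
      gcongr
      have : 0 < t / (4 * Real.pi) := by positivity
      linarith)
  refine h.trans (le_of_eq ?_)
  rw [integral_const_mul, integral_comp_mul_left_Ioi (fun u : ℝ => Real.exp (-(Real.pi / u)) *
      u ^ ((β - N) / 2 - 1)) 0 (inv_pos.2 hb0), mul_zero, inv_inv, smul_eq_mul, ← hbase]
  ring

lemma exists_le_besselKernel (hβ : 0 < β) (hβN : β < N) (A : ℝ) : ∃ c : ℝ, 0 < c ∧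
    ∀ x : Euc N, x ≠ 0 → ‖x‖ ≤ A → c * ‖x‖ ^ (β - N) ≤ besselKernel N β x := by
  refine ⟨Real.exp (-Real.pi - 2 * A ^ 2 / (4 * Real.pi)) * 2 ^ ((β - N) / 2 - 1), by positivity,
    fun x hx hxA => ?_⟩
  have hx' : 0 < ‖x‖ := norm_pos_iff.2 hx
  set b := ‖x‖ ^ 2 with hb
  have hb0 : 0 < b := by positivity
  have hbA : b ≤ A ^ 2 := by rw [hb]; gcongr
  have hbase : b * b ^ ((β - N) / 2 - 1) = ‖x‖ ^ (β - N) := by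
    rw [Real.rpow_sub_one hb0.ne', mul_div_cancel₀ _ hb0.ne', hb, ← Real.rpow_natCast,
      ← Real.rpow_mul hx'.le]
    congr 1
    push_cast
    ring
  have hI := integrableOn_besselKernel_integrand hβ hx
  have hsub : Icc b (2 * b) ⊆ Ioi 0 := fun t ht => hb0.trans_le ht.1
  calc _ = ∫ _ in Icc b (2 * b), Real.exp (-Real.pi - 2 * A ^ 2 / (4 * Real.pi)) *
        (2 * b) ^ ((β - N) / 2 - 1) := by
        rw [setIntegral_const, Measure.real, Real.volume_Icc, ENNReal.toReal_ofReal (by linarith),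
          Real.mul_rpow (by norm_num) hb0.le, ← hbase, smul_eq_mul]
        ring
    _ ≤ ∫ t in Icc b (2 * b), Real.exp (-(Real.pi * ‖x‖ ^ 2 / t) - t / (4 * Real.pi)) *
          t ^ ((β - (N : ℝ)) / 2) / t := by
        refine setIntegral_mono_on (integrableOn_const (by simp)) (hI.mono_set hsub)
          measurableSet_Icc fun t ht => ?_
        have ht0 : 0 < t := hsub ht
        rw [mul_div_assoc (Real.exp _) _ t, ← Real.rpow_sub_one ht0.ne']
        have h1 : Real.pi * b / t ≤ Real.pi := by
          rw [div_le_iff₀ ht0]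
          exact mul_le_mul_of_nonneg_left ht.1 Real.pi_pos.le
        have h2 : t / (4 * Real.pi) ≤ 2 * A ^ 2 / (4 * Real.pi) := by
          gcongr
          linarith [ht.2]
        have h3 : (2 * b) ^ ((β - N) / 2 - 1) ≤ t ^ ((β - N) / 2 - 1) :=
          Real.rpow_le_rpow_of_nonpos ht0 ht.2 (by linarith)
        gcongr
    _ ≤ _ := by
        refine setIntegral_mono_set hI ?_ hsub.eventuallyLE
        filter_upwards [ae_restrict_mem measurableSet_Ioi] with t ht
        exact besselKernel_integrand_nonneg x ht

/-- The Bessel kernel is bounded by the dyadic truncated Riesz kernel plus an integrable tail. -/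
lemma exists_ofReal_besselKernel_le (hβ : 0 < β) (hβN : β < N) {T : ℝ} (hT : 0 < T) :
    ∃ C : ℝ≥0∞, C ≠ ∞ ∧ ∀ z : Euc N, ENNReal.ofReal (besselKernel N β z) ≤
      C * ((∑' k : ℕ, {z : Euc N | ‖z‖ < T / 2 ^ k}.indicator
        (fun _ => ENNReal.ofReal ((T / 2 ^ k) ^ (β - N))) z) +
        ENNReal.ofReal ((1 + ‖z‖) ^ (-(2 * N : ℝ)))) := by
  obtain ⟨C₁, hC₁, hdecay⟩ := exists_besselKernel_le_of_decay (N := N) hβ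
  obtain ⟨C₂, hC₂, hsing⟩ := exists_besselKernel_le_of_singular (N := N) hβ hβN
  set D₁ := C₁ * (T⁻¹ + 1) ^ (2 * N : ℝ) with hD₁
  set D₂ := C₂ * 2 ^ ((N : ℝ) - β) with hD₂
  have hD₁0 : 0 ≤ D₁ := by positivity
  have hD₂0 : 0 ≤ D₂ := by positivity
  refine ⟨ENNReal.ofReal (besselKernel N β (0 : Euc N)) + ENNReal.ofReal D₁ + ENNReal.ofReal D₂,
    by finiteness, fun z => ?_⟩
  rcases eq_or_ne z 0 with rfl | hz
  · refine le_mul_of_le_of_one_le (by rw [add_assoc]; exact le_self_add) ?_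
    simp
  have hz' : 0 < ‖z‖ := norm_pos_iff.2 hz
  rcases lt_or_ge ‖z‖ T with hzT | hzT
  · obtain ⟨k, hk⟩ := mem_iUnion.1 (truncation_subset_iUnion_Ico (T := T) (show ‖z‖ ∈ _ from
      ⟨hz', (ENNReal.ofReal_lt_ofReal_iff hT).2 hzT⟩))
    refine mul_le_mul' (a := ENNReal.ofReal D₂) (c := ENNReal.ofReal ((T / 2 ^ k) ^ (β - N)))
      le_add_self (le_add_right ?_) |>.trans' ?_
    · refine le_trans (le_of_eq ?_) (ENNReal.le_tsum k)
      rw [indicator_of_mem]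
      exact hk.2
    · rw [← ENNReal.ofReal_mul hD₂0]
      refine ENNReal.ofReal_le_ofReal ((hsing z hz).trans ?_)
      rw [hD₂, mul_assoc]
      gcongr
      have h1 : ‖z‖ ^ (β - N) ≤ (T / 2 ^ (k + 1)) ^ (β - N) :=
        Real.rpow_le_rpow_of_nonpos (by positivity) hk.1 (by linarith)
      refine h1.trans (le_of_eq ?_)
      rw [pow_succ, ← div_div, div_eq_inv_mul _ (2 : ℝ),
        Real.mul_rpow (by norm_num) (by positivity),
        Real.inv_rpow (by norm_num), ← Real.rpow_neg (by norm_num), neg_sub]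
  · refine mul_le_mul' (a := ENNReal.ofReal D₁) (c := ENNReal.ofReal ((1 + ‖z‖) ^ (-(2 * N : ℝ))))
      (le_add_right le_add_self) le_add_self |>.trans' ?_
    rw [← ENNReal.ofReal_mul hD₁0]
    refine ENNReal.ofReal_le_ofReal ((hdecay z hz).trans ?_)
    rw [hD₁, mul_assoc]
    gcongr
    have h1 : 1 + ‖z‖ ≤ (T⁻¹ + 1) * ‖z‖ := by
      have : 1 ≤ T⁻¹ * ‖z‖ := by rw [inv_mul_eq_div, one_le_div hT]; exact hzT
      linarith
    have h2 : ((T⁻¹ + 1) * ‖z‖) ^ (-(2 * N : ℝ)) ≤ (1 + ‖z‖) ^ (-(2 * N : ℝ)) :=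
      Real.rpow_le_rpow_of_nonpos (by positivity) h1 (by simp)
    refine le_trans (le_of_eq ?_) (mul_le_mul_of_nonneg_left h2 (by positivity))
    rw [Real.mul_rpow (by positivity) hz'.le, ← mul_assoc, ← Real.rpow_add (by positivity)]
    simp

lemma exists_ofReal_rpow_le_besselKernel (hβ : 0 < β) (hβN : β < N) (A : ℝ) :
    ∃ C : ℝ≥0∞, C ≠ ∞ ∧ ∀ (z : Euc N) (ρ : ℝ), z ≠ 0 → ‖z‖ < ρ → ρ ≤ A →
      ENNReal.ofReal (ρ ^ (β - N)) ≤ C * ENNReal.ofReal (besselKernel N β z) := by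
  obtain ⟨c, hc, h⟩ := exists_le_besselKernel (N := N) hβ hβN A
  refine ⟨ENNReal.ofReal c⁻¹, by finiteness, fun z ρ hz hzρ hρA => ?_⟩
  have hz' : 0 < ‖z‖ := norm_pos_iff.2 hz
  rw [← ENNReal.ofReal_mul (by positivity)]
  refine ENNReal.ofReal_le_ofReal ?_
  have h1 := h z hz (by linarith)
  have h2 : ρ ^ (β - N) ≤ ‖z‖ ^ (β - N) := Real.rpow_le_rpow_of_nonpos hz' hzρ.le (by linarith)
  rw [inv_mul_eq_div, le_div_iff₀ hc, mul_comm]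
  exact (mul_le_mul_of_nonneg_left h2 hc.le).trans h1

end Bessel

/-! ### Bessel potentials -/

section BesselPotential

variable {N : ℕ} {β : ℝ}

/-- The Bessel potential `G_β * μ` of a measure. -/
def besselPot (β : ℝ) (μ : Measure (Euc N)) (x : Euc N) : ℝ≥0∞ :=
  ∫⁻ y, ENNReal.ofReal (besselKernel N β (x - y)) ∂μ

/-- The Bessel potential `G_β * f` of a function. -/
def besselFun (β : ℝ) (f : Euc N → ℝ≥0∞) (x : Euc N) : ℝ≥0∞ :=
  ∫⁻ y, ENNReal.ofReal (besselKernel N β (x - y)) * f y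

lemma measurable_besselKernel_sub (β : ℝ) :
    Measurable fun w : Euc N × Euc N => ENNReal.ofReal (besselKernel N β (w.1 - w.2)) :=
  ((measurable_besselKernel N β).comp (measurable_fst.sub measurable_snd)).ennreal_ofReal

lemma measurable_besselPot (μ : Measure (Euc N)) [SFinite μ] : Measurable (besselPot β μ) :=
  (measurable_besselKernel_sub β).lintegral_prod_right'

lemma measurable_besselFun {f : Euc N → ℝ≥0∞} (hf : Measurable f) :
    Measurable (besselFun β f) :=
  ((measurable_besselKernel_sub β).mul (hf.comp measurable_snd)).lintegral_prod_right'

lemma lintegral_besselFun_eq (μ : Measure (Euc N)) [SFinite μ] {f : Euc N → ℝ≥0∞}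
    (hf : Measurable f) : ∫⁻ x, besselFun β f x ∂μ = ∫⁻ y, besselPot β μ y * f y := by
  have hfm : Measurable fun w : Euc N × Euc N =>
      ENNReal.ofReal (besselKernel N β (w.1 - w.2)) * f w.2 :=
    (measurable_besselKernel_sub β).mul (hf.comp measurable_snd)
  unfold besselFun besselPot
  rw [lintegral_lintegral_swap
    (f := fun x y => ENNReal.ofReal (besselKernel N β (x - y)) * f y) hfm.aemeasurable]
  refine lintegral_congr fun y => ?_
  have hm : Measurable fun x => ENNReal.ofReal (besselKernel N β (x - y)) :=
    ((measurable_besselKernel N β).comp (measurable_id.sub_const y)).ennreal_ofReal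
  rw [lintegral_mul_const _ hm]
  congr 1
  refine lintegral_congr fun x => ?_
  rw [← besselKernel_neg, neg_sub]

lemma lintegral_one_add_norm_ne_top (hN : 0 < N) :
    ∫⁻ z : Euc N, ENNReal.ofReal ((1 + ‖z‖) ^ (-(2 * N : ℝ))) ≠ ∞ := by
  refine (finite_integral_one_add_norm ?_).ne
  rw [finrank_euclideanSpace_fin]
  have : (0 : ℝ) < N := by exact_mod_cast hN
  linarith

lemma ballDensity_eq_lintegral (T : ℝ) (μ : Measure (Euc N)) (k : ℕ) (x : Euc N) :
    ballDensity β T μ k x = ∫⁻ y, {z : Euc N | ‖z‖ < T / 2 ^ k}.indicator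
        (fun _ => ENNReal.ofReal ((T / 2 ^ k) ^ (β - N))) (x - y) ∂μ := by
  rw [ballDensity, mul_comm, ← lintegral_indicator_const measurableSet_ball]
  refine lintegral_congr fun y => ?_
  by_cases hy : y ∈ ball x (T / 2 ^ k)
  · rw [indicator_of_mem hy, indicator_of_mem]
    rwa [mem_ball', dist_eq_norm] at hy
  · rw [indicator_of_notMem hy, indicator_of_notMem]
    rwa [mem_ball', dist_eq_norm] at hy

lemma exists_besselPot_le (hβ : 0 < β) (hβN : β < N) {T : ℝ} (hT : 0 < T) :
    ∃ C : ℝ≥0∞, C ≠ ∞ ∧ ∀ (μ : Measure (Euc N)) (x : Euc N), besselPot β μ x ≤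
      C * ((∑' k : ℕ, ballDensity β T μ k x) +
        ∫⁻ y, ENNReal.ofReal ((1 + ‖x - y‖) ^ (-(2 * N : ℝ))) ∂μ) := by
  obtain ⟨C, hC, h⟩ := exists_ofReal_besselKernel_le (N := N) hβ hβN hT
  refine ⟨C, hC, fun μ x => ?_⟩
  have hs (k : ℕ) : Measurable fun y => {z : Euc N | ‖z‖ < T / 2 ^ k}.indicator
      (fun _ => ENNReal.ofReal ((T / 2 ^ k) ^ (β - N))) (x - y) :=
    (measurable_const.indicator (measurableSet_lt (by fun_prop) (by fun_prop))).comp (by fun_prop)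
  calc besselPot β μ x ≤ ∫⁻ y, C * ((∑' k : ℕ, {z : Euc N | ‖z‖ < T / 2 ^ k}.indicator
        (fun _ => ENNReal.ofReal ((T / 2 ^ k) ^ (β - N))) (x - y)) +
        ENNReal.ofReal ((1 + ‖x - y‖) ^ (-(2 * N : ℝ)))) ∂μ := lintegral_mono fun y => h (x - y)
    _ = _ := by
      rw [lintegral_const_mul' _ _ hC, lintegral_add_left (Measurable.tsum hs),
        lintegral_tsum fun k => (hs k).aemeasurable]
      simp only [ballDensity_eq_lintegral]

lemma lintegral_lintegral_sub_eq {μ : Measure (Euc N)} [SFinite μ] {ψ : Euc N → ℝ≥0∞}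
    (hψ : Measurable ψ) : ∫⁻ x, ∫⁻ y, ψ (x - y) ∂μ = (∫⁻ z, ψ z) * μ univ := by
  have hm : Measurable fun w : Euc N × Euc N => ψ (w.1 - w.2) :=
    hψ.comp (measurable_fst.sub measurable_snd)
  rw [lintegral_lintegral_swap (f := fun x y => ψ (x - y)) hm.aemeasurable]
  simp only [lintegral_sub_right_eq_self ψ, lintegral_const]

lemma lintegral_besselKernel_ne_top (hβ : 0 < β) (hβN : β < N) :
    ∫⁻ z : Euc N, ENNReal.ofReal (besselKernel N β z) ≠ ∞ := by
  have hN : 0 < N := by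
    have : (0 : ℝ) < N := hβ.trans hβN
    exact_mod_cast this
  obtain ⟨C, hC, h⟩ := exists_ofReal_besselKernel_le (N := N) hβ hβN one_pos
  have hs (k : ℕ) : MeasurableSet {z : Euc N | ‖z‖ < 1 / 2 ^ k} :=
    measurableSet_lt (by fun_prop) (by fun_prop)
  refine ne_top_of_le_ne_top ?_ (lintegral_mono h)
  rw [lintegral_const_mul' _ _ hC, lintegral_add_left
    (Measurable.tsum fun k => measurable_const.indicator (hs k)),
    lintegral_tsum fun k => (measurable_const.indicator (hs k)).aemeasurable]
  refine ENNReal.mul_ne_top hC (ENNReal.add_ne_top.2 ⟨?_, lintegral_one_add_norm_ne_top hN⟩)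
  have hterm (k : ℕ) : ∫⁻ z : Euc N, {z : Euc N | ‖z‖ < 1 / 2 ^ k}.indicator
      (fun _ => ENNReal.ofReal ((1 / 2 ^ k) ^ (β - N))) z =
      ENNReal.ofReal (2 ^ (-β)) ^ k * volume (ball (0 : Euc N) 1) := by
    have hk : (0 : ℝ) < 1 / 2 ^ k := by positivity
    have hball : {z : Euc N | ‖z‖ < 1 / 2 ^ k} = ball 0 (1 / 2 ^ k) := by
      ext z; simp
    rw [lintegral_indicator_const (hs k), hball, volume_ball_eq _ hk, ← mul_assoc,
      ← ENNReal.ofReal_mul (by positivity), ← ENNReal.ofReal_pow (by positivity)]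
    congr 2
    rw [← Real.rpow_natCast (1 / 2 ^ k) N, ← Real.rpow_add hk, sub_add_cancel, one_div,
      Real.inv_rpow (by positivity), ← Real.rpow_neg (by positivity), ← Real.rpow_natCast,
      ← Real.rpow_natCast, ← Real.rpow_mul (by norm_num), ← Real.rpow_mul (by norm_num), mul_comm]
  simp only [hterm]
  rw [ENNReal.tsum_mul_right, ENNReal.tsum_geometric]
  refine ENNReal.mul_ne_top ?_ measure_ball_lt_top.ne
  have hε1 : ENNReal.ofReal (2 ^ (-β)) < 1 := by
    rw [← ENNReal.ofReal_one, ENNReal.ofReal_lt_ofReal_iff one_pos]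
    exact Real.rpow_lt_one_of_one_lt_of_neg (by norm_num) (by linarith)
  simpa [tsub_eq_zero_iff_le] using hε1

lemma exists_lintegral_besselPot_rpow_le (hβ : 0 < β) (hβN : β < N) {T m : ℝ} (hT : 0 < T)
    (hm : 1 ≤ m) (x0 : Euc N) (L : ℝ) :
    ∃ C : ℝ≥0∞, C ≠ ∞ ∧ ∀ (μ : Measure (Euc N)) [IsFiniteMeasure μ], μ (ball x0 L)ᶜ = 0 →
      ∫⁻ x, besselPot β μ x ^ m ≤
        C * ((∫⁻ x, (⨆ k, ballDensity β T μ k x) ^ m) + μ univ ^ m) := by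
  have hN : 0 < N := by
    have : (0 : ℝ) < N := hβ.trans hβN
    exact_mod_cast this
  have hm0 : 0 < m := by linarith
  obtain ⟨C₁, hC₁, h₁⟩ := exists_besselPot_le (N := N) hβ hβN hT
  obtain ⟨C₂, hC₂, h₂⟩ := lintegral_tsum_ballDensity_rpow_le hβ hβN.le hT one_pos hm0 x0 L
  set ψ : Euc N → ℝ≥0∞ := fun z => ENNReal.ofReal ((1 + ‖z‖) ^ (-(2 * N : ℝ))) with hψ
  have hψm : Measurable ψ := by fun_prop
  have hψ1 (z : Euc N) : ψ z ≤ 1 := by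
    rw [hψ, ← ENNReal.ofReal_one]
    refine ENNReal.ofReal_le_ofReal (Real.rpow_le_one_of_one_le_of_nonpos ?_ (by simp))
    linarith [norm_nonneg z]
  have hψt : ∫⁻ z, ψ z ≠ ∞ := lintegral_one_add_norm_ne_top hN
  have hCm : C₁ ^ m ≠ ∞ := ENNReal.rpow_ne_top_of_nonneg hm0.le hC₁
  have h2m : (2 : ℝ≥0∞) ^ m ≠ ∞ := ENNReal.rpow_ne_top_of_nonneg hm0.le (by simp)
  refine ⟨C₁ ^ m * (2 ^ m * (C₂ + ∫⁻ z, ψ z)), by finiteness, fun μ _ hsupp => ?_⟩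
  have hψμ : Measurable fun x => ∫⁻ y, ψ (x - y) ∂μ :=
    (hψm.comp (measurable_fst.sub measurable_snd)).lintegral_prod_right'
  have hle (x : Euc N) : (∫⁻ y, ψ (x - y) ∂μ) ^ m ≤ μ univ ^ (m - 1) * ∫⁻ y, ψ (x - y) ∂μ := by
    rw [rpow_eq_mul_rpow_sub_one _ hm, mul_comm]
    refine mul_le_mul_left (ENNReal.rpow_le_rpow ?_ (by linarith)) _
    calc _ ≤ ∫⁻ y, 1 ∂μ := lintegral_mono fun y => hψ1 _
      _ = _ := by simp
  have htail : ∫⁻ x, (∫⁻ y, ψ (x - y) ∂μ) ^ m ≤ (∫⁻ z, ψ z) * μ univ ^ m := by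
    refine (lintegral_mono hle).trans (le_of_eq ?_)
    rw [lintegral_const_mul _ hψμ, lintegral_lintegral_sub_eq hψm,
      rpow_eq_mul_rpow_sub_one (μ univ) hm]
    ring
  have hsum := h₂ μ hsupp
  simp only [ENNReal.rpow_one, div_one] at hsum
  calc ∫⁻ x, besselPot β μ x ^ m
      ≤ ∫⁻ x, C₁ ^ m * (2 ^ m * ((∑' k, ballDensity β T μ k x) ^ m +
          (∫⁻ y, ψ (x - y) ∂μ) ^ m)) := by
        refine lintegral_mono fun x => ?_
        refine (ENNReal.rpow_le_rpow (h₁ μ x) hm0.le).trans ?_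
        rw [ENNReal.mul_rpow_of_nonneg _ _ hm0.le]
        exact mul_le_mul_right (add_rpow_le_two_rpow_mul _ _ hm0.le) _
    _ = C₁ ^ m * (2 ^ m * ((∫⁻ x, (∑' k, ballDensity β T μ k x) ^ m) +
          ∫⁻ x, (∫⁻ y, ψ (x - y) ∂μ) ^ m)) := by
        rw [lintegral_const_mul' _ _ hCm, lintegral_const_mul' _ _ h2m,
          lintegral_add_right _ (hψμ.pow_const m)]
    _ ≤ C₁ ^ m * (2 ^ m * (C₂ * ((∫⁻ x, (⨆ k, ballDensity β T μ k x) ^ m) + μ univ ^ m) +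
          (∫⁻ z, ψ z) * ((∫⁻ x, (⨆ k, ballDensity β T μ k x) ^ m) + μ univ ^ m))) := by
        gcongr
        exact htail.trans (mul_le_mul_right le_add_self _)
    _ = _ := by ring

lemma ae_measure_singleton_eq_zero (hN : 0 < N) (μ : Measure (Euc N)) [SFinite μ] :
    ∀ᵐ x : Euc N, μ {x} = 0 := by
  have : Nonempty (Fin N) := ⟨⟨0, hN⟩⟩
  have hs : MeasurableSet {w : Euc N × Euc N | w.1 = w.2} :=
    measurableSet_eq_fun measurable_fst measurable_snd
  have h : ((volume : Measure (Euc N)).prod μ) {w : Euc N × Euc N | w.1 = w.2} = 0 := by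
    rw [Measure.prod_apply_symm hs, lintegral_eq_zero_iff (measurable_measure_prodMk_right hs)]
    refine Eventually.of_forall fun y => ?_
    have : (fun x : Euc N => (x, y)) ⁻¹' {w : Euc N × Euc N | w.1 = w.2} = {y} := by ext x; simp
    simp [this]
  filter_upwards [(Measure.measure_prod_null hs).1 h] with x hx
  have : Prod.mk x ⁻¹' {w : Euc N × Euc N | w.1 = w.2} = {x} := by
    ext y; simp [eq_comm]
  rwa [this] at hx

lemma exists_ballDensity_le_besselPot (hβ : 0 < β) (hβN : β < N) {T : ℝ} (hT : 0 < T) :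
    ∃ C : ℝ≥0∞, C ≠ ∞ ∧ ∀ (μ : Measure (Euc N)) (x : Euc N), μ {x} = 0 → ∀ k,
      ballDensity β T μ k x ≤ C * besselPot β μ x := by
  obtain ⟨C, hC, h⟩ := exists_ofReal_rpow_le_besselKernel (N := N) hβ hβN T
  refine ⟨C, hC, fun μ x hx k => ?_⟩
  rw [ballDensity_eq_lintegral, besselPot, ← lintegral_const_mul' _ _ hC]
  have hae : ∀ᵐ y ∂μ, y ≠ x := by
    rw [ae_iff]; simpa using hx
  refine lintegral_mono_ae ?_
  filter_upwards [hae] with y hy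
  refine indicator_apply_le' (fun hz => ?_) fun _ => zero_le
  exact h _ _ (sub_ne_zero.2 hy.symm) hz
    (div_le_self hT.le (one_le_pow₀ one_le_two))

end BesselPotential

/-! ### Capacitary testing inequalities -/

section Capacity

variable {N : ℕ} {β : ℝ}

lemma besselCap_le_of_lt_besselFun {s : ℝ} (hs : 0 < s) {f : Euc N → ℝ≥0∞} (hf : Measurable f)
    {t : ℝ≥0∞} (ht : t ≠ 0) (ht' : t ≠ ∞) {K : Set (Euc N)}
    (hK : ∀ x ∈ K, t ≤ besselFun β f x) :
    besselCap N β s K ≤ (∫⁻ x, f x ^ s) / t ^ s := by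
  have hti : t⁻¹ ≠ ∞ := ENNReal.inv_ne_top.2 ht
  calc besselCap N β s K ≤ ∫⁻ x, (t⁻¹ * f x) ^ s := by
        refine (iInf_le _ fun x => t⁻¹ * f x).trans ((iInf_le _ (hf.const_mul _)).trans
          (iInf_le _ fun x hx => ?_))
        calc (1 : ℝ≥0∞) = t⁻¹ * t := (ENNReal.inv_mul_cancel ht ht').symm
          _ ≤ t⁻¹ * besselFun β f x := mul_le_mul_right (hK x hx) _
          _ = _ := by
            rw [besselFun, ← lintegral_const_mul' _ _ hti]
            exact lintegral_congr fun y => mul_left_comm _ _ _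
    _ = _ := by
        simp only [ENNReal.mul_rpow_of_nonneg _ _ hs.le]
        rw [lintegral_const_mul' _ _ (ENNReal.rpow_ne_top_of_nonneg hs.le hti), ENNReal.inv_rpow,
          mul_comm, div_eq_mul_inv]

lemma exists_lintegral_besselFun_rpow_le (β : ℝ) {s δ : ℝ} (hδ : 0 < δ) (hδs : δ < s) {C : ℝ≥0∞}
    (hC : C ≠ ∞) :
    ∃ C' : ℝ≥0∞, C' ≠ ∞ ∧ ∀ (σ : Measure (Euc N)) [IsFiniteMeasure σ],
      (∀ K, IsCompact K → σ K ≤ C * besselCap N β s K) →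
      ∀ f : Euc N → ℝ≥0∞, Measurable f → ∫⁻ x, f x ^ s ≠ ∞ →
        ∫⁻ x, besselFun β f x ^ δ ∂σ ≤
          C' * (σ univ ^ (1 - δ / s) * (∫⁻ x, f x ^ s) ^ (δ / s)) := by
  have hs : 0 < s := hδ.trans hδs
  have hδs' : 0 ≤ δ / s := by positivity
  obtain ⟨C₁, hC₁, h⟩ := lintegral_rpow_le_of_weak (X := Euc N) hδ hδs
  refine ⟨C₁ * C ^ (δ / s), ENNReal.mul_ne_top hC₁ (ENNReal.rpow_ne_top_of_nonneg hδs' hC),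
    fun σ _ hσ f hf hft => ?_⟩
  have hG : Measurable (besselFun β f) := measurable_besselFun hf
  refine (h σ (besselFun β f) hG (C * ∫⁻ x, f x ^ s) (ENNReal.mul_ne_top hC hft)
    fun t ht ht' => ?_).trans (le_of_eq ?_)
  · rw [(measurableSet_lt measurable_const hG).measure_eq_iSup_isCompact]
    refine iSup_le fun K => iSup_le fun hK => iSup_le fun hKc => (hσ K hKc).trans ?_
    rw [mul_div_assoc]
    exact mul_le_mul_right
      (besselCap_le_of_lt_besselFun hs hf ht ht' fun x hx => (hK hx).le) _
  · rw [ENNReal.mul_rpow_of_nonneg _ _ hδs']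
    ring

lemma exists_measure_le_besselCap (β : ℝ) {m s : ℝ} (hms : m.HolderConjugate s) {C : ℝ≥0∞}
    (hC : C ≠ ∞) :
    ∃ C' : ℝ≥0∞, C' ≠ ∞ ∧ ∀ (μ : Measure (Euc N)) [IsFiniteMeasure μ] (E : Set (Euc N)),
      MeasurableSet E → ∫⁻ x, besselPot β (μ.restrict E) x ^ m ≤ C * μ E →
        μ E ≤ C' * besselCap N β s E := by
  have hm := hms.pos
  have hs := hms.symm.pos
  have hCs : (C ^ (1 / m)) ^ s ≠ ∞ := by finiteness
  refine ⟨(C ^ (1 / m)) ^ s + 1, by finiteness, fun μ _ E hE hμ => ?_⟩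
  rw [← ENNReal.div_le_iff' (by simp) (by finiteness)]
  refine le_iInf fun f => le_iInf fun hf => le_iInf fun hfE => ?_
  rw [ENNReal.div_le_iff' (by simp) (by finiteness)]
  refine le_trans ?_ (mul_le_mul_left (le_self_add (a := (C ^ (1 / m)) ^ s)) _)
  have hG : Measurable (besselPot β (μ.restrict E)) := measurable_besselPot _
  have key : μ E ≤ (C ^ (1 / m) * (∫⁻ x, f x ^ s) ^ (1 / s)) * μ E ^ (1 - 1 / s) := by
    calc μ E = ∫⁻ x in E, 1 ∂μ := by simp
      _ ≤ ∫⁻ x in E, besselFun β f x ∂μ := setLIntegral_mono' hE hfE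
      _ = ∫⁻ y, besselPot β (μ.restrict E) y * f y := lintegral_besselFun_eq _ hf
      _ ≤ (∫⁻ y, besselPot β (μ.restrict E) y ^ m) ^ (1 / m) * (∫⁻ y, f y ^ s) ^ (1 / s) :=
          ENNReal.lintegral_mul_le_Lp_mul_Lq volume hms hG.aemeasurable hf.aemeasurable
      _ ≤ (C * μ E) ^ (1 / m) * (∫⁻ y, f y ^ s) ^ (1 / s) := by gcongr
      _ = _ := by
          rw [ENNReal.mul_rpow_of_nonneg _ _ (by positivity), one_div s, hms.symm.one_sub_inv,
            one_div m]
          ring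
  refine (le_rpow_of_le_mul_rpow (by positivity) (measure_ne_top μ E) key).trans (le_of_eq ?_)
  rw [one_div_one_div, ENNReal.mul_rpow_of_nonneg _ _ hs.le, ← ENNReal.rpow_mul (∫⁻ x, f x ^ s),
    one_div_mul_cancel hs.ne', ENNReal.rpow_one]

end Capacity

/-! ### Maximal densities over finitely many scales -/

section MaxDensity

variable {N : ℕ} {β T : ℝ}

/-- The largest of the densities at the scales `T, T / 2, …, T / 2 ^ n`. -/
def maxDensity (β T : ℝ) (μ : Measure (Euc N)) (n : ℕ) (x : Euc N) : ℝ≥0∞ :=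
  partialSups (fun k => ballDensity β T μ k x) n

lemma measurable_maxDensity (β T : ℝ) (μ : Measure (Euc N)) [SFinite μ] (n : ℕ) :
    Measurable (maxDensity β T μ n) := by
  unfold maxDensity
  induction n with
  | zero => simpa using measurable_ballDensity β T μ 0
  | succ n ih =>
    simp only [partialSups_add_one]
    exact ih.sup (measurable_ballDensity β T μ (n + 1))

lemma lintegral_maxDensity_rpow_ne_top (hT : 0 < T) {m : ℝ} (hm : 0 < m) {μ : Measure (Euc N)}
    [IsFiniteMeasure μ] {x0 : Euc N} {L : ℝ} (hsupp : μ (ball x0 L)ᶜ = 0) (n : ℕ) :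
    ∫⁻ x, maxDensity β T μ n x ^ m ≠ ∞ := by
  set c : ℝ≥0∞ := partialSups (fun k => μ univ * ENNReal.ofReal ((T / 2 ^ k) ^ (β - N))) n with hc
  have hct : c ≠ ∞ := by
    obtain ⟨k, -, hk⟩ := exists_partialSups_eq
      (fun k => μ univ * ENNReal.ofReal ((T / 2 ^ k) ^ (β - N))) n
    rw [hc, hk]
    finiteness
  have hle (x : Euc N) : maxDensity β T μ n x ^ m ≤
      (ball x0 (L + T)).indicator (fun _ => c ^ m) x := by
    by_cases hx : x ∈ ball x0 (L + T)
    · rw [indicator_of_mem hx]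
      refine ENNReal.rpow_le_rpow (partialSups_le _ _ _ fun k hk => ?_) hm.le
      refine le_trans ?_ (le_partialSups_of_le _ hk)
      exact mul_le_mul_left (measure_mono (subset_univ _)) _
    · have : maxDensity β T μ n x = 0 := by
        refine le_antisymm (partialSups_le _ _ _ fun k _ => ?_) zero_le
        rw [ballDensity]
        by_contra h
        have h0 : μ (ball x (T / 2 ^ k)) ≠ 0 := fun h0 => h (by simp [h0])
        have hd := dist_lt_of_measure_ball_ne_zero hsupp h0
        have hTk : T / 2 ^ k ≤ T := div_le_self hT.le (one_le_pow₀ one_le_two)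
        exact hx (mem_ball.2 (hd.trans_le (by linarith)))
      rw [this, ENNReal.zero_rpow_of_pos hm]
      exact zero_le
  refine ne_top_of_le_ne_top ?_ (lintegral_mono hle)
  rw [lintegral_indicator_const measurableSet_ball]
  exact ENNReal.mul_ne_top (ENNReal.rpow_ne_top_of_nonneg hm.le hct) measure_ball_lt_top.ne

lemma lintegral_iSup_ballDensity_rpow_le {m : ℝ} (hm : 0 < m) {μ : Measure (Euc N)} [SFinite μ]
    {A : ℝ≥0∞} (h : ∀ n, ∫⁻ x, maxDensity β T μ n x ^ m ≤ A) :
    ∫⁻ x, (⨆ k, ballDensity β T μ k x) ^ m ≤ A := by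
  have hsup (x : Euc N) : (⨆ k, ballDensity β T μ k x) ^ m = ⨆ n, maxDensity β T μ n x ^ m := by
    rw [← iSup_partialSups_eq]
    exact (ENNReal.orderIsoRpow m hm).map_iSup _
  simp only [hsup]
  rw [lintegral_iSup (fun n => (measurable_maxDensity β T μ n).pow_const m)
    fun n n' hn x => ENNReal.rpow_le_rpow ((partialSups _).mono hn) hm.le]
  exact iSup_le h

lemma exists_lintegral_iSup_ballDensity_rpow_le_of_le_besselCap (hβ : 0 < β) (hβN : β < N)
    (hT : 0 < T) {m s : ℝ} (hms : m.HolderConjugate s) {C : ℝ≥0∞} (hC : C ≠ ∞) :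
    ∃ C' : ℝ≥0∞, C' ≠ ∞ ∧ ∀ (μ : Measure (Euc N)) [IsFiniteMeasure μ] (x0 : Euc N) (L : ℝ),
      μ (ball x0 L)ᶜ = 0 → (∀ K, IsCompact K → μ K ≤ C * besselCap N β s K) →
        ∫⁻ x, (⨆ k, ballDensity β T μ k x) ^ m ≤ C' * μ univ := by
  have hm := hms.pos
  have hs := hms.symm.pos
  have hN : 0 < N := by
    have : (0 : ℝ) < N := hβ.trans hβN
    exact_mod_cast this
  obtain ⟨C₁, hC₁, h₁⟩ := exists_ballDensity_le_besselPot (N := N) hβ hβN hT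
  obtain ⟨C₂, hC₂, h₂⟩ := exists_lintegral_besselFun_rpow_le (N := N) β one_pos hms.symm.lt hC
  refine ⟨(C₁ * C₂) ^ m, by finiteness, fun μ _ x0 L hsupp hμ => ?_⟩
  refine lintegral_iSup_ballDensity_rpow_le hm fun n => ?_
  set f : Euc N → ℝ≥0∞ := fun x => maxDensity β T μ n x ^ (m - 1) with hf
  have hfm : Measurable f := (measurable_maxDensity β T μ n).pow_const _
  have hfs : ∫⁻ x, f x ^ s = ∫⁻ x, maxDensity β T μ n x ^ m := by
    refine lintegral_congr fun x => ?_
    rw [hf, ← ENNReal.rpow_mul, hms.sub_one_mul_conj]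
  have hX := lintegral_maxDensity_rpow_ne_top (β := β) hT hm hsupp n
  have key : ∫⁻ x, maxDensity β T μ n x ^ m ≤
      (C₁ * C₂ * μ univ ^ (1 / m)) * (∫⁻ x, maxDensity β T μ n x ^ m) ^ (1 - 1 / m) := by
    calc ∫⁻ x, maxDensity β T μ n x ^ m = ∫⁻ x, maxDensity β T μ n x * f x :=
          lintegral_congr fun x => rpow_eq_mul_rpow_sub_one _ hms.lt.le
      _ ≤ ∫⁻ x, C₁ * (besselPot β μ x * f x) := by
          refine lintegral_mono_ae ?_
          filter_upwards [ae_measure_singleton_eq_zero hN μ] with x hx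
          rw [← mul_assoc]
          exact mul_le_mul_left (partialSups_le _ _ _ fun k _ => h₁ μ x hx k) _
      _ = C₁ * ∫⁻ x, besselFun β f x ^ (1 : ℝ) ∂μ := by
          rw [lintegral_const_mul' _ _ hC₁, ← lintegral_besselFun_eq μ hfm]
          simp
      _ ≤ C₁ * (C₂ * (μ univ ^ (1 - 1 / s) * (∫⁻ x, f x ^ s) ^ (1 / s))) :=
          mul_le_mul_right (h₂ μ hμ f hfm (hfs ▸ hX)) _
      _ = _ := by
          rw [hfs, one_div, one_div, hms.one_sub_inv, hms.symm.one_sub_inv]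
          ring
  refine (le_rpow_of_le_mul_rpow (by positivity) hX key).trans (le_of_eq ?_)
  rw [one_div_one_div, ENNReal.mul_rpow_of_nonneg _ _ hm.le, ← ENNReal.rpow_mul (μ univ),
    one_div_mul_cancel hm.ne', ENNReal.rpow_one]

end MaxDensity

/-! ### From the capacitary condition to the testing condition -/

section CapacityToTesting

variable {N : ℕ} {α p q : ℝ}

lemma holderConjugate_exponents (hp : 1 < p) (hq : p - 1 < q) :
    (q / (p - 1)).HolderConjugate (q / (q - p + 1)) := by
  have h1 : 0 < p - 1 := by linarith
  have h2 : 0 < q - p + 1 := by linarith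
  have h3 : 0 < q := by linarith
  rw [Real.holderConjugate_iff]
  refine ⟨by rwa [one_lt_div h1], ?_⟩
  field_simp
  ring

lemma exists_lintegral_wolff_rpow_le_of_le_besselCap (hβ : 0 < α * p) (hβN : α * p < N)
    (hp : 1 < p) (hq : p - 1 < q) {T L : ℝ} (hT : 0 < T) {x0 : Euc N} {ω : Measure (Euc N)}
    [IsFiniteMeasure ω] (hsupp : ω (ball x0 L)ᶜ = 0) {C : ℝ≥0∞} (hC : C ≠ ∞)
    (h : ∀ K, IsCompact K → ω K ≤ C * besselCap N (α * p) (q / (q - p + 1)) K) :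
    ∃ C' : ℝ≥0∞, C' ≠ ∞ ∧ ∀ B : Set (Euc N),
      ∫⁻ y, wolff α p (ENNReal.ofReal T) (ω.restrict B) y ^ q ≤ C' * ω B := by
  have hms := holderConjugate_exponents hp hq
  set m := q / (p - 1) with hmdef
  have hm := hms.pos
  have hp1 : 0 < p - 1 := by linarith
  have hq0 : 0 < q := by linarith
  have hr : 0 < 1 / (p - 1) := by positivity
  have hmr : m / (1 / (p - 1)) = q := by rw [hmdef]; field_simp
  obtain ⟨C₁, hC₁, h₁⟩ := exists_lintegral_iSup_ballDensity_rpow_le_of_le_besselCap hβ hβN hT hms hC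
  obtain ⟨C₂, hC₂, h₂⟩ := lintegral_tsum_ballDensity_rpow_le hβ hβN.le hT hr hm x0 L
  rw [hmr] at h₂
  set c := ENNReal.ofReal (2 ^ (N - α * p)) ^ (1 / (p - 1))
  have hc : c ^ q ≠ ∞ := by finiteness
  have hm1 : 0 ≤ m - 1 := by linarith [hms.lt]
  refine ⟨c ^ q * (C₂ * (C₁ + ω univ ^ (m - 1))), by finiteness, fun B => ?_⟩
  set μ := ω.restrict B
  have hμB : μ univ = ω B := by simp [μ]
  have hle : μ ≤ ω := Measure.restrict_le_self
  have hμs : μ (ball x0 L)ᶜ = 0 := le_antisymm ((hle _).trans hsupp.le) zero_le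
  calc ∫⁻ y, wolff α p (ENNReal.ofReal T) μ y ^ q
      ≤ ∫⁻ y, c ^ q * (∑' k, ballDensity (α * p) T μ k y ^ (1 / (p - 1))) ^ q := by
        refine lintegral_mono fun y => ?_
        rw [← ENNReal.mul_rpow_of_nonneg _ _ hq0.le]
        exact ENNReal.rpow_le_rpow (wolff_le_tsum hp hβN.le hT μ y) hq0.le
    _ = c ^ q * ∫⁻ y, (∑' k, ballDensity (α * p) T μ k y ^ (1 / (p - 1))) ^ q :=
        lintegral_const_mul' _ _ hc
    _ ≤ c ^ q * (C₂ * (C₁ * μ univ + ω univ ^ (m - 1) * μ univ)) := by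
        refine mul_le_mul_right ((h₂ μ hμs).trans (mul_le_mul_right (add_le_add ?_ ?_) _)) _
        · exact h₁ μ x0 L hμs fun K hK => (hle K).trans (h K hK)
        · rw [rpow_eq_mul_rpow_sub_one _ hms.lt.le, mul_comm]
          exact mul_le_mul_left (ENNReal.rpow_le_rpow (hle _) hm1) _
    _ = _ := by rw [hμB]; ring

end CapacityToTesting

/-! ### From the testing condition to the pointwise condition -/

section TestingToPointwise

lemma pow_rpow_comm (x : ℝ≥0∞) (k : ℕ) (r : ℝ) : (x ^ k) ^ r = (x ^ r) ^ k := by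
  rw [← ENNReal.rpow_natCast, ← ENNReal.rpow_mul, mul_comm, ENNReal.rpow_mul, ENNReal.rpow_natCast]

lemma exists_tsum_pow_mul_sum_rpow_le {ε : ℝ≥0∞} (hε : ε < 1) {m : ℝ} (hm : 1 < m)
    {A : ℝ≥0∞} (hA : A ≠ ∞) :
    ∃ C : ℝ≥0∞, C ≠ ∞ ∧ ∀ w : ℕ → ℝ≥0∞, (∀ i, w i ^ (m - 1) * ε ^ i ≤ A) →
      ∑' k, ε ^ k * (∑ i ∈ Finset.range (k + 1), w i) ^ m ≤ C * ∑' k, w k := by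
  have hm1 : 0 < m - 1 := by linarith
  set η := ε ^ (1 / (m - 1)) with hη
  have hη1 : η < 1 := ENNReal.rpow_lt_one hε (by positivity)
  have hηinv : (1 - η)⁻¹ ≠ ∞ := by simpa [tsub_eq_zero_iff_le] using hη1
  have hεinv : (1 - ε)⁻¹ ≠ ∞ := by simpa [tsub_eq_zero_iff_le] using hε
  set A' := (A ^ (1 / (m - 1)) * (1 - η)⁻¹) ^ (m - 1)
  have hA' : A' ≠ ∞ := by finiteness
  refine ⟨ENNReal.ofReal m * (A' * (1 - ε)⁻¹), by finiteness, fun w hw => ?_⟩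
  have hηpow (i : ℕ) : (η ^ i) ^ (m - 1) = ε ^ i := by
    rw [pow_rpow_comm, hη, ← ENNReal.rpow_mul, one_div_mul_cancel hm1.ne', ENNReal.rpow_one]
  have hwη (i : ℕ) : w i * η ^ i ≤ A ^ (1 / (m - 1)) := by
    rw [one_div, ENNReal.le_rpow_inv_iff hm1, ENNReal.mul_rpow_of_nonneg _ _ hm1.le, hηpow]
    exact hw i
  have hU (k : ℕ) : (∑ i ∈ Finset.range (k + 1), w i) ^ (m - 1) * ε ^ k ≤ A' := by
    rw [← hηpow, ← ENNReal.mul_rpow_of_nonneg _ _ hm1.le]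
    refine ENNReal.rpow_le_rpow ?_ hm1.le
    calc (∑ i ∈ Finset.range (k + 1), w i) * η ^ k
        ≤ ∑ i ∈ Finset.range (k + 1), A ^ (1 / (m - 1)) * η ^ (k - i) := by
          rw [Finset.sum_mul]
          refine Finset.sum_le_sum fun i hi => ?_
          have hik : i ≤ k := Nat.lt_succ_iff.1 (Finset.mem_range.1 hi)
          rw [← Nat.add_sub_cancel' hik, pow_add, ← mul_assoc, Nat.add_sub_cancel' hik]
          exact mul_le_mul_left (hwη i) _
      _ = A ^ (1 / (m - 1)) * ∑ i ∈ Finset.range (k + 1), η ^ i := by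
          rw [← Finset.mul_sum, ← Finset.sum_range_reflect (fun i => η ^ i)]
          simp
      _ ≤ _ := by
          rw [← ENNReal.tsum_geometric]
          exact mul_le_mul_right (ENNReal.sum_le_tsum _) _
  calc ∑' k, ε ^ k * (∑ i ∈ Finset.range (k + 1), w i) ^ m
      ≤ ∑' k, ENNReal.ofReal m * (A' * ∑ i ∈ Finset.range (k + 1), ε ^ (k - i) * w i) := by
        refine ENNReal.tsum_le_tsum fun k => ?_
        calc ε ^ k * (∑ i ∈ Finset.range (k + 1), w i) ^ m
            ≤ ε ^ k * (ENNReal.ofReal m * ∑ i ∈ Finset.range (k + 1),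
                w i * (∑ j ∈ Finset.range (i + 1), w j) ^ (m - 1)) :=
              mul_le_mul_right (sum_rpow_le _ hm.le _) _
          _ = ENNReal.ofReal m * ∑ i ∈ Finset.range (k + 1),
                ε ^ k * (w i * (∑ j ∈ Finset.range (i + 1), w j) ^ (m - 1)) := by
              rw [mul_left_comm, ← Finset.mul_sum]
          _ ≤ _ := by
              rw [Finset.mul_sum (a := A')]
              refine mul_le_mul_right (Finset.sum_le_sum fun i hi => ?_) _
              have hik : i ≤ k := Nat.lt_succ_iff.1 (Finset.mem_range.1 hi)
              calc ε ^ k * (w i * (∑ j ∈ Finset.range (i + 1), w j) ^ (m - 1))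
                  = ((∑ j ∈ Finset.range (i + 1), w j) ^ (m - 1) * ε ^ i) *
                      (ε ^ (k - i) * w i) := by
                    rw [← Nat.add_sub_cancel' hik, pow_add, Nat.add_sub_cancel' hik]
                    ring
                _ ≤ _ := mul_le_mul_left (hU i) _
    _ ≤ _ := by
        rw [ENNReal.tsum_mul_left, ENNReal.tsum_mul_left, mul_assoc, mul_assoc]
        exact mul_le_mul_right (mul_le_mul_right (tsum_geometric_convolution_le ε w) _) _

variable {N : ℕ} {α p q : ℝ}

lemma ballDensity_two_mul {T : ℝ} (hT : 0 < T) (β : ℝ) (μ : Measure (Euc N)) (k : ℕ)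
    (x : Euc N) : μ (ball x (2 * T / 2 ^ k)) * ENNReal.ofReal ((T / 2 ^ k) ^ (β - N)) =
      ENNReal.ofReal (2 ^ (N - β)) * ballDensity β (2 * T) μ k x := by
  have hTk : 0 < T / 2 ^ k := by positivity
  rw [ballDensity, mul_left_comm, ← ENNReal.ofReal_mul (by positivity), mul_div_assoc,
    Real.mul_rpow (by norm_num) hTk.le, ← mul_assoc, ← Real.rpow_add (by norm_num)]
  simp

lemma wolff_le_sum_add_wolff_restrict (hp : 1 < p) (hN : α * p ≤ N) {T : ℝ} (hT : 0 < T) :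
    ∃ C : ℝ≥0∞, C ≠ ∞ ∧ ∀ (μ : Measure (Euc N)) (x : Euc N) (k : ℕ), ∀ y ∈ ball x (T / 2 ^ k),
      wolff α p (ENNReal.ofReal T) μ y ≤
        C * ((∑ i ∈ Finset.range (k + 1), ballDensity (α * p) (2 * T) μ i x ^ (1 / (p - 1))) +
          wolff α p (ENNReal.ofReal T) (μ.restrict (ball x (2 * T / 2 ^ k))) y) := by
  have hp1 : 0 < p - 1 := by linarith
  have hr : 0 < 1 / (p - 1) := by positivity
  set c := ENNReal.ofReal (2 ^ (N - α * p)) ^ (1 / (p - 1)) with hcdef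
  have hc : c ≠ ∞ := by finiteness
  refine ⟨c * (c + 2 * c), by finiteness, fun μ x k y hy => ?_⟩
  set ν := μ.restrict (ball x (2 * T / 2 ^ k)) with hν
  have hpow {i j : ℕ} (hij : i ≤ j) : T / 2 ^ j ≤ T / 2 ^ i :=
    div_le_div_of_nonneg_left hT.le (by positivity) (pow_le_pow_right₀ one_le_two hij)
  have hhead : ∑ i ∈ Finset.range (k + 1), ballDensity (α * p) T μ i y ^ (1 / (p - 1)) ≤
      c * ∑ i ∈ Finset.range (k + 1), ballDensity (α * p) (2 * T) μ i x ^ (1 / (p - 1)) := by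
    rw [Finset.mul_sum]
    refine Finset.sum_le_sum fun i hi => ?_
    have hik : i ≤ k := Nat.lt_succ_iff.1 (Finset.mem_range.1 hi)
    rw [hcdef, ← ENNReal.mul_rpow_of_nonneg _ _ hr.le, ← ballDensity_two_mul hT]
    refine ENNReal.rpow_le_rpow (mul_le_mul_left (measure_mono (ball_subset_ball' ?_)) _) hr.le
    have := mem_ball.1 hy
    rw [mul_div_assoc]
    linarith [hpow hik]
  have htail : ∑' i, ballDensity (α * p) T μ (i + (k + 1)) y ^ (1 / (p - 1)) ≤
      2 * c * wolff α p (ENNReal.ofReal T) ν y := by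
    refine le_trans ?_ (tsum_le_wolff hp hN (half_pos hT) (by linarith) ν y)
    calc ∑' i, ballDensity (α * p) T μ (i + (k + 1)) y ^ (1 / (p - 1))
        = ∑' i, ballDensity (α * p) (T / 2) ν (i + k) y ^ (1 / (p - 1)) := by
          refine tsum_congr fun i => ?_
          have hrad : T / 2 / 2 ^ (i + k) = T / 2 ^ (i + (k + 1)) := by
            rw [div_div, ← add_assoc, pow_succ' _ (i + k)]
          have hsub : ball y (T / 2 ^ (i + (k + 1))) ⊆ ball x (2 * T / 2 ^ k) := by
            refine ball_subset_ball' ?_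
            have := mem_ball.1 hy
            rw [mul_div_assoc]
            linarith [hpow (show k ≤ i + (k + 1) by omega)]
          simp only [ballDensity, hrad]
          rw [hν, Measure.restrict_apply measurableSet_ball, inter_eq_left.2 hsub]
      _ ≤ _ := ENNReal.tsum_comp_le_tsum_of_injective (add_left_injective k)
            fun i => ballDensity (α * p) (T / 2) ν i y ^ (1 / (p - 1))
  calc wolff α p (ENNReal.ofReal T) μ y
      ≤ c * ∑' i, ballDensity (α * p) T μ i y ^ (1 / (p - 1)) := wolff_le_tsum hp hN hT μ y
    _ = c * ((∑ i ∈ Finset.range (k + 1), ballDensity (α * p) T μ i y ^ (1 / (p - 1))) +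
          ∑' i, ballDensity (α * p) T μ (i + (k + 1)) y ^ (1 / (p - 1))) := by
        rw [ENNReal.summable.sum_add_tsum_nat_add' ]
    _ ≤ c * ((c + 2 * c) * (∑ i ∈ Finset.range (k + 1),
          ballDensity (α * p) (2 * T) μ i x ^ (1 / (p - 1))) +
          (c + 2 * c) * wolff α p (ENNReal.ofReal T) ν y) := by
        refine mul_le_mul_right (add_le_add (hhead.trans ?_) (htail.trans ?_)) _
        · exact mul_le_mul_left le_self_add _
        · exact mul_le_mul_left le_add_self _
    _ = _ := by ring

lemma ofReal_div_two_pow_rpow {T : ℝ} (hT : 0 < T) (β : ℝ) (k : ℕ) :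
    ENNReal.ofReal ((T / 2 ^ k) ^ β) = ENNReal.ofReal (T ^ β) * ENNReal.ofReal (2 ^ (-β)) ^ k := by
  rw [← ENNReal.ofReal_pow (by positivity), ← ENNReal.ofReal_mul (by positivity),
    Real.div_rpow hT.le (by positivity), div_eq_mul_inv, ← Real.rpow_natCast, ← Real.rpow_natCast,
    ← Real.rpow_mul (by norm_num), ← Real.rpow_mul (by norm_num), ← Real.rpow_neg (by norm_num)]
  ring_nf

end TestingToPointwise

section TestingToPointwise

variable {N : ℕ} {α p q R : ℝ}

lemma ballDensity_le_measure_univ_mul {β T : ℝ} (hβN : β ≤ N) {a : ℝ} (ha : 0 < a)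
    {k : ℕ} (hk : a ≤ T / 2 ^ k) (μ : Measure (Euc N)) (x : Euc N) :
    ballDensity β T μ k x ≤ μ univ * ENNReal.ofReal (a ^ (β - N)) :=
  mul_le_mul' (measure_mono (subset_univ _)) (ENNReal.ofReal_le_ofReal
    (Real.rpow_le_rpow_of_nonpos ha hk (by linarith)))

lemma exists_ballDensity_rpow_mul_le_of_testing (hβ : 0 < α * p) (hβN : α * p < N) (hp : 1 < p)
    (hq : p - 1 < q) (hR : 0 < R) {ω : Measure (Euc N)} [IsFiniteMeasure ω] {C : ℝ≥0∞}
    (hC : C ≠ ∞) (h : ∀ (x : Euc N) (t : ℝ), 0 < t →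
      ∫⁻ y, wolff α p (ENNReal.ofReal (4 * R)) (ω.restrict (ball x t)) y ^ q ≤ C * ω (ball x t)) :
    ∃ A : ℝ≥0∞, A ≠ ∞ ∧ ∀ (x : Euc N) (k : ℕ),
      ballDensity (α * p) (8 * R) ω k x ^ (q / (p - 1) - 1) *
        ENNReal.ofReal ((8 * R / 2 ^ k) ^ (α * p)) ≤ A := by
  set m := q / (p - 1) with hmdef
  have hms := holderConjugate_exponents hp hq
  have hm1 : 0 < m - 1 := by linarith [hms.lt]
  have hm := hms.pos
  have hp1 : 0 < p - 1 := by linarith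
  have hq0 : 0 < q := by linarith
  have hr : 0 < 1 / (p - 1) := by positivity
  have h4 : (0 : ℝ) < 4 ^ (α * p - N) := by positivity
  set v := volume (ball (0 : Euc N) 1)
  have hv : v ≠ ∞ := measure_ball_lt_top.ne
  have hv0 : v ≠ 0 := (measure_ball_pos _ _ one_pos).ne'
  set κ := ENNReal.ofReal (4 ^ (α * p - N)) ^ m * ENNReal.ofReal (1 / 2) ^ q * v with hκ
  have hκt : κ ≠ ∞ := by finiteness
  have hκ0 : κ ≠ 0 := by
    refine mul_ne_zero (mul_ne_zero ?_ ?_) hv0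
    · exact (ENNReal.rpow_pos (by simpa using h4) (by simp)).ne'
    · exact (ENNReal.rpow_pos (by simp) (by simp)).ne'
  have hkinv : κ⁻¹ ≠ ∞ := ENNReal.inv_ne_top.2 hκ0
  refine ⟨(ω univ * ENNReal.ofReal (R ^ (α * p - N))) ^ (m - 1) *
    ENNReal.ofReal ((8 * R) ^ (α * p)) + C * κ⁻¹, by finiteness, fun x k => ?_⟩
  have hτ : 0 < 8 * R / 2 ^ k := by positivity
  set τ := 8 * R / 2 ^ k with hτdef
  rcases le_or_gt k 3 with hk | hk
  · refine le_trans (mul_le_mul' (ENNReal.rpow_le_rpow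
      (ballDensity_le_measure_univ_mul hβN.le hR ?_ ω x) hm1.le)
      (ENNReal.ofReal_le_ofReal (Real.rpow_le_rpow hτ.le ?_ hβ.le))) le_self_add
    · rw [le_div_iff₀ (by positivity)]
      have : (2 : ℝ) ^ k ≤ 2 ^ 3 := pow_le_pow_right₀ one_le_two hk
      nlinarith
    · exact div_le_self (by positivity) (one_le_pow₀ one_le_two)
  refine le_trans ?_ le_add_self
  have hτR : 4 * τ ≤ 4 * R := by
    have : (2 : ℝ) ^ 3 ≤ 2 ^ k := pow_le_pow_right₀ one_le_two hk.le
    have : τ ≤ R := by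
      rw [hτdef, div_le_iff₀ (by positivity)]
      nlinarith
    linarith
  set d := ballDensity (α * p) (8 * R) ω k x with hd
  have hdτ : d = ω (ball x τ) * ENNReal.ofReal (τ ^ (α * p - N)) := rfl
  have hdt : d ≠ ∞ := by rw [hdτ]; finiteness
  by_cases hd0 : d = 0
  · rw [hd0, ENNReal.zero_rpow_of_pos hm1, zero_mul]
    exact zero_le
  have hlow : ∀ y ∈ ball x τ, d ^ m * (ENNReal.ofReal (4 ^ (α * p - N)) ^ m *
      ENNReal.ofReal (1 / 2) ^ q) ≤
        wolff α p (ENNReal.ofReal (4 * R)) (ω.restrict (ball x τ)) y ^ q := by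
    intro y hy
    have hsub : ball x τ ⊆ ball y (2 * τ) := by
      refine ball_subset_ball' ?_
      have := mem_ball'.1 hy
      linarith
    have hw := measure_ball_rpow_mul_le_wolff hp hβN.le (show 0 < 2 * τ by positivity)
      (show 2 * τ < 4 * τ by linarith) hτR (ω.restrict (ball x τ)) y
    have hhalf : (4 * τ - 2 * τ) / (4 * τ) = 1 / 2 := by field_simp; norm_num
    rw [Measure.restrict_apply measurableSet_ball, inter_eq_right.2 hsub, hhalf,
      Real.mul_rpow (by norm_num) hτ.le, ENNReal.ofReal_mul h4.le, mul_left_comm, ← hdτ] at hw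
    refine le_trans (le_of_eq ?_) (ENNReal.rpow_le_rpow hw hq0.le)
    rw [ENNReal.mul_rpow_of_nonneg _ _ hq0.le, ← ENNReal.rpow_mul, one_div_mul_eq_div, ← hmdef,
      ENNReal.mul_rpow_of_nonneg _ _ hm.le]
    ring
  have hInt : d ^ m * (ENNReal.ofReal (4 ^ (α * p - N)) ^ m * ENNReal.ofReal (1 / 2) ^ q) *
      volume (ball x τ) ≤ C * ω (ball x τ) := by
    calc _ = ∫⁻ _ in ball x τ, d ^ m * (ENNReal.ofReal (4 ^ (α * p - N)) ^ m *
          ENNReal.ofReal (1 / 2) ^ q) := by rw [setLIntegral_const]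
      _ ≤ ∫⁻ y in ball x τ, wolff α p (ENNReal.ofReal (4 * R)) (ω.restrict (ball x τ)) y ^ q :=
          setLIntegral_mono' measurableSet_ball hlow
      _ ≤ _ := (setLIntegral_le_lintegral _ _).trans (h x τ hτ)
  have hmul : d * (d ^ (m - 1) * ENNReal.ofReal (τ ^ (α * p)) * κ) ≤ d * C := by
    calc d * (d ^ (m - 1) * ENNReal.ofReal (τ ^ (α * p)) * κ)
        = d ^ m * (ENNReal.ofReal (4 ^ (α * p - N)) ^ m * ENNReal.ofReal (1 / 2) ^ q) *
            volume (ball x τ) * ENNReal.ofReal (τ ^ (α * p - N)) := by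
          have hτp : ENNReal.ofReal (τ ^ (α * p)) =
              ENNReal.ofReal (τ ^ N) * ENNReal.ofReal (τ ^ (α * p - N)) := by
            rw [← ENNReal.ofReal_mul (by positivity), ← Real.rpow_natCast, ← Real.rpow_add hτ]
            ring_nf
          rw [volume_ball_eq x hτ, hτp, rpow_eq_mul_rpow_sub_one d hms.lt.le, hκ]
          ring
      _ ≤ C * ω (ball x τ) * ENNReal.ofReal (τ ^ (α * p - N)) := mul_le_mul_left hInt _
      _ = d * C := by rw [hdτ]; ring
  rw [← div_eq_mul_inv, ENNReal.le_div_iff_mul_le (Or.inl hκ0) (Or.inl hκt)]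
  exact (ENNReal.mul_le_mul_iff_right hd0 hdt).1 hmul

lemma exists_tsum_ballDensity_rpow_le_wolff (hβN : α * p ≤ N) (hp : 1 < p) (hR : 0 < R)
    {x0 : Euc N} {ω : Measure (Euc N)} (hsupp : ω (ball x0 R)ᶜ = 0) :
    ∃ C : ℝ≥0∞, C ≠ ∞ ∧ ∀ x ∈ ball x0 (2 * R),
      ∑' k, ballDensity (α * p) (8 * R) ω k x ^ (1 / (p - 1)) ≤
        C * wolff α p (ENNReal.ofReal (4 * R)) ω x := by
  have hp1 : 0 < p - 1 := by linarith
  have hr : 0 < 1 / (p - 1) := by positivity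
  set c := ENNReal.ofReal (2 ^ (N - α * p)) ^ (1 / (p - 1))
  have hc : c ≠ ∞ := by finiteness
  refine ⟨2 * 4 + 2 * c, by finiteness, fun x hx => ?_⟩
  have huniv : ω univ ≤ ω (ball x (3 * R)) := by
    have hsub : ball x0 R ⊆ ball x (3 * R) := by
      refine ball_subset_ball' ?_
      have := mem_ball'.1 hx
      linarith
    calc ω univ ≤ ω (ball x0 R) + ω (ball x0 R)ᶜ := by
          rw [← union_compl_self (ball x0 R)]; exact measure_union_le _ _
      _ ≤ _ := by rw [hsupp, add_zero]; exact measure_mono hsub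
  have hbig {k : ℕ} (hk : 4 * R ≤ 8 * R / 2 ^ k) :
      ballDensity (α * p) (8 * R) ω k x ^ (1 / (p - 1)) ≤
        4 * wolff α p (ENNReal.ofReal (4 * R)) ω x := by
    have hw := measure_ball_rpow_mul_le_wolff hp hβN (show 0 < 3 * R by positivity)
      (show 3 * R < 4 * R by linarith) le_rfl ω x
    have hquart : ENNReal.ofReal ((4 * R - 3 * R) / (4 * R)) = 4⁻¹ := by
      rw [show (4 * R - 3 * R) / (4 * R) = (4 : ℝ)⁻¹ by field_simp; ring,
        ENNReal.ofReal_inv_of_pos (by norm_num)]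
      norm_num
    rw [hquart, ← div_eq_mul_inv, ENNReal.div_le_iff_le_mul (by simp) (by simp),
      mul_comm (wolff α p _ ω x)] at hw
    refine le_trans (ENNReal.rpow_le_rpow ?_ hr.le) hw
    exact (ballDensity_le_measure_univ_mul hβN (by positivity) hk ω x).trans
      (mul_le_mul_left huniv _)
  have htail : ∑' k, ballDensity (α * p) (8 * R) ω (k + 2) x ^ (1 / (p - 1)) ≤
      2 * c * wolff α p (ENNReal.ofReal (4 * R)) ω x := by
    refine le_trans (le_of_eq (tsum_congr fun k => ?_)) (tsum_le_wolff hp hβN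
      (show 0 < 2 * R by positivity) (by linarith) ω x)
    have : 8 * R / 2 ^ (k + 2) = 2 * R / 2 ^ k := by rw [pow_add]; field_simp; norm_num
    simp only [ballDensity, this]
  rw [← ENNReal.summable.sum_add_tsum_nat_add' (k := 2), add_mul]
  refine add_le_add ?_ htail
  rw [Finset.sum_range_succ, Finset.sum_range_one, mul_assoc, two_mul]
  refine add_le_add (hbig ?_) (hbig ?_)
  · rw [pow_zero, div_one]; linarith
  · rw [pow_one]; linarith

lemma exists_wolff_wolff_le_of_testing (hβ : 0 < α * p) (hβN : α * p < N) (hp : 1 < p)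
    (hq : p - 1 < q) (hR : 0 < R) {x0 : Euc N} {ω : Measure (Euc N)} [IsFiniteMeasure ω]
    (hsupp : ω (ball x0 R)ᶜ = 0) {C : ℝ≥0∞} (hC : C ≠ ∞)
    (h : ∀ (x : Euc N) (t : ℝ), 0 < t →
      ∫⁻ y, wolff α p (ENNReal.ofReal (4 * R)) (ω.restrict (ball x t)) y ^ q ≤ C * ω (ball x t)) :
    ∃ C' : ℝ≥0∞, C' ≠ ∞ ∧ ∀ x ∈ ball x0 (2 * R),
      wolff α p (ENNReal.ofReal (4 * R))
        (volume.withDensity fun y => wolff α p (ENNReal.ofReal (4 * R)) ω y ^ q) x ≤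
          C' * wolff α p (ENNReal.ofReal (4 * R)) ω x := by
  set m := q / (p - 1) with hmdef
  have hms := holderConjugate_exponents hp hq
  have hm1 : 0 < m - 1 := by linarith [hms.lt]
  have hm := hms.pos
  have hp1 : 0 < p - 1 := by linarith
  have hq0 : 0 < q := by linarith
  have hT : 0 < 4 * R := by positivity
  set r := 1 / (p - 1) with hrdef
  have hr : 0 < r := by positivity
  have hqr : q * r = m := by rw [hrdef, mul_one_div]
  obtain ⟨A, hA, hwA⟩ := exists_ballDensity_rpow_mul_le_of_testing hβ hβN hp hq hR hC h
  obtain ⟨c₁, hc₁, h₁⟩ := wolff_le_sum_add_wolff_restrict (N := N) hp hβN.le hT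
  obtain ⟨c₂, hc₂, h₂⟩ := exists_tsum_ballDensity_rpow_le_wolff hβN.le hp hR hsupp
  set c₃ := ENNReal.ofReal (2 ^ (N - α * p)) ^ r
  set v := volume (ball (0 : Euc N) 1)
  have hv : v ≠ ∞ := measure_ball_lt_top.ne
  set ε := ENNReal.ofReal (2 ^ (-(α * p))) ^ r with hε
  have hε1 : ε < 1 := by
    refine ENNReal.rpow_lt_one ?_ hr
    rw [← ENNReal.ofReal_one, ENNReal.ofReal_lt_ofReal_iff one_pos]
    exact Real.rpow_lt_one_of_one_lt_of_neg (by norm_num) (by linarith)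
  have h8 : ENNReal.ofReal ((8 * R) ^ (α * p)) ≠ 0 := by
    have : 0 < (8 * R) ^ (α * p) := by positivity
    simpa using this
  set E := ENNReal.ofReal ((8 * R) ^ (α * p))
  have hEinv : E⁻¹ ≠ ∞ := ENNReal.inv_ne_top.2 h8
  obtain ⟨c₄, hc₄, h₄⟩ := exists_tsum_pow_mul_sum_rpow_le hε1 hms.lt
    (show (E⁻¹ * A) ^ r ≠ ∞ by finiteness)
  set D := ENNReal.ofReal ((4 * R) ^ (α * p)) with hD
  set κ := c₁ ^ q * (2 ^ q * (v * D + C * ENNReal.ofReal (2 ^ (N - α * p)))) with hκ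
  have hκt : κ ≠ ∞ := by finiteness
  refine ⟨c₃ * (κ ^ r * 2 ^ r * (c₄ * c₂ + c₂)), by finiteness, fun x hx => ?_⟩
  set ν := volume.withDensity fun y => wolff α p (ENNReal.ofReal (4 * R)) ω y ^ q with hν
  set w : ℕ → ℝ≥0∞ := fun k => ballDensity (α * p) (8 * R) ω k x ^ r with hw
  have hwε (i : ℕ) : w i ^ (m - 1) * ε ^ i ≤ (E⁻¹ * A) ^ r := by
    have : w i ^ (m - 1) * ε ^ i = (ballDensity (α * p) (8 * R) ω i x ^ (m - 1) *
        ENNReal.ofReal (2 ^ (-(α * p))) ^ i) ^ r := by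
      rw [ENNReal.mul_rpow_of_nonneg _ _ hr.le, pow_rpow_comm, hw, ← ENNReal.rpow_mul,
        ← ENNReal.rpow_mul, mul_comm r]
    rw [this]
    refine ENNReal.rpow_le_rpow ?_ hr.le
    rw [mul_comm E⁻¹, ← div_eq_mul_inv, 
      ENNReal.le_div_iff_mul_le (Or.inl h8) (Or.inl (by finiteness)), mul_assoc,
      mul_comm _ E, ← ofReal_div_two_pow_rpow (by positivity)]
    exact hwA x i
  have h8R : 2 * (4 * R) = 8 * R := by ring
  set U : ℕ → ℝ≥0∞ := fun k => ∑ i ∈ Finset.range (k + 1), w i with hU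
  have hball (k : ℕ) : ballDensity (α * p) (4 * R) ν k x ≤
      κ * (U k ^ q * ENNReal.ofReal (2 ^ (-(α * p))) ^ k +
        ballDensity (α * p) (8 * R) ω k x) := by
    have hρ : 0 < 4 * R / 2 ^ k := by positivity
    have hB := ballDensity_two_mul hT (α * p) ω k x
    have hInt := (setLIntegral_le_lintegral (ball x (4 * R / 2 ^ k)) _).trans
      (h x (2 * (4 * R) / 2 ^ k) (by positivity))
    rw [h8R] at hB hInt
    have hνb : ν (ball x (4 * R / 2 ^ k)) ≤ c₁ ^ q * (2 ^ q *
        (U k ^ q * (ENNReal.ofReal ((4 * R / 2 ^ k) ^ N) * v) +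
          C * ω (ball x (8 * R / 2 ^ k)))) := by
      rw [hν, withDensity_apply _ measurableSet_ball]
      calc ∫⁻ y in ball x (4 * R / 2 ^ k), wolff α p (ENNReal.ofReal (4 * R)) ω y ^ q
          ≤ ∫⁻ y in ball x (4 * R / 2 ^ k), c₁ ^ q * (2 ^ q * (U k ^ q +
              wolff α p (ENNReal.ofReal (4 * R)) (ω.restrict (ball x (8 * R / 2 ^ k))) y ^ q)) := by
            refine setLIntegral_mono' measurableSet_ball fun y hy => ?_
            refine (ENNReal.rpow_le_rpow (h₁ ω x k y hy) hq0.le).trans ?_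
            rw [ENNReal.mul_rpow_of_nonneg _ _ hq0.le, h8R]
            exact mul_le_mul_right (add_rpow_le_two_rpow_mul _ _ hq0.le) _
        _ = c₁ ^ q * (2 ^ q * (U k ^ q * volume (ball x (4 * R / 2 ^ k)) +
              ∫⁻ y in ball x (4 * R / 2 ^ k), wolff α p (ENNReal.ofReal (4 * R))
                (ω.restrict (ball x (8 * R / 2 ^ k))) y ^ q)) := by
            rw [lintegral_const_mul' _ _ (by finiteness), lintegral_const_mul' _ _ (by finiteness),
              lintegral_add_left measurable_const, setLIntegral_const]
        _ ≤ _ := by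
            rw [volume_ball_eq x hρ]
            exact mul_le_mul_right (mul_le_mul_right (add_le_add le_rfl hInt) _) _
    have hρp : ENNReal.ofReal ((4 * R / 2 ^ k) ^ N) * ENNReal.ofReal
        ((4 * R / 2 ^ k) ^ (α * p - N)) = D * ENNReal.ofReal (2 ^ (-(α * p))) ^ k := by
      rw [hD, ← ofReal_div_two_pow_rpow hT, ← ENNReal.ofReal_mul (by positivity),
        ← Real.rpow_natCast _ N, ← Real.rpow_add hρ, add_sub_cancel]
    calc ballDensity (α * p) (4 * R) ν k x
        ≤ c₁ ^ q * (2 ^ q * (U k ^ q * (ENNReal.ofReal ((4 * R / 2 ^ k) ^ N) * v) +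
          C * ω (ball x (8 * R / 2 ^ k)))) * ENNReal.ofReal ((4 * R / 2 ^ k) ^ (α * p - N)) :=
          mul_le_mul_left hνb _
      _ = c₁ ^ q * (2 ^ q * (v * U k ^ q * (ENNReal.ofReal ((4 * R / 2 ^ k) ^ N) *
            ENNReal.ofReal ((4 * R / 2 ^ k) ^ (α * p - N))) + C * (ω (ball x (8 * R / 2 ^ k)) *
            ENNReal.ofReal ((4 * R / 2 ^ k) ^ (α * p - N))))) := by ring
      _ = c₁ ^ q * (2 ^ q * (v * D * (U k ^ q * ENNReal.ofReal (2 ^ (-(α * p))) ^ k) +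
            C * ENNReal.ofReal (2 ^ (N - α * p)) * ballDensity (α * p) (8 * R) ω k x)) := by
          rw [hρp, hB]; ring
      _ ≤ c₁ ^ q * (2 ^ q * ((v * D + C * ENNReal.ofReal (2 ^ (N - α * p))) *
            (U k ^ q * ENNReal.ofReal (2 ^ (-(α * p))) ^ k) +
            (v * D + C * ENNReal.ofReal (2 ^ (N - α * p))) *
              ballDensity (α * p) (8 * R) ω k x)) := by
          gcongr
          · exact le_self_add
          · exact le_add_self
      _ = _ := by rw [hκ]; ring
  have hterm (k : ℕ) : ballDensity (α * p) (4 * R) ν k x ^ r ≤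
      κ ^ r * 2 ^ r * (ε ^ k * U k ^ m + w k) := by
    refine (ENNReal.rpow_le_rpow (hball k) hr.le).trans ?_
    rw [ENNReal.mul_rpow_of_nonneg _ _ hr.le, mul_assoc]
    refine mul_le_mul_right ((add_rpow_le_two_rpow_mul _ _ hr.le).trans (le_of_eq ?_)) _
    rw [ENNReal.mul_rpow_of_nonneg _ _ hr.le, ← ENNReal.rpow_mul, hqr, pow_rpow_comm,
      mul_comm (ε ^ k)]
  calc wolff α p (ENNReal.ofReal (4 * R)) ν x
      ≤ c₃ * ∑' k, ballDensity (α * p) (4 * R) ν k x ^ r := wolff_le_tsum hp hβN.le hT ν x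
    _ ≤ c₃ * ∑' k, κ ^ r * 2 ^ r * (ε ^ k * U k ^ m + w k) :=
        mul_le_mul_right (ENNReal.tsum_le_tsum hterm) _
    _ = c₃ * (κ ^ r * 2 ^ r * ((∑' k, ε ^ k * U k ^ m) + ∑' k, w k)) := by
        rw [ENNReal.tsum_mul_left, ENNReal.tsum_add]
    _ ≤ c₃ * (κ ^ r * 2 ^ r * (c₄ * ∑' k, w k + ∑' k, w k)) := by
        refine mul_le_mul_right (mul_le_mul_right (add_le_add (h₄ w hwε) le_rfl) _) _
    _ ≤ c₃ * (κ ^ r * 2 ^ r * (c₄ * (c₂ * wolff α p (ENNReal.ofReal (4 * R)) ω x) +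
          c₂ * wolff α p (ENNReal.ofReal (4 * R)) ω x)) := by
        refine mul_le_mul_right (mul_le_mul_right (add_le_add (mul_le_mul_right ?_ _) ?_) _) _
        all_goals exact h₂ x hx
    _ = _ := by ring

end TestingToPointwise

/-! ### From the capacitary condition for the potential back to the measure -/

section PotentialToMeasure

lemma tsum_rpow_le_tsum_mul (a : ℕ → ℝ≥0∞) {M : ℝ} (hM : 1 ≤ M) :
    (∑' k, a k) ^ M ≤
      ENNReal.ofReal M * ∑' k, a k * (∑ i ∈ Finset.range (k + 1), a i) ^ (M - 1) := by
  rw [ENNReal.tsum_eq_iSup_nat (f := a)]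
  have hsup : (⨆ n, ∑ k ∈ Finset.range n, a k) ^ M = ⨆ n, (∑ k ∈ Finset.range n, a k) ^ M :=
    (ENNReal.orderIsoRpow M (by linarith)).map_iSup _
  rw [hsup]
  exact iSup_le fun n => (sum_rpow_le _ hM n).trans (mul_le_mul_right (ENNReal.sum_le_tsum _) _)

variable {N : ℕ} {β T : ℝ}

lemma lintegral_ballDensity_comm (β T : ℝ) (μ σ : Measure (Euc N)) [SFinite μ] [SFinite σ] (k : ℕ) :
    ∫⁻ x, ballDensity β T μ k x ∂σ = ∫⁻ y, ballDensity β T σ k y ∂μ := by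
  simp only [ballDensity_eq_lintegral]
  set ψ : Euc N → ℝ≥0∞ := {z : Euc N | ‖z‖ < T / 2 ^ k}.indicator
    fun _ => ENNReal.ofReal ((T / 2 ^ k) ^ (β - N)) with hψ
  have hψm : Measurable ψ :=
    measurable_const.indicator (measurableSet_lt (by fun_prop) (by fun_prop))
  have hm : Measurable fun w : Euc N × Euc N => ψ (w.1 - w.2) :=
    hψm.comp (measurable_fst.sub measurable_snd)
  have hneg (z : Euc N) : ψ (-z) = ψ z := by
    simp only [hψ, indicator, mem_ofPred_eq, norm_neg]
  rw [lintegral_lintegral_swap (f := fun x y => ψ (x - y)) hm.aemeasurable]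
  refine lintegral_congr fun y => lintegral_congr fun x => ?_
  rw [← hneg, neg_sub]

lemma exists_ballDensity_le_setLIntegral (hβ : 0 < β) (hβN : β < N) (hT : 0 < T) :
    ∃ C : ℝ≥0∞, C ≠ ∞ ∧ ∀ (f : Euc N → ℝ≥0∞), Measurable f → ∀ (A : Set (Euc N)),
      MeasurableSet A → ∀ (k i : ℕ), i ≤ k → ∀ (x : Euc N), ∀ y ∈ ball x (T / 2 ^ k),
        ballDensity β T ((volume.restrict A).withDensity f) i y ≤
          C * ∫⁻ z in A, ENNReal.ofReal (besselKernel N β (x - z)) * f z := by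
  have hN : 0 < N := by
    have : (0 : ℝ) < N := hβ.trans hβN
    exact_mod_cast this
  have : Nonempty (Fin N) := ⟨⟨0, hN⟩⟩
  obtain ⟨C, hC, h⟩ := exists_ofReal_rpow_le_besselKernel (N := N) hβ hβN (2 * T)
  refine ⟨ENNReal.ofReal (2 ^ (N - β)) * C, by finiteness, fun f hf A hA k i hik x y hy => ?_⟩
  have hi : 0 < T / 2 ^ i := by positivity
  have hki : T / 2 ^ k ≤ T / 2 ^ i :=
    div_le_div_of_nonneg_left hT.le (by positivity) (pow_le_pow_right₀ one_le_two hik)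
  have hiT : T / 2 ^ i ≤ T := div_le_self hT.le (one_le_pow₀ one_le_two)
  have hscale : ENNReal.ofReal ((T / 2 ^ i) ^ (β - N)) =
      ENNReal.ofReal (2 ^ (N - β)) * ENNReal.ofReal ((2 * (T / 2 ^ i)) ^ (β - N)) := by
    rw [← ENNReal.ofReal_mul (by positivity), Real.mul_rpow (by norm_num) hi.le, ← mul_assoc,
      ← Real.rpow_add (by norm_num)]
    simp
  rw [ballDensity, withDensity_apply _ measurableSet_ball,
    Measure.restrict_restrict measurableSet_ball, mul_comm, ← lintegral_const_mul _ hf,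
    ← lintegral_const_mul' _ _ (by finiteness)]
  refine (setLIntegral_mono_ae' (measurableSet_ball.inter hA) ?_).trans
    (lintegral_mono_set inter_subset_right)
  have hne : ∀ᵐ z : Euc N, z ≠ x := by
    rw [ae_iff]; simp
  filter_upwards [hne] with z hz hzb
  rw [hscale, ← mul_assoc, mul_assoc _ C]
  refine mul_le_mul_left (mul_le_mul_right (h _ _ (sub_ne_zero.2 hz.symm) ?_ (by linarith)) _) _
  rw [← dist_eq_norm]
  have h1 := mem_ball'.1 hy
  have h2 := mem_ball'.1 hzb.1
  linarith [dist_triangle x y z]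

lemma exists_lintegral_iSup_ballDensity_rpow_le_of_density (hβ : 0 < β) (hβN : β < N)
    (hT : 0 < T) {m s : ℝ} (hms : m.HolderConjugate s) {C : ℝ≥0∞} (hC : C ≠ ∞) :
    ∃ C' : ℝ≥0∞, C' ≠ ∞ ∧ ∀ (μ : Measure (Euc N)) [IsFiniteMeasure μ] (x0 : Euc N) (L : ℝ),
      μ (ball x0 L)ᶜ = 0 → (∀ n K, IsCompact K →
        ∫⁻ x in K, maxDensity β T μ n x ^ m ≤ C * besselCap N β s K) →
        ∫⁻ x, (⨆ k, ballDensity β T μ k x) ^ m ≤ C' * μ univ := by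
  have hm := hms.pos
  have hs := hms.symm.pos
  have hs1 : 0 < s - 1 := by linarith [hms.symm.lt]
  obtain ⟨C₁, hC₁, h₁⟩ := exists_ballDensity_le_setLIntegral (N := N) hβ hβN hT
  obtain ⟨C₂, hC₂, h₂⟩ := exists_lintegral_besselFun_rpow_le (N := N) β hs1
    (show s - 1 < s by linarith) hC
  set C₃ := ENNReal.ofReal s * (C₁ ^ (s - 1) * C₂) with hC₃def
  have hC₃ : C₃ ≠ ∞ := by finiteness
  refine ⟨(C₃ ^ (1 / s)) ^ m, by finiteness, fun μ _ x0 L hsupp hμ => ?_⟩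
  refine lintegral_iSup_ballDensity_rpow_le hm fun n => ?_
  set h : Euc N → ℝ≥0∞ := maxDensity β T μ n with hh
  have hhm : Measurable h := measurable_maxDensity β T μ n
  set f : Euc N → ℝ≥0∞ := fun x => h x ^ (m - 1) with hf
  have hfm : Measurable f := hhm.pow_const _
  have hfs : ∫⁻ x, f x ^ s = ∫⁻ x, h x ^ m := by
    refine lintegral_congr fun x => ?_
    rw [hf, ← ENNReal.rpow_mul, hms.sub_one_mul_conj]
  have hX : ∫⁻ x, h x ^ m ≠ ∞ := lintegral_maxDensity_rpow_ne_top (β := β) hT hm hsupp n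
  -- the regions where a given scale is the first to realise the maximum
  set A : ℕ → Set (Euc N) := disjointed fun k => {x | h x = ballDensity β T μ k x} with hA
  have hAm (k : ℕ) : MeasurableSet (A k) := MeasurableSet.disjointed
    (fun k => measurableSet_eq_fun hhm (measurable_ballDensity β T μ k)) k
  have hAd : Pairwise (Function.onFun Disjoint A) := disjoint_disjointed _
  have hAu : ⋃ k, A k = univ := by
    rw [hA, iUnion_disjointed, eq_univ_iff_forall]
    intro x
    obtain ⟨k, -, hk⟩ := exists_partialSups_eq (fun k => ballDensity β T μ k x) n
    exact mem_iUnion.2 ⟨k, hk⟩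
  have hAh (k : ℕ) {x : Euc N} (hx : x ∈ A k) : ballDensity β T μ k x = h x :=
    (disjointed_subset _ k hx : h x = ballDensity β T μ k x).symm
  have hsplit (g : Euc N → ℝ≥0∞) : ∑' k, ∫⁻ x in A k, g x = ∫⁻ x, g x := by
    rw [← lintegral_iUnion hAm hAd, hAu, Measure.restrict_univ]
  set σ : ℕ → Measure (Euc N) := fun k => (volume.restrict (A k)).withDensity f
  set F : ℕ → Euc N → ℝ≥0∞ := fun k => ballDensity β T (σ k) k with hF
  have hFm (k : ℕ) : Measurable (F k) := measurable_ballDensity β T (σ k) k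
  set S : ℕ → Euc N → ℝ≥0∞ := fun k y => (∑ i ∈ Finset.range (k + 1), F i y) ^ (s - 1) with hS
  have hSm (k : ℕ) : Measurable (S k) :=
    (Finset.measurable_fun_sum _ fun i _ => hFm i).pow_const _
  have hfF : ∫⁻ x, h x ^ m = ∫⁻ y, ∑' k, F k y ∂μ := by
    rw [lintegral_tsum fun k => (hFm k).aemeasurable, ← hsplit]
    refine tsum_congr fun k => ?_
    rw [← lintegral_ballDensity_comm, lintegral_withDensity_eq_lintegral_mul _ hfm
      (measurable_ballDensity β T μ k)]
    refine setLIntegral_congr_fun (hAm k) fun x hx => ?_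
    simp only [Pi.mul_apply, hAh k hx, hf]
    rw [mul_comm, ← rpow_eq_mul_rpow_sub_one _ hms.lt.le]
  have hSle (k : ℕ) (x y : Euc N) (hy : y ∈ ball x (T / 2 ^ k)) :
      S k y ≤ (C₁ * besselFun β f x) ^ (s - 1) := by
    refine ENNReal.rpow_le_rpow ?_ hs1.le
    calc ∑ i ∈ Finset.range (k + 1), F i y
        ≤ ∑ i ∈ Finset.range (k + 1),
            C₁ * ∫⁻ z in A i, ENNReal.ofReal (besselKernel N β (x - z)) * f z :=
          Finset.sum_le_sum fun i hi => h₁ f hfm (A i) (hAm i) k i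
            (Nat.lt_succ_iff.1 (Finset.mem_range.1 hi)) x y hy
      _ ≤ ∑' i, C₁ * ∫⁻ z in A i, ENNReal.ofReal (besselKernel N β (x - z)) * f z :=
          ENNReal.sum_le_tsum _
      _ = _ := by rw [ENNReal.tsum_mul_left, hsplit, besselFun]
  have hFS (k : ℕ) : ∫⁻ y, F k y * S k y ∂μ ≤
      ∫⁻ x in A k, C₁ ^ (s - 1) * (h x ^ m * besselFun β f x ^ (s - 1)) := by
    calc ∫⁻ y, F k y * S k y ∂μ = ∫⁻ y, F k y ∂(μ.withDensity (S k)) := by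
          rw [lintegral_withDensity_eq_lintegral_mul _ (hSm k) (hFm k)]
          exact lintegral_congr fun y => mul_comm _ _
      _ = ∫⁻ x in A k, f x * ballDensity β T (μ.withDensity (S k)) k x := by
          rw [hF, lintegral_ballDensity_comm, lintegral_withDensity_eq_lintegral_mul _ hfm
            (measurable_ballDensity β T _ k)]
          rfl
      _ ≤ _ := by
          refine setLIntegral_mono' (hAm k) fun x hx => ?_
          have hb : ballDensity β T (μ.withDensity (S k)) k x ≤
              (C₁ * besselFun β f x) ^ (s - 1) * h x := by
            rw [← hAh k hx, ballDensity, ballDensity, ← mul_assoc,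
              withDensity_apply _ measurableSet_ball]
            refine mul_le_mul_left ?_ _
            rw [← setLIntegral_const]
            exact setLIntegral_mono' measurableSet_ball fun y hy => hSle k x y hy
          refine (mul_le_mul_right hb _).trans (le_of_eq ?_)
          rw [ENNReal.mul_rpow_of_nonneg _ _ hs1.le, rpow_eq_mul_rpow_sub_one (h x) hms.lt.le]
          simp only [hf]
          ring
  have hGm : Measurable fun x => besselFun β f x ^ (s - 1) := (measurable_besselFun hfm).pow_const _
  have hFs : ∫⁻ y, (∑' k, F k y) ^ s ∂μ ≤ C₃ * ∫⁻ x, h x ^ m := by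
    have hfin : IsFiniteMeasure (volume.withDensity fun x => h x ^ m) :=
      isFiniteMeasure_withDensity hX
    calc ∫⁻ y, (∑' k, F k y) ^ s ∂μ
        ≤ ∫⁻ y, ENNReal.ofReal s * ∑' k, F k y * S k y ∂μ :=
          lintegral_mono fun y => tsum_rpow_le_tsum_mul _ hms.symm.lt.le
      _ = ENNReal.ofReal s * ∑' k, ∫⁻ y, F k y * S k y ∂μ := by
          rw [lintegral_const_mul' _ _ (by finiteness),
            lintegral_tsum (f := fun k y => F k y * S k y)
              fun k => ((hFm k).mul (hSm k)).aemeasurable]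
      _ ≤ ENNReal.ofReal s * ∫⁻ x, C₁ ^ (s - 1) * (h x ^ m * besselFun β f x ^ (s - 1)) := by
          rw [← hsplit]
          exact mul_le_mul_right (ENNReal.tsum_le_tsum hFS) _
      _ = ENNReal.ofReal s * (C₁ ^ (s - 1) *
            ∫⁻ x, besselFun β f x ^ (s - 1) ∂(volume.withDensity fun x => h x ^ m)) := by
          rw [lintegral_const_mul' _ _ (by finiteness),
            lintegral_withDensity_eq_lintegral_mul _ (hhm.pow_const m) hGm]
          rfl
      _ ≤ ENNReal.ofReal s * (C₁ ^ (s - 1) * (C₂ * ∫⁻ x, h x ^ m)) := by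
          refine mul_le_mul_right (mul_le_mul_right ((h₂ _ (fun K hK => ?_) f hfm
            (hfs ▸ hX)).trans (le_of_eq ?_)) _) _
          · rw [withDensity_apply _ hK.measurableSet]
            exact hμ n K hK
          · rw [hfs, withDensity_apply _ MeasurableSet.univ, Measure.restrict_univ]
            have he : 0 ≤ 1 - (s - 1) / s := by
              rw [sub_nonneg, div_le_one hs]; linarith
            rw [← ENNReal.rpow_add_of_nonneg _ _ he (by positivity), sub_add_cancel,
              ENNReal.rpow_one]
      _ = _ := by rw [hC₃def]; ring
  have key : ∫⁻ x, h x ^ m ≤ (C₃ ^ (1 / s) * μ univ ^ (1 / m)) * (∫⁻ x, h x ^ m) ^ (1 - 1 / m) := by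
    calc ∫⁻ x, h x ^ m = ∫⁻ y, (∑' k, F k y) * 1 ∂μ := by rw [hfF]; simp
      _ ≤ (∫⁻ y, (∑' k, F k y) ^ s ∂μ) ^ (1 / s) * (∫⁻ _, 1 ^ m ∂μ) ^ (1 / m) :=
          ENNReal.lintegral_mul_le_Lp_mul_Lq μ hms.symm (Measurable.tsum hFm).aemeasurable
            aemeasurable_const
      _ ≤ (C₃ * ∫⁻ x, h x ^ m) ^ (1 / s) * (∫⁻ _, 1 ^ m ∂μ) ^ (1 / m) :=
          mul_le_mul_left (ENNReal.rpow_le_rpow hFs (by positivity)) _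
      _ = _ := by
          rw [ENNReal.mul_rpow_of_nonneg _ _ (by positivity), ENNReal.one_rpow, lintegral_one,
            one_div m, hms.one_sub_inv, one_div s]
          ring
  refine (le_rpow_of_le_mul_rpow (by positivity) hX key).trans (le_of_eq ?_)
  rw [one_div_one_div, ENNReal.mul_rpow_of_nonneg _ _ hm.le, ← ENNReal.rpow_mul (μ univ),
    one_div_mul_cancel hm.ne', ENNReal.rpow_one]

variable {α p q R : ℝ}

lemma exists_measure_le_besselCap_of_wolff (hβ : 0 < α * p) (hβN : α * p < N) (hp : 1 < p)
    (hq : p - 1 < q) (hR : 0 < R) {x0 : Euc N} {ω : Measure (Euc N)} [IsFiniteMeasure ω]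
    (hsupp : ω (ball x0 R)ᶜ = 0) {C : ℝ≥0∞} (hC : C ≠ ∞)
    (h : ∀ K, IsCompact K → ∫⁻ y in K, wolff α p (ENNReal.ofReal (4 * R)) ω y ^ q ≤
      C * besselCap N (α * p) (q / (q - p + 1)) K) :
    ∃ C' : ℝ≥0∞, C' ≠ ∞ ∧ ∀ K, IsCompact K → ω K ≤
      C' * besselCap N (α * p) (q / (q - p + 1)) K := by
  have hms := holderConjugate_exponents hp hq
  set m := q / (p - 1) with hmdef
  have hm := hms.pos
  have hm1 : 0 ≤ m - 1 := by linarith [hms.lt]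
  have hp1 : 0 < p - 1 := by linarith
  have hq0 : 0 < q := by linarith
  have hT : 0 < 2 * R := by positivity
  set r := 1 / (p - 1) with hrdef
  have hr : 0 < r := by positivity
  have hqr : r * q = m := by rw [hrdef, one_div_mul_eq_div]
  set c := 2 * ENNReal.ofReal (2 ^ (N - α * p)) ^ r with hc
  have hct : c ^ q * C ≠ ∞ := by finiteness
  obtain ⟨C₁, hC₁, h₁⟩ := exists_lintegral_iSup_ballDensity_rpow_le_of_density hβ hβN hT hms hct
  obtain ⟨C₂, hC₂, h₂⟩ := exists_lintegral_besselPot_rpow_le hβ hβN hT hms.lt.le x0 R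
  obtain ⟨C₃, hC₃, h₃⟩ := exists_measure_le_besselCap (N := N) (α * p) hms
    (show C₂ * (C₁ + ω univ ^ (m - 1)) ≠ ∞ by finiteness)
  refine ⟨C₃, hC₃, fun K hK => h₃ ω K hK.measurableSet ?_⟩
  have hle : ω.restrict K ≤ ω := Measure.restrict_le_self
  have hμs : ω.restrict K (ball x0 R)ᶜ = 0 := le_antisymm ((hle _).trans hsupp.le) zero_le
  have hμK : ω.restrict K univ = ω K := by simp
  refine (h₂ _ hμs).trans ?_
  rw [hμK, mul_assoc, add_mul]
  refine mul_le_mul_right (add_le_add ?_ ?_) _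
  · rw [← hμK]
    refine h₁ _ x0 R hμs fun n K' hK' => ?_
    calc ∫⁻ x in K', maxDensity (α * p) (2 * R) (ω.restrict K) n x ^ m
        ≤ ∫⁻ x in K', c ^ q * wolff α p (ENNReal.ofReal (4 * R)) ω x ^ q := by
          refine lintegral_mono fun x => ?_
          obtain ⟨k, -, hk⟩ := exists_partialSups_eq
            (fun k => ballDensity (α * p) (2 * R) (ω.restrict K) k x) n
          rw [maxDensity, hk, ← ENNReal.mul_rpow_of_nonneg _ _ hq0.le, ← hqr, ENNReal.rpow_mul]
          refine ENNReal.rpow_le_rpow ?_ hq0.le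
          refine le_trans ?_ (tsum_le_wolff hp hβN.le hT (by linarith) ω x)
          refine le_trans ?_ (ENNReal.le_tsum k)
          exact ENNReal.rpow_le_rpow (mul_le_mul_left (hle _) _) hr.le
      _ = c ^ q * ∫⁻ x in K', wolff α p (ENNReal.ofReal (4 * R)) ω x ^ q :=
          lintegral_const_mul' _ _ (by finiteness)
      _ ≤ _ := by
          rw [mul_assoc]
          exact mul_le_mul_right (h K' hK') _
  · rw [rpow_eq_mul_rpow_sub_one _ hms.lt.le, mul_comm]
    exact mul_le_mul_left (ENNReal.rpow_le_rpow (measure_mono (subset_univ _)) hm1) _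

end PotentialToMeasure

/-! ### The maximal function of a finite measure relative to another -/

section RelativeMaximal

variable {N : ℕ}

lemma exists_measure_le_of_forall_exists_ball (N : ℕ) : ∃ C : ℝ≥0∞, C ≠ ∞ ∧
    ∀ (ν : Measure (Euc N)) (E A : Set (Euc N)) (T : ℝ) (t : ℝ≥0∞), MeasurableSet E → t ≠ 0 →
      t ≠ ∞ → (∀ x ∈ A, ∃ ρ, 0 < ρ ∧ ρ ≤ T ∧ t * ν (ball x ρ) ≤ ν (ball x ρ ∩ E)) →
        ν A ≤ C * ν E / t := by
  obtain ⟨n, τ, hτ, hn⟩ := HasBesicovitchCovering.no_satelliteConfig (α := Euc N)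
  refine ⟨n, by simp, fun ν E A T t hE ht ht' h => ?_⟩
  choose! ρ hρ hρT hρν using h
  let P : Besicovitch.BallPackage A (Euc N) :=
    { c := fun x => x
      r := fun x => ρ x
      rpos := fun x => hρ x x.2
      r_bound := T
      r_le := fun x => hρT x x.2 }
  obtain ⟨s, hsd, hsc⟩ := Besicovitch.exist_disjoint_covering_families hτ hn P
  have hsd' (i : Fin n) : (s i).PairwiseDisjoint fun j => ball (j : Euc N) (ρ j) :=
    (hsd i).mono fun j => ball_subset_closedBall
  have hcount (i : Fin n) : (s i).Countable := (hsd' i).countable_of_isOpen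
    (fun j _ => isOpen_ball) fun j _ => nonempty_ball.2 (hρ j j.2)
  have hfam (i : Fin n) : ν (⋃ j ∈ s i, ball (j : Euc N) (ρ j)) ≤ ν E / t := by
    calc ν (⋃ j ∈ s i, ball (j : Euc N) (ρ j))
        ≤ ∑' j : s i, ν (ball (j : Euc N) (ρ j)) := measure_biUnion_le _ (hcount i) _
      _ ≤ ∑' j : s i, ν (ball (j : Euc N) (ρ j) ∩ E) / t := by
          refine ENNReal.tsum_le_tsum fun j => ?_
          rw [ENNReal.le_div_iff_mul_le (Or.inl ht) (Or.inl ht'), mul_comm]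
          exact hρν _ j.1.2
      _ = ν (⋃ j ∈ s i, ball (j : Euc N) (ρ j) ∩ E) / t := by
          rw [measure_biUnion (hcount i) ((hsd' i).mono fun j => inter_subset_left)
            fun j _ => measurableSet_ball.inter hE]
          simp only [div_eq_mul_inv, ENNReal.tsum_mul_right]
      _ ≤ ν E / t := by
          gcongr
          exact iUnion₂_subset fun j _ => inter_subset_right
  have hA : A ⊆ ⋃ i, ⋃ j ∈ s i, ball (j : Euc N) (ρ j) := fun x hx => hsc ⟨⟨x, hx⟩, rfl⟩
  calc ν A ≤ ν (⋃ i, ⋃ j ∈ s i, ball (j : Euc N) (ρ j)) := measure_mono hA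
    _ ≤ ∑' i, ν (⋃ j ∈ s i, ball (j : Euc N) (ρ j)) := measure_iUnion_le _
    _ ≤ ∑' _ : Fin n, ν E / t := ENNReal.tsum_le_tsum hfam
    _ = _ := by simp [mul_div_assoc]

/-- The dyadic maximal function of `ν` restricted to `E`, relative to `ν`. -/
def relMaximal (T : ℝ) (ν : Measure (Euc N)) (E : Set (Euc N)) (x : Euc N) : ℝ≥0∞ :=
  ⨆ k : ℕ, ν.restrict E (ball x (T / 2 ^ k)) / ν (ball x (T / 2 ^ k))

lemma measurable_measure_ball_const (μ : Measure (Euc N)) [SFinite μ] (ρ : ℝ) :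
    Measurable fun x => μ (ball x ρ) := by
  have hpair : Measurable fun x : Euc N => (x, ρ) := measurable_id.prodMk measurable_const
  have h := (measurable_measure_ball μ).comp hpair
  exact h

lemma measurable_relMaximal (T : ℝ) (ν : Measure (Euc N)) [SFinite ν] (E : Set (Euc N)) :
    Measurable (relMaximal T ν E) :=
  Measurable.iSup fun k => (measurable_measure_ball_const (ν.restrict E) (T / 2 ^ k)).div
    (measurable_measure_ball_const ν (T / 2 ^ k))

lemma relMaximal_le_one (T : ℝ) (ν : Measure (Euc N)) (E : Set (Euc N)) (x : Euc N) :
    relMaximal T ν E x ≤ 1 :=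
  iSup_le fun _ => ENNReal.div_le_of_le_mul (by
    rw [one_mul]; exact Measure.restrict_le_self _)

lemma restrict_ball_le_relMaximal_mul (T : ℝ) (ν : Measure (Euc N)) [IsFiniteMeasure ν]
    (E : Set (Euc N)) (x : Euc N) (k : ℕ) :
    ν.restrict E (ball x (T / 2 ^ k)) ≤ relMaximal T ν E x * ν (ball x (T / 2 ^ k)) := by
  by_cases h : ν (ball x (T / 2 ^ k)) = 0
  · have : ν.restrict E (ball x (T / 2 ^ k)) = 0 :=
      le_antisymm ((Measure.restrict_le_self _).trans h.le) zero_le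
    rw [this]
    exact zero_le
  · rw [← ENNReal.div_le_iff h (measure_ne_top _ _)]
    exact le_iSup (fun k : ℕ => ν.restrict E (ball x (T / 2 ^ k)) / ν (ball x (T / 2 ^ k))) k

lemma exists_lintegral_relMaximal_rpow_le (N : ℕ) {m : ℝ} (hm : 1 < m) :
    ∃ C : ℝ≥0∞, C ≠ ∞ ∧ ∀ (T : ℝ), 0 < T → ∀ (ν : Measure (Euc N)) [IsFiniteMeasure ν]
      (E : Set (Euc N)), MeasurableSet E → ∫⁻ x, relMaximal T ν E x ^ m ∂ν ≤ C * ν E := by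
  obtain ⟨C₁, hC₁, h₁⟩ := exists_measure_le_of_forall_exists_ball N
  obtain ⟨C₂, hC₂, h₂⟩ := lintegral_rpow_le_of_weak_one hm
  refine ⟨C₂ * C₁, by finiteness, fun T hT ν _ E hE => ?_⟩
  rw [mul_assoc]
  refine h₂ ν _ (measurable_relMaximal T ν E) (relMaximal_le_one T ν E) _ fun t ht ht' => ?_
  refine h₁ ν E _ T t hE ht ht' fun x hx => ?_
  obtain ⟨k, hk⟩ := lt_iSup_iff.1 (show t < relMaximal T ν E x from hx)
  refine ⟨T / 2 ^ k, by positivity, div_le_self hT.le (one_le_pow₀ one_le_two), ?_⟩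
  rw [← Measure.restrict_apply measurableSet_ball]
  exact ENNReal.mul_le_of_le_div hk.le

end RelativeMaximal

/-! ### Size of the Wolff potential of a compactly supported measure -/

section WolffSize

variable {N : ℕ} {α p R : ℝ}

lemma ballDensity_eq_zero_of_le_dist {β T : ℝ} {μ : Measure (Euc N)} {x0 x : Euc N} {L : ℝ}
    (hsupp : μ (ball x0 L)ᶜ = 0) {k : ℕ} (hx : L + T / 2 ^ k ≤ dist x x0) :
    ballDensity β T μ k x = 0 := by
  have : μ (ball x (T / 2 ^ k)) = 0 := by
    by_contra h
    exact (dist_lt_of_measure_ball_ne_zero hsupp h).not_ge hx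
  rw [ballDensity, this, zero_mul]

lemma wolff_eq_zero_of_le_dist (hβN : α * p ≤ N) (hp : 1 < p) {T L : ℝ} (hT : 0 < T)
    {μ : Measure (Euc N)} {x0 x : Euc N} (hsupp : μ (ball x0 L)ᶜ = 0) (hx : L + T ≤ dist x x0) :
    wolff α p (ENNReal.ofReal T) μ x = 0 := by
  have hr : 0 < 1 / (p - 1) := one_div_pos.2 (by linarith)
  refine le_antisymm ((wolff_le_tsum hp hβN hT μ x).trans (le_of_eq ?_)) zero_le
  have h0 (k : ℕ) : ballDensity (α * p) T μ k x ^ (1 / (p - 1)) = 0 := by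
    have hk : T / 2 ^ k ≤ T := div_le_self hT.le (one_le_pow₀ one_le_two)
    rw [ballDensity_eq_zero_of_le_dist hsupp (by linarith), ENNReal.zero_rpow_of_pos hr]
  simp only [h0, tsum_zero, mul_zero]

lemma exists_wolff_le_of_le_dist (hβN : α * p ≤ N) (hp : 1 < p) (hR : 0 < R) {x0 : Euc N}
    {ω : Measure (Euc N)} [IsFiniteMeasure ω] (hsupp : ω (ball x0 R)ᶜ = 0) :
    ∃ M : ℝ≥0∞, M ≠ ∞ ∧ ∀ x, 3 / 2 * R ≤ dist x x0 →
      wolff α p (ENNReal.ofReal (4 * R)) ω x ≤ M := by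
  have hr : 0 < 1 / (p - 1) := one_div_pos.2 (by linarith)
  refine ⟨ENNReal.ofReal (2 ^ (N - α * p)) ^ (1 / (p - 1)) *
    ∑ _k ∈ Finset.range 3, (ω univ * ENNReal.ofReal (R ^ (α * p - N))) ^ (1 / (p - 1)), ?_,
    fun x hx => ?_⟩
  · have : (ω univ * ENNReal.ofReal (R ^ (α * p - N))) ^ (1 / (p - 1)) ≠ ∞ := by finiteness
    refine ENNReal.mul_ne_top (by finiteness) (ENNReal.sum_ne_top.2 fun _ _ => this)
  refine (wolff_le_tsum hp hβN (show 0 < 4 * R by positivity) ω x).trans (mul_le_mul_right ?_ _)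
  rw [tsum_eq_sum (s := Finset.range 3)]
  · refine Finset.sum_le_sum fun k hk => ENNReal.rpow_le_rpow
      (ballDensity_le_measure_univ_mul hβN hR ?_ ω x) hr.le
    rw [le_div_iff₀ (by positivity)]
    have : (2 : ℝ) ^ k ≤ 2 ^ 2 :=
      pow_le_pow_right₀ one_le_two (Nat.lt_succ_iff.1 (Finset.mem_range.1 hk))
    nlinarith
  · intro k hk
    rw [Finset.mem_range, not_lt] at hk
    have h3 : (2 : ℝ) ^ 3 ≤ 2 ^ k := pow_le_pow_right₀ one_le_two hk
    have h4 : 4 * R / 2 ^ k ≤ R / 2 := by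
      rw [div_le_iff₀ (by positivity)]
      nlinarith
    rw [ballDensity_eq_zero_of_le_dist hsupp (by linarith), ENNReal.zero_rpow_of_pos hr]

lemma lintegral_ballDensity {β T : ℝ} (hT : 0 < T) (μ : Measure (Euc N)) [SFinite μ] (k : ℕ) :
    ∫⁻ x, ballDensity β T μ k x =
      ENNReal.ofReal ((T / 2 ^ k) ^ β) * volume (ball (0 : Euc N) 1) * μ univ := by
  have hTk : 0 < T / 2 ^ k := by positivity
  rw [lintegral_ballDensity_comm]
  simp only [ballDensity, volume_ball_eq _ hTk]
  rw [lintegral_const, mul_right_comm (ENNReal.ofReal ((T / 2 ^ k) ^ N)),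
    ← ENNReal.ofReal_mul (by positivity),
    ← Real.rpow_natCast _ N, ← Real.rpow_add hTk, add_sub_cancel]

lemma ae_wolff_lt_top (hβ : 0 < α * p) (hβN : α * p ≤ N) (hp : 1 < p) {T : ℝ} (hT : 0 < T)
    (μ : Measure (Euc N)) [IsFiniteMeasure μ] :
    ∀ᵐ x : Euc N, wolff α p (ENNReal.ofReal T) μ x < ∞ := by
  have hr : 0 < 1 / (p - 1) := one_div_pos.2 (by linarith)
  set β := α * p
  set θ := ENNReal.ofReal (2 ^ (-(β / 2))) with hθ
  have hθ1 : θ < 1 := by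
    rw [hθ, ← ENNReal.ofReal_one, ENNReal.ofReal_lt_ofReal_iff one_pos]
    exact Real.rpow_lt_one_of_one_lt_of_neg (by norm_num) (by linarith)
  have hθ0 : θ ≠ 0 := by
    have : (0 : ℝ) < 2 ^ (-(β / 2)) := by positivity
    simpa [hθ] using this
  have hθt : θ ≠ ∞ := hθ1.ne_top
  have hθβ : ENNReal.ofReal (2 ^ (-β)) = θ * θ := by
    rw [hθ, ← ENNReal.ofReal_mul (by positivity), ← Real.rpow_add (by norm_num)]
    ring_nf
  have hm (k : ℕ) : Measurable fun x => θ⁻¹ ^ k * ballDensity β T μ k x :=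
    (measurable_ballDensity β T μ k).const_mul _
  have hfin : ∫⁻ x, ∑' k, θ⁻¹ ^ k * ballDensity β T μ k x ≠ ∞ := by
    rw [lintegral_tsum fun k => (hm k).aemeasurable]
    have hterm (k : ℕ) : ∫⁻ x, θ⁻¹ ^ k * ballDensity β T μ k x =
        θ ^ k * (ENNReal.ofReal (T ^ β) * volume (ball (0 : Euc N) 1) * μ univ) := by
      have hc : θ⁻¹ ^ k * θ ^ k = 1 := by
        rw [← mul_pow, ENNReal.inv_mul_cancel hθ0 hθt, one_pow]
      rw [lintegral_const_mul _ (measurable_ballDensity β T μ k), lintegral_ballDensity hT,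
        ofReal_div_two_pow_rpow hT, hθβ, mul_pow]
      calc _ = (θ⁻¹ ^ k * θ ^ k) * (θ ^ k * (ENNReal.ofReal (T ^ β) *
            volume (ball (0 : Euc N) 1) * μ univ)) := by ring
        _ = _ := by rw [hc, one_mul]
    simp only [hterm]
    rw [ENNReal.tsum_mul_right, ENNReal.tsum_geometric]
    have hv : volume (ball (0 : Euc N) 1) ≠ ∞ := measure_ball_lt_top.ne
    have hinv : (1 - θ)⁻¹ ≠ ∞ := by simpa [tsub_eq_zero_iff_le] using hθ1
    finiteness
  filter_upwards [ae_lt_top (Measurable.tsum hm) hfin] with x hx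
  set M := ∑' k, θ⁻¹ ^ k * ballDensity β T μ k x
  refine (wolff_le_tsum hp hβN hT μ x).trans_lt (ENNReal.mul_lt_top (by finiteness) ?_)
  have hk (k : ℕ) : ballDensity β T μ k x ^ (1 / (p - 1)) ≤
      M ^ (1 / (p - 1)) * (θ ^ (1 / (p - 1))) ^ k := by
    rw [← pow_rpow_comm, ← ENNReal.mul_rpow_of_nonneg _ _ hr.le]
    refine ENNReal.rpow_le_rpow ?_ hr.le
    calc ballDensity β T μ k x = θ⁻¹ ^ k * ballDensity β T μ k x * θ ^ k := by
          rw [mul_right_comm, ← mul_pow, ENNReal.inv_mul_cancel hθ0 hθt, one_pow, one_mul]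
      _ ≤ M * θ ^ k := mul_le_mul_left
          (ENNReal.le_tsum (f := fun k => θ⁻¹ ^ k * ballDensity β T μ k x) k) _
  refine (ENNReal.tsum_le_tsum hk).trans_lt ?_
  rw [ENNReal.tsum_mul_left, ENNReal.tsum_geometric]
  have hinv : (1 - θ ^ (1 / (p - 1)))⁻¹ ≠ ∞ := by
    simpa [tsub_eq_zero_iff_le] using ENNReal.rpow_lt_one hθ1 hr
  have hM : M ^ (1 / (p - 1)) ≠ ∞ := ENNReal.rpow_ne_top_of_nonneg hr.le hx.ne
  exact ENNReal.mul_lt_top hM.lt_top hinv.lt_top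

end WolffSize

/-! ### From the pointwise inequality to the capacitary inequality -/

section Iteration

variable {N : ℕ} {α p q R : ℝ}

lemma besselCap_mono (β s : ℝ) {E F : Set (Euc N)} (h : E ⊆ F) :
    besselCap N β s E ≤ besselCap N β s F :=
  iInf_mono fun _ => iInf_mono fun _ => iInf_mono' fun hF => ⟨fun x hx => hF x (h hx), le_rfl⟩

lemma exists_volume_le_besselCap {β m s : ℝ} (hβ : 0 < β) (hβN : β < N)
    (hms : m.HolderConjugate s) : ∃ C : ℝ≥0∞, C ≠ ∞ ∧ ∀ E : Set (Euc N), MeasurableSet E →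
      volume E ≠ ∞ → volume E ≤ C * besselCap N β s E := by
  set g := ∫⁻ z : Euc N, ENNReal.ofReal (besselKernel N β z) with hgdef
  have hg : g ≠ ∞ := lintegral_besselKernel_ne_top hβ hβN
  have hm1 : 0 ≤ m - 1 := by linarith [hms.lt]
  have hgm : g ^ (m - 1) ≠ ∞ := ENNReal.rpow_ne_top_of_nonneg hm1 hg
  obtain ⟨C, hC, h⟩ := exists_measure_le_besselCap (N := N) β hms (C := g ^ (m - 1) * g)
    (by finiteness)
  refine ⟨C, hC, fun E hE hvE => ?_⟩
  have : IsFiniteMeasure (volume.restrict E) := ⟨by simpa using hvE.lt_top⟩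
  have hE' := h (volume.restrict E) E hE
  rw [Measure.restrict_restrict hE, inter_self, Measure.restrict_apply_self] at hE'
  refine hE' ?_
  have hle (x : Euc N) : besselPot β (volume.restrict E) x ≤ g :=
    (setLIntegral_le_lintegral _ _).trans (le_of_eq
      (lintegral_sub_left_eq_self (fun z => ENNReal.ofReal (besselKernel N β z)) x))
  calc ∫⁻ x, besselPot β (volume.restrict E) x ^ m
      ≤ ∫⁻ x, g ^ (m - 1) * besselPot β (volume.restrict E) x := by
        refine lintegral_mono fun x => ?_
        rw [rpow_eq_mul_rpow_sub_one _ hms.lt.le, mul_comm]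
        exact mul_le_mul_left (ENNReal.rpow_le_rpow (hle x) hm1) _
    _ = g ^ (m - 1) * g * volume E := by
        rw [lintegral_const_mul' _ _ hgm]
        unfold besselPot
        rw [lintegral_lintegral_sub_eq (measurable_besselKernel N β).ennreal_ofReal,
          Measure.restrict_apply_univ, mul_assoc]

lemma lintegral_wolff_rpow_ne_top (hβ : 0 < α * p) (hβN : α * p < N) (hp : 1 < p)
    (hq : 0 < q) (hR : 0 < R) {x0 : Euc N} {ω : Measure (Euc N)} [IsFiniteMeasure ω]
    (hsupp : ω (ball x0 R)ᶜ = 0) {C : ℝ≥0∞} (hC : C ≠ ∞)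
    (h : ∀ᵐ x ∂(volume.restrict (ball x0 (2 * R))), wolff α p (ENNReal.ofReal (4 * R))
      (volume.withDensity fun y => wolff α p (ENNReal.ofReal (4 * R)) ω y ^ q) x ≤
        C * wolff α p (ENNReal.ofReal (4 * R)) ω x) :
    ∫⁻ y, wolff α p (ENNReal.ofReal (4 * R)) ω y ^ q ≠ ∞ := by
  have hr : 0 < 1 / (p - 1) := one_div_pos.2 (by linarith)
  set W := wolff α p (ENNReal.ofReal (4 * R)) ω with hW
  have hWm : Measurable W := measurable_wolff α p _ ω
  set ν := volume.withDensity fun y => W y ^ q with hν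
  obtain ⟨x, hx, hxW, hxν⟩ : ∃ x ∈ ball x0 R, W x < ∞ ∧
      wolff α p (ENNReal.ofReal (4 * R)) ν x ≤ C * W x := by
    have hpos : volume (ball x0 R) ≠ 0 := (measure_ball_pos _ _ hR).ne'
    have : (ae (volume.restrict (ball x0 R))).NeBot := ae_restrict_neBot.2 hpos
    have hae : ∀ᵐ x ∂(volume.restrict (ball x0 R)), x ∈ ball x0 R ∧ W x < ∞ ∧
        wolff α p (ENNReal.ofReal (4 * R)) ν x ≤ C * W x := by
      filter_upwards [ae_restrict_mem measurableSet_ball,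
        ae_restrict_of_ae (ae_wolff_lt_top hβ hβN.le hp (show 0 < 4 * R by positivity) ω),
        ae_restrict_of_ae_restrict_of_subset (ball_subset_ball (by linarith)) h] with x h₁ h₂ h₃
      exact ⟨h₁, h₂, h₃⟩
    exact hae.exists
  have hball : ν (ball x (3 * R)) ≠ ∞ := by
    intro htop
    have hle := measure_ball_rpow_mul_le_wolff hp hβN.le (show 0 < 3 * R by positivity)
      (show 3 * R < 4 * R by linarith) le_rfl ν x
    have hc : ENNReal.ofReal ((4 * R) ^ (α * p - N)) ≠ 0 := by
      have : (0 : ℝ) < (4 * R) ^ (α * p - N) := by positivity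
      simpa using this
    have hd : ENNReal.ofReal ((4 * R - 3 * R) / (4 * R)) ≠ 0 := by
      have : 0 < (4 * R - 3 * R) / (4 * R) := div_pos (by linarith) (by positivity)
      simpa only [ne_eq, ENNReal.ofReal_eq_zero, not_le] using this
    rw [htop, ENNReal.top_mul hc, ENNReal.top_rpow_of_pos hr, ENNReal.top_mul hd, top_le_iff] at hle
    rw [hle, top_le_iff] at hxν
    exact ENNReal.mul_ne_top hC hxW.ne hxν
  obtain ⟨M, hM, hMW⟩ := exists_wolff_le_of_le_dist hβN.le hp hR hsupp
  have hpt (y : Euc N) : W y ^ q ≤ (ball x (3 * R)).indicator (fun y => W y ^ q) y +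
      (ball x0 (5 * R)).indicator (fun _ => M ^ q) y := by
    by_cases hy : y ∈ ball x (3 * R)
    · rw [indicator_of_mem hy]
      exact le_self_add
    have hy' : 2 * R ≤ dist y x0 := by
      rw [mem_ball, not_lt] at hy
      rw [mem_ball] at hx
      linarith [dist_triangle y x0 x, dist_comm x x0]
    by_cases hy5 : y ∈ ball x0 (5 * R)
    · rw [indicator_of_mem hy5]
      exact (ENNReal.rpow_le_rpow (hMW y (by linarith)) hq.le).trans le_add_self
    · rw [mem_ball, not_lt] at hy5
      rw [hW, wolff_eq_zero_of_le_dist hβN.le hp (by positivity) hsupp (by linarith),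
        ENNReal.zero_rpow_of_pos hq]
      exact zero_le
  have hv : volume (ball x0 (5 * R)) ≠ ∞ := measure_ball_lt_top.ne
  have hMq : M ^ q ≠ ∞ := ENNReal.rpow_ne_top_of_nonneg hq.le hM
  refine ne_top_of_le_ne_top ?_ (lintegral_mono hpt)
  rw [lintegral_add_left ((hWm.pow_const q).indicator measurableSet_ball),
    lintegral_indicator measurableSet_ball, lintegral_indicator_const measurableSet_ball]
  rw [hν, withDensity_apply _ measurableSet_ball] at hball
  finiteness

lemma exists_withDensity_le_besselCap (hβ : 0 < α * p) (hβN : α * p < N) (hp : 1 < p)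
    (hq : p - 1 < q) (hR : 0 < R) {x0 : Euc N} {ω : Measure (Euc N)} [IsFiniteMeasure ω]
    (hsupp : ω (ball x0 R)ᶜ = 0) {C : ℝ≥0∞} (hC : C ≠ ∞)
    (h : ∀ᵐ x ∂(volume.restrict (ball x0 (2 * R))), wolff α p (ENNReal.ofReal (4 * R))
      (volume.withDensity fun y => wolff α p (ENNReal.ofReal (4 * R)) ω y ^ q) x ≤
        C * wolff α p (ENNReal.ofReal (4 * R)) ω x) :
    ∃ C' : ℝ≥0∞, C' ≠ ∞ ∧ ∀ E ⊆ ball x0 (3 / 2 * R), MeasurableSet E →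
      ∫⁻ y in E, wolff α p (ENNReal.ofReal (4 * R)) ω y ^ q ≤
        C' * besselCap N (α * p) (q / (q - p + 1)) E := by
  have hfin := lintegral_wolff_rpow_ne_top hβ hβN hp (by linarith) hR hsupp hC h
  have hms := holderConjugate_exponents hp hq
  set m := q / (p - 1) with hmdef
  have hp1 : 0 < p - 1 := by linarith
  have hm := hms.pos
  have hm1 : 0 ≤ m - 1 := by linarith [hms.lt]
  set r := 1 / (p - 1) with hrdef
  have hr : 0 < r := by positivity
  have hrq : r * q = m := by rw [hrdef, hmdef]; ring
  have hq0 : 0 < q := by linarith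
  set W := wolff α p (ENNReal.ofReal (4 * R)) ω with hW
  have hWm : Measurable fun y => W y ^ q := (measurable_wolff α p _ ω).pow_const q
  set ν := volume.withDensity fun y => W y ^ q with hν
  have hνfin : IsFiniteMeasure ν := isFiniteMeasure_withDensity hfin
  set c : ℝ≥0∞ := 2 * ENNReal.ofReal (2 ^ ((N : ℝ) - α * p)) ^ r with hc
  have hct : c ≠ ∞ := by finiteness
  set A := (c * C) ^ q with hA
  have hAt : A ≠ ∞ := ENNReal.rpow_ne_top_of_nonneg hq0.le (by finiteness)
  obtain ⟨C₁, hC₁, h₁⟩ := exists_lintegral_relMaximal_rpow_le N hms.lt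
  obtain ⟨C₂, hC₂, h₂⟩ := exists_lintegral_besselPot_rpow_le hβ hβN
    (show 0 < R / 2 by positivity) hms.lt.le x0 (3 / 2 * R)
  have hνm : ν univ ^ (m - 1) ≠ ∞ := ENNReal.rpow_ne_top_of_nonneg hm1 (measure_ne_top _ _)
  obtain ⟨C₃, hC₃, h₃⟩ := exists_measure_le_besselCap (N := N) (α * p) hms
    (C := C₂ * (A * C₁ + ν univ ^ (m - 1))) (by finiteness)
  refine ⟨C₃, hC₃, fun E hEsub hE => ?_⟩
  rw [← withDensity_apply _ hE]
  refine h₃ ν E hE ?_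
  have hEsupp : ν.restrict E (ball x0 (3 / 2 * R))ᶜ = 0 := by
    rw [Measure.restrict_apply measurableSet_ball.compl]
    convert measure_empty (μ := ν)
    exact disjoint_iff_inter_eq_empty.1 (disjoint_compl_left_iff_subset.2 hEsub)
  have hmax : ∀ᵐ x : Euc N, (⨆ k, ballDensity (α * p) (R / 2) (ν.restrict E) k x) ^ m ≤
      A * (W x ^ q * relMaximal (R / 2) ν E x ^ m) := by
    filter_upwards [(ae_restrict_iff' measurableSet_ball).1 h] with x hx
    by_cases hx2 : x ∈ ball x0 (2 * R)
    · have hx' := hx hx2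
      have hk (k : ℕ) : ballDensity (α * p) (R / 2) (ν.restrict E) k x ≤
          (c * C * W x) ^ (p - 1) * relMaximal (R / 2) ν E x := by
        have hk₁ : ballDensity (α * p) (R / 2) (ν.restrict E) k x ≤
            relMaximal (R / 2) ν E x * ballDensity (α * p) (R / 2) ν k x := by
          unfold ballDensity
          rw [← mul_assoc]
          exact mul_le_mul_left (restrict_ball_le_relMaximal_mul _ _ _ _ _) _
        have hk₂ : ballDensity (α * p) (R / 2) ν k x ^ r ≤ c * C * W x := by
          calc ballDensity (α * p) (R / 2) ν k x ^ r
              ≤ ∑' k, ballDensity (α * p) (R / 2) ν k x ^ r :=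
                ENNReal.le_tsum (f := fun k => ballDensity (α * p) (R / 2) ν k x ^ r) k
            _ ≤ c * wolff α p (ENNReal.ofReal (4 * R)) ν x :=
                tsum_le_wolff hp hβN.le (by positivity) (by linarith) ν x
            _ ≤ c * (C * W x) := mul_le_mul_right hx' _
            _ = _ := (mul_assoc _ _ _).symm
        rw [mul_comm ((c * C * W x) ^ (p - 1))]
        refine hk₁.trans (mul_le_mul_right ?_ _)
        have := ENNReal.rpow_le_rpow hk₂ hp1.le
        rwa [← ENNReal.rpow_mul, hrdef, one_div_mul_cancel hp1.ne', ENNReal.rpow_one] at this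
      calc (⨆ k, ballDensity (α * p) (R / 2) (ν.restrict E) k x) ^ m
          ≤ ((c * C * W x) ^ (p - 1) * relMaximal (R / 2) ν E x) ^ m :=
            ENNReal.rpow_le_rpow (iSup_le hk) hm.le
        _ = A * (W x ^ q * relMaximal (R / 2) ν E x ^ m) := by
            rw [ENNReal.mul_rpow_of_nonneg _ _ hm.le, ← ENNReal.rpow_mul, hmdef,
              mul_div_cancel₀ _ hp1.ne', ENNReal.mul_rpow_of_nonneg _ _ hq0.le, mul_assoc]
    · rw [mem_ball, not_lt] at hx2
      have h0 (k : ℕ) : ballDensity (α * p) (R / 2) (ν.restrict E) k x = 0 := by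
        have hk : R / 2 / 2 ^ k ≤ R / 2 := div_le_self (by positivity) (one_le_pow₀ one_le_two)
        exact ballDensity_eq_zero_of_le_dist hEsupp (by linarith)
      simp only [h0, ciSup_const, ENNReal.zero_rpow_of_pos hm]
      exact zero_le
  have hInt : ∫⁻ x, (⨆ k, ballDensity (α * p) (R / 2) (ν.restrict E) k x) ^ m ≤
      A * C₁ * ν E := by
    refine (lintegral_mono_ae hmax).trans ?_
    rw [lintegral_const_mul' _ _ hAt, mul_assoc]
    refine mul_le_mul_right (le_of_eq_of_le ?_ (h₁ (R / 2) (by positivity) ν E hE)) _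
    exact (lintegral_withDensity_eq_lintegral_mul volume hWm
      ((measurable_relMaximal (R / 2) ν E).pow_const m)).symm
  refine (h₂ (ν.restrict E) hEsupp).trans ?_
  rw [mul_assoc, Measure.restrict_apply_univ, add_mul]
  refine mul_le_mul_right (add_le_add hInt ?_) _
  rw [rpow_eq_mul_rpow_sub_one _ hms.lt.le, mul_comm]
  exact mul_le_mul_left (ENNReal.rpow_le_rpow (measure_mono (subset_univ _)) hm1) _

lemma exists_setLIntegral_wolff_rpow_le_besselCap (hβ : 0 < α * p) (hβN : α * p < N) (hp : 1 < p)
    (hq : p - 1 < q) (hR : 0 < R) {x0 : Euc N} {ω : Measure (Euc N)} [IsFiniteMeasure ω]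
    (hsupp : ω (ball x0 R)ᶜ = 0) {C : ℝ≥0∞} (hC : C ≠ ∞)
    (h : ∀ᵐ x ∂(volume.restrict (ball x0 (2 * R))), wolff α p (ENNReal.ofReal (4 * R))
      (volume.withDensity fun y => wolff α p (ENNReal.ofReal (4 * R)) ω y ^ q) x ≤
        C * wolff α p (ENNReal.ofReal (4 * R)) ω x) :
    ∃ C' : ℝ≥0∞, C' ≠ ∞ ∧ ∀ K, IsCompact K →
      ∫⁻ y in K, wolff α p (ENNReal.ofReal (4 * R)) ω y ^ q ≤
        C' * besselCap N (α * p) (q / (q - p + 1)) K := by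
  have hq0 : 0 < q := by linarith
  obtain ⟨C₁, hC₁, h₁⟩ := exists_withDensity_le_besselCap hβ hβN hp hq hR hsupp hC h
  obtain ⟨C₂, hC₂, h₂⟩ := exists_volume_le_besselCap hβ hβN (holderConjugate_exponents hp hq)
  obtain ⟨M, hM, hMW⟩ := exists_wolff_le_of_le_dist hβN.le hp hR hsupp
  have hMq : M ^ q ≠ ∞ := ENNReal.rpow_ne_top_of_nonneg hq0.le hM
  refine ⟨C₁ + M ^ q * C₂, by finiteness, fun K hK => ?_⟩
  have hKm := hK.measurableSet
  rw [← lintegral_inter_add_sdiff _ _ (measurableSet_ball (x := x0) (ε := 3 / 2 * R)), add_mul]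
  refine add_le_add ?_ ?_
  · exact (h₁ _ inter_subset_right (hKm.inter measurableSet_ball)).trans
      (mul_le_mul_right (besselCap_mono _ _ inter_subset_left) _)
  · calc ∫⁻ y in K \ ball x0 (3 / 2 * R), wolff α p (ENNReal.ofReal (4 * R)) ω y ^ q
        ≤ ∫⁻ _ in K \ ball x0 (3 / 2 * R), M ^ q :=
          setLIntegral_mono measurable_const fun y hy =>
            ENNReal.rpow_le_rpow (hMW y (by simpa using hy.2)) hq0.le
      _ ≤ M ^ q * volume K := by
          rw [setLIntegral_const]
          exact mul_le_mul_right (measure_mono sdiff_subset) _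
      _ ≤ M ^ q * C₂ * besselCap N (α * p) (q / (q - p + 1)) K := by
          rw [mul_assoc]
          exact mul_le_mul_right (h₂ K hKm hK.measure_lt_top.ne) _

end Iteration

end WolffPotential

/-- (Truncated Wolff potential / Bessel capacity equivalences for a
bounded measure supported in a ball.) -/
theorem stmt4 (N : ℕ) (α p q R : ℝ) (hα : 0 < α) (hp : 1 < p) (hpN : p < (N : ℝ) / α)
    (hq : p - 1 < q) (hR : 0 < R) (x0 : Euc N)
    (ω : Measure (Euc N)) [IsFiniteMeasure ω] (hsupp : ω (ball x0 R)ᶜ = 0) :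
    List.TFAE [
      -- (a)
      (∃ C1 > 0, ∀ K : Set (Euc N), IsCompact K →
        ω K ≤ ENNReal.ofReal C1 * besselCap N (α * p) (q / (q - p + 1)) K),
      -- (b)
      (∃ C2 > 0, ∀ K : Set (Euc N), IsCompact K →
        (∫⁻ y in K, (wolff α p (ENNReal.ofReal (4 * R)) ω y) ^ q) ≤
          ENNReal.ofReal C2 * besselCap N (α * p) (q / (q - p + 1)) K),
      -- (c)
      (∃ C3 > 0, ∀ (x : Euc N) (t : ℝ), 0 < t →
        (∫⁻ y, (wolff α p (ENNReal.ofReal (4 * R)) (ω.restrict (ball x t)) y) ^ q) ≤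
          ENNReal.ofReal C3 * ω (ball x t)),
      -- (d)
      (∃ C4 > 0, ∀ᵐ x ∂(volume.restrict (ball x0 (2 * R))),
        wolff α p (ENNReal.ofReal (4 * R))
            (volume.withDensity fun y => (wolff α p (ENNReal.ofReal (4 * R)) ω y) ^ q) x ≤
          ENNReal.ofReal C4 * wolff α p (ENNReal.ofReal (4 * R)) ω x) ] := by
  have hβN : α * p < N := by
    rw [lt_div_iff₀ hα] at hpN
    linarith
  have hβ : 0 < α * p := mul_pos hα (by linarith)
  have hreal {C : ℝ≥0∞} (hC : C ≠ ∞) : C ≤ ENNReal.ofReal (C.toReal + 1) := by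
    rw [← ENNReal.ofReal_toReal hC, ENNReal.toReal_ofReal ENNReal.toReal_nonneg]
    exact ENNReal.ofReal_le_ofReal (by linarith)
  have hpos (C : ℝ≥0∞) : 0 < C.toReal + 1 := by positivity
  tfae_have 1 → 3 := by
    rintro ⟨C, -, h⟩
    obtain ⟨C', hC', h'⟩ := WolffPotential.exists_lintegral_wolff_rpow_le_of_le_besselCap hβ hβN
      hp hq (show 0 < 4 * R by positivity) hsupp ENNReal.ofReal_ne_top h
    exact ⟨_, hpos C', fun x t _ => (h' _).trans (mul_le_mul_left (hreal hC') _)⟩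
  tfae_have 3 → 4 := by
    rintro ⟨C, -, h⟩
    obtain ⟨C', hC', h'⟩ := WolffPotential.exists_wolff_wolff_le_of_testing hβ hβN hp hq hR hsupp
      ENNReal.ofReal_ne_top h
    exact ⟨_, hpos C', ae_restrict_of_forall_mem measurableSet_ball fun x hx =>
      (h' x hx).trans (mul_le_mul_left (hreal hC') _)⟩
  tfae_have 4 → 2 := by
    rintro ⟨C, -, h⟩
    obtain ⟨C', hC', h'⟩ := WolffPotential.exists_setLIntegral_wolff_rpow_le_besselCap hβ hβN
      hp hq hR hsupp ENNReal.ofReal_ne_top h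
    exact ⟨_, hpos C', fun K hK => (h' K hK).trans (mul_le_mul_left (hreal hC') _)⟩
  tfae_have 2 → 1 := by
    rintro ⟨C, -, h⟩
    obtain ⟨C', hC', h'⟩ := WolffPotential.exists_measure_le_besselCap_of_wolff hβ hβN hp hq hR
      hsupp ENNReal.ofReal_ne_top h
    exact ⟨_, hpos C', fun K hK => (h' K hK).trans (mul_le_mul_left (hreal hC') _)⟩
  tfae_finish
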